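/- arXiv:2310.15121 — 9 statements merged into one kernel-verified Lean document; each statement's English description precedes it below -/
import Mathlib

section
/- The subgroup of rational points is dense in the real symplectic group: for every k ≥ 1, the set of elements of Sp(2k,ℝ) all of whose matrix entries are rational (i.e., lie in the range of the coercion ℚ → ℝ) is a dense subset of Sp(2k,ℝ). -/
namespace SpDense
open Matrix

theorem exists_symm_X {l R : Type*} [DecidableEq l] [Fintype l] [Field R]
    {A C : Matrix l l R} (hker : ∀ (x : l → R), (A • x = 0) → (C • x = 0) → x = 0)
    (hsymm : Aᵀ * C = Cᵀ * A) :
    ∃ (X : Matrix l l R), X.IsSymm ∧ IsUnit (A + X * C) := by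
  -- `C` is transformed into `P = fromBlocks 1 0 0 0` by invertible matrices `V` and `U`.
  rcases exists_rank_normal_form C with ⟨V, U, s, hV, hU, heq⟩
  set P := V * C * U with P_def; set Q := Vᵀ⁻¹ * A * U with Q_def
  set f := fun (x : Matrix l l R) ↦ x.submatrix s.symm s.symm
  have hf (x) : f x = x.submatrix s.symm s.symm := rfl
  have f_unit {x} : IsUnit x → IsUnit (f x) := (isUnit_submatrix_equiv ..).2
  have f_mul (x y) : f (x * y) = f x * f y := submatrix_mul _ _ _ _ _ s.symm.bijective
  have _ : Invertible V := hV.invertible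
  have _ : Invertible U := hU.invertible
  have _ : Invertible (f Vᵀ) := (f_unit (V.isUnit_transpose.2 hV)).invertible
  -- The hypothesis that the only vector annihilated by both matrices is 0, holds for `P` and `Q`.
  have con1 (x : Fin C.rank ⊕ Fin (Fintype.card l - C.rank) → R)
      (heq1 : (f Q) • x = 0) (heq2 : (f P) • x = 0) : x = 0 := by
    refine (f_unit hU).smul_left_cancel.1 ?_
    rw [f_mul, f_mul, mul_assoc, mul_smul, IsUnit.smul_eq_zero, mul_smul, hf,
      smul_eq_mulVec, submatrix_mulVec_equiv, Equiv.symm_symm] at heq1 heq2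
    · rw [Equiv.comp_symm_eq, Pi.zero_comp] at heq1 heq2
      exact s.surjective.injective_comp_right <| by simpa using hker _ heq1 heq2
    · exact f_unit hV
    · exact f_unit <| isUnit_nonsing_inv_iff.2 <| V.isUnit_transpose.2 hV
  -- The symmetry relation also holds for `P` and `Q`.
  have con2 : Qᵀ * P = Pᵀ * Q := by
    simp only [P_def, mul_assoc, transpose_mul, transpose_nonsing_inv, transpose_transpose, Q_def,
      inv_mul_cancel_left_of_invertible, mul_inv_cancel_left_of_invertible]
    rw [← mul_assoc Aᵀ, hsymm, mul_assoc]
  replace con2 : (f Q).toBlocks₁₁ᵀ = (f Q).toBlocks₁₁ ∧ (f Q).toBlocks₁₂ = 0 := by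
    apply_fun reindex s s at con2
    rw [reindex_apply, reindex_apply, ← hf, ← hf, f_mul, f_mul Pᵀ, heq, hf,
      ← transpose_submatrix, ← hf Q, ← (f Q).fromBlocks_toBlocks, hf (_)ᵀ, hf
      ((fromBlocks 1 0 0 0).submatrix _ _)] at con2
    simp [fromBlocks_transpose, fromBlocks_multiply] at con2; tauto
  -- The lower-right block of `Q` is invertible.
  have con3 : IsUnit (f Q).toBlocks₂₂ := by
    refine mulVec_injective_iff_isUnit.1 ?_
    rw [← coe_mulVecLin, ← LinearMap.ker_eq_bot]
    refine ker_mulVecLin_eq_bot_iff.2 fun x hx ↦ Sum.elim_injective' <|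
      (con1 _ ?_ ?_).trans Sum.elim_zero_zero.symm
    · rw [← (f Q).fromBlocks_toBlocks]; simp [hx, con2.2, fromBlocks_mulVec]
    · simp [hf, heq, fromBlocks_mulVec]
  set Y : Matrix (Fin C.rank ⊕ Fin (Fintype.card l - C.rank)) (Fin C.rank ⊕
    Fin (Fintype.card l - C.rank)) R := fromBlocks (1 - (f Q).toBlocks₁₁) 0 0 0 with Y_def
  have hY_symm : Y.IsSymm := by
    rw [Y_def, isSymm_fromBlocks_iff]
    exact ⟨IsSymm.sub isSymm_one con2.1, by simp⟩
  -- We now take `X = Vᵀ * Y * V` and this gives the desired matrix `X.submatrix s s`.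
  set X := (f Vᵀ) * Y * (f V) with X_def
  refine ⟨X.submatrix s s, IsSymm.submatrix ?_ s, (isUnit_submatrix_equiv s.symm s.symm).1 ?_⟩
  · simp_rw [X_def, Matrix.IsSymm, transpose_mul, hY_symm.eq, hf, transpose_submatrix,
      transpose_transpose, mul_assoc]
  · have heq' : f (A + X.submatrix s s * C) = (f Vᵀ) * (f Q + Y * (f P)) * f (U⁻¹) := by
      simp_rw [hf, submatrix_add, Pi.add_apply, Q_def, P_def, ← hf, f_mul, hf, mul_add, ← mul_assoc,
        ← inv_submatrix_equiv, add_mul, mul_assoc _ (U.submatrix _ _), mul_inv_of_invertible]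
      simp [X_def]; rfl
    rw [← hf, heq', IsUnit.mul_iff, IsUnit.mul_iff]
    refine ⟨⟨isUnit_of_invertible _, ?_⟩, ?_⟩
    · nth_rw 1 [Y_def, heq, ← (f Q).fromBlocks_toBlocks, con2.2]
      simpa [hf, fromBlocks_multiply, fromBlocks_add]
    · exact f_unit <| isUnit_nonsing_inv_iff.2 hU


variable {k : ℕ}

/-- Matrices in the symplectic group over the rationals, seen as real matrices. -/
noncomputable def ratSp (k : ℕ) : Submonoid (Matrix (Fin k ⊕ Fin k) (Fin k ⊕ Fin k) ℝ) :=
  (symplecticGroup (Fin k) ℚ).map (algebraMap ℚ ℝ).mapMatrix.toMonoidHom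

theorem dense_mat : DenseRange (fun A : Matrix (Fin k) (Fin k) ℚ => A.map (algebraMap ℚ ℝ)) := by
  have h : DenseRange (algebraMap ℚ ℝ) := Rat.denseRange_cast
  exact DenseRange.piMap (fun _ : Fin k => DenseRange.piMap (fun _ : Fin k => h))

theorem mem_ratSp {N : Matrix (Fin k ⊕ Fin k) (Fin k ⊕ Fin k) ℚ}
    (h : N ∈ symplecticGroup (Fin k) ℚ) : N.map (algebraMap ℚ ℝ) ∈ ratSp k :=
  ⟨N, h, rfl⟩

theorem exists_half {X : Matrix (Fin k) (Fin k) ℝ} (hX : X.IsSymm) : ∃ Y, X = Y + Yᵀ := by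
  refine ⟨(1 / 2 : ℝ) • X, ?_⟩
  rw [transpose_smul, hX.eq, ← add_smul]
  norm_num

theorem upper_mem {X : Matrix (Fin k) (Fin k) ℝ} (hX : X.IsSymm) :
    fromBlocks 1 X 0 1 ∈ (ratSp k).topologicalClosure := by
  obtain ⟨Y, rfl⟩ := exists_half hX
  let G : Matrix (Fin k) (Fin k) ℝ → Matrix (Fin k ⊕ Fin k) (Fin k ⊕ Fin k) ℝ :=
    fun Y => fromBlocks 1 (Y + Yᵀ) 0 1
  have hG : Continuous G := by fun_prop
  refine ContinuousWithinAt.mem_closure (f := G) hG.continuousWithinAt (dense_mat Y) ?_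
  rintro _ ⟨Z, rfl⟩
  have h := mem_ratSp (k := k) (N := fromBlocks 1 (Z + Zᵀ) 0 1)
    (by rw [SymplecticGroup.fromBlocks_mem_iff]; simp [add_comm])
  convert h using 1
  simp [G, fromBlocks_map, transpose_map, Matrix.map_add]

theorem lower_mem {X : Matrix (Fin k) (Fin k) ℝ} (hX : X.IsSymm) :
    fromBlocks 1 0 X 1 ∈ (ratSp k).topologicalClosure := by
  obtain ⟨Y, rfl⟩ := exists_half hX
  let G : Matrix (Fin k) (Fin k) ℝ → Matrix (Fin k ⊕ Fin k) (Fin k ⊕ Fin k) ℝ :=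
    fun Y => fromBlocks 1 0 (Y + Yᵀ) 1
  have hG : Continuous G := by fun_prop
  refine ContinuousWithinAt.mem_closure (f := G) hG.continuousWithinAt (dense_mat Y) ?_
  rintro _ ⟨Z, rfl⟩
  have h := mem_ratSp (k := k) (N := fromBlocks 1 0 (Z + Zᵀ) 1)
    (by rw [SymplecticGroup.fromBlocks_mem_iff]; simp [add_comm])
  convert h using 1
  simp [G, fromBlocks_map, transpose_map, Matrix.map_add]

theorem diag_mem {A : Matrix (Fin k) (Fin k) ℝ} (hA : A.det ≠ 0) :
    fromBlocks A 0 0 (A⁻¹)ᵀ ∈ (ratSp k).topologicalClosure := by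
  let G : Matrix (Fin k) (Fin k) ℝ → Matrix (Fin k ⊕ Fin k) (Fin k ⊕ Fin k) ℝ :=
    fun A => fromBlocks A 0 0 (A.det⁻¹ • A.adjugate)ᵀ
  have hG : ContinuousAt G A := by
    have h1 : ContinuousAt (fun A : Matrix (Fin k) (Fin k) ℝ => A.det⁻¹ • A.adjugate) A :=
      ((Continuous.matrix_det continuous_id).continuousAt.inv₀ hA).smul
        (Continuous.matrix_adjugate continuous_id).continuousAt
    have h2 : Continuous (fun p : Matrix (Fin k) (Fin k) ℝ × Matrix (Fin k) (Fin k) ℝ =>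
      fromBlocks p.1 0 0 p.2ᵀ) := by fun_prop
    exact h2.continuousAt.comp (continuousAt_id.prodMk h1)
  have hop : IsOpen {B : Matrix (Fin k) (Fin k) ℝ | B.det ≠ 0} :=
    isOpen_ne_fun (Continuous.matrix_det continuous_id) continuous_const
  have hcl := hop.inter_closure ⟨hA, dense_mat A⟩
  have key := ContinuousWithinAt.mem_closure (f := G) (t := (ratSp k : Set _))
    hG.continuousWithinAt hcl ?_
  · have : G A = fromBlocks A 0 0 (A⁻¹)ᵀ := by simp [G, Matrix.inv_def]
    rw [← this]; exact key
  rintro _ ⟨hdet, Z, rfl⟩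
  have hd : (Z.map (algebraMap ℚ ℝ)).det = algebraMap ℚ ℝ Z.det :=
    ((algebraMap ℚ ℝ).map_det Z).symm
  have hZ : Z.det ≠ 0 := by
    intro h0
    apply hdet
    simp only [hd, h0, map_zero]
  have h := mem_ratSp (k := k) (N := fromBlocks Z 0 0 (Z.det⁻¹ • Z.adjugate)ᵀ)
    (by
      rw [SymplecticGroup.fromBlocks_mem_iff]
      refine ⟨by simp, by simp, ?_⟩
      rw [← transpose_mul, smul_mul, adjugate_mul, smul_smul, inv_mul_cancel₀ hZ]
      simp)
  have ha : (Z.map (algebraMap ℚ ℝ)).adjugate = Z.adjugate.map (algebraMap ℚ ℝ) :=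
    ((algebraMap ℚ ℝ).map_adjugate Z).symm
  have he : G (Z.map (algebraMap ℚ ℝ))
      = (fromBlocks Z 0 0 (Z.det⁻¹ • Z.adjugate)ᵀ).map (algebraMap ℚ ℝ) := by
    have hb : ((algebraMap ℚ ℝ Z.det)⁻¹ • Z.adjugate.map (algebraMap ℚ ℝ))ᵀ
        = ((Z.det⁻¹ • Z.adjugate)ᵀ).map (algebraMap ℚ ℝ) := by
      ext i j; simp
    simp only [G, fromBlocks_map, hd, ha, hb]
    simp
  rw [← he] at h
  exact h

theorem mem_closure_of_symplectic {M : Matrix (Fin k ⊕ Fin k) (Fin k ⊕ Fin k) ℝ}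
    (hM : M ∈ symplecticGroup (Fin k) ℝ) : M ∈ (ratSp k).topologicalClosure := by
  obtain ⟨A, B, C, D, rfl⟩ : ∃ A B C D, M = fromBlocks A B C D :=
    ⟨_, _, _, _, M.fromBlocks_toBlocks.symm⟩
  have hunit : IsUnit (fromBlocks A B C D) :=
    (isUnit_iff_isUnit_det _).2 (SymplecticGroup.symplectic_det hM)
  obtain ⟨X, hX, hXu⟩ := exists_symm_X (A := A) (C := C) (fun x hx1 hx2 => by
    have hv0 : fromBlocks A B C D *ᵥ (Sum.elim x 0) = fromBlocks A B C D *ᵥ (Sum.elim 0 0) := by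
      rw [smul_eq_mulVec] at hx1 hx2
      simp [fromBlocks_mulVec, hx1, hx2]
    exact (Sum.elim_eq_iff.1 (mulVec_injective_iff_isUnit.2 hunit hv0)).1)
    (SymplecticGroup.fromBlocks_mem_iff.1 hM).1
  have hUX : fromBlocks 1 X 0 1 ∈ symplecticGroup (Fin k) ℝ := by
    rw [SymplecticGroup.fromBlocks_mem_iff]; simp [hX.eq]
  have hM' := mul_mem hUX hM
  have hmul : fromBlocks 1 X 0 1 * fromBlocks A B C D
      = fromBlocks (A + X * C) (B + X * D) C D := by
    simp [fromBlocks_multiply]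
  have hback : fromBlocks A B C D
      = fromBlocks 1 (-X) 0 1 * fromBlocks (A + X * C) (B + X * D) C D := by
    simp [fromBlocks_multiply]
  rw [hmul] at hM'
  rw [hback]
  refine mul_mem (upper_mem hX.neg) ?_
  generalize A + X * C = P at *
  generalize B + X * D = Q at *
  have hdet : IsUnit P.det := (isUnit_iff_isUnit_det _).1 hXu
  have hdT : IsUnit Pᵀ.det := by rwa [det_transpose]
  obtain ⟨h1, -, h3⟩ := SymplecticGroup.fromBlocks_mem_iff.1 hM'
  have h4 : P * Qᵀ = Q * Pᵀ := by
    have h5 := SymplecticGroup.transpose_mem hM'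
    rw [fromBlocks_transpose] at h5
    simpa using (SymplecticGroup.fromBlocks_mem_iff.1 h5).1
  have hS : (C * P⁻¹).IsSymm := by
    have : C * P⁻¹ = (P⁻¹)ᵀ * (Pᵀ * C) * P⁻¹ := by
      rw [transpose_nonsing_inv, ← mul_assoc, nonsing_inv_mul _ hdT, one_mul]
    rw [Matrix.IsSymm]
    conv_rhs => rw [this, h1, mul_assoc, mul_assoc, mul_nonsing_inv _ hdet, mul_one]
    rw [transpose_mul]
  have hT : (P⁻¹ * Q).IsSymm := by
    rw [Matrix.IsSymm, transpose_mul, transpose_nonsing_inv]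
    have : Qᵀ = P⁻¹ * Q * Pᵀ := by
      rw [mul_assoc, ← h4, ← mul_assoc, nonsing_inv_mul _ hdet, one_mul]
    rw [this, mul_assoc, mul_nonsing_inv _ hdT, mul_one]
  have hfac : fromBlocks P Q C D = fromBlocks 1 0 (C * P⁻¹) 1 * fromBlocks P 0 0 (P⁻¹)ᵀ
      * fromBlocks 1 (P⁻¹ * Q) 0 1 := by
    have e1 : C * P⁻¹ * P = C := by rw [mul_assoc, nonsing_inv_mul _ hdet, mul_one]
    have e2 : P * (P⁻¹ * Q) = Q := by rw [← mul_assoc, mul_nonsing_inv _ hdet, one_mul]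
    have e3 : D = C * (P⁻¹ * Q) + (P⁻¹)ᵀ := by
      have e4 : C * P⁻¹ = (P⁻¹)ᵀ * Cᵀ := by rw [← transpose_mul, hS.eq]
      have e5 : D = (P⁻¹)ᵀ * (Pᵀ * D) := by
        rw [transpose_nonsing_inv, ← mul_assoc, nonsing_inv_mul _ hdT, one_mul]
      rw [← mul_assoc, e4, e5, sub_eq_iff_eq_add.1 h3, mul_add, mul_one, mul_assoc, add_comm]
    simp only [fromBlocks_multiply, one_mul, mul_one, zero_mul, mul_zero, add_zero, zero_add,
      e1, e2, ← e3]
  rw [hfac]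
  exact mul_mem (mul_mem (lower_mem hS) (diag_mem hdet.ne_zero)) (upper_mem hT)

end SpDense


/-- The set of elements of `Sp(2k,ℝ)` with all entries rational is dense in `Sp(2k,ℝ)`
(with the subspace topology from the space of `2k × 2k` real matrices). -/
theorem rational_points_dense_in_Sp (k : ℕ) (hk : 1 ≤ k) :
    Dense {M : Matrix.symplecticGroup (Fin k) ℝ |
      ∀ i j, (M : Matrix (Fin k ⊕ Fin k) (Fin k ⊕ Fin k) ℝ) i j ∈
        Set.range ((↑) : ℚ → ℝ)} := by
  intro M
  rw [Topology.IsInducing.subtypeVal.closure_eq_preimage_closure_image]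
  refine closure_mono ?_ (SpDense.mem_closure_of_symplectic M.2)
  rintro _ ⟨N, hN, rfl⟩
  exact ⟨⟨N.map (algebraMap ℚ ℝ), SymplecticGroup.map_mem hN _⟩, fun i j => ⟨N i j, rfl⟩, rfl⟩
end

section
/- Rational points are dense in the real centralizer of a regular rational matrix: let A ∈ SL(n,ℚ) be such that the characteristic polynomial of A has n distinct roots in ℂ, and let A' denote the image of A in SL(n,ℝ) under the entrywise coercion. Then the set {B ∈ SL(n,ℝ) : B commutes with A' and all entries of B are rational} is dense in the centralizer {B ∈ SL(n,ℝ) : B commutes with A'}. -/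
open Polynomial
lemma aux_diag {n : ℕ} (M : Matrix (Fin n) (Fin n) ℂ) (h : M.charpoly.roots.toFinset.card = n) :
    ∃ α : Fin n → ℂ, Function.Injective α ∧ ∃ P Q : Matrix (Fin n) (Fin n) ℂ,
      P * Q = 1 ∧ Q * P = 1 ∧ M = P * Matrix.diagonal α * Q := by
  let e := (Finset.equivFinOfCardEq h).symm
  let α : Fin n → ℂ := fun k => (e k : ℂ)
  have hinj : Function.Injective α := Subtype.val_injective.comp e.injective
  have hev : ∀ k, ∃ v : Fin n → ℂ, Module.End.HasEigenvector (Matrix.toLin' M) (α k) v := by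
    intro k
    have h1 : α k ∈ M.charpoly.roots := by
      have := (e k).2
      rwa [Multiset.mem_toFinset] at this
    have h2 := (Polynomial.mem_roots'.1 h1).2
    have h3 : Module.End.HasEigenvalue (Matrix.toLin' M) (α k) := by
      rw [Module.End.hasEigenvalue_iff_isRoot_charpoly]
      simpa using h2
    exact h3.exists_hasEigenvector
  choose v hv using hev
  have hli := Module.End.eigenvectors_linearIndependent' (Matrix.toLin' M) α hinj v hv
  let P : Matrix (Fin n) (Fin n) ℂ := (Matrix.of v).transpose
  have hP : IsUnit P := by
    rw [← Matrix.linearIndependent_cols_iff_isUnit]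
    exact hli
  have hd : IsUnit P.det := (Matrix.isUnit_iff_isUnit_det _).1 hP
  refine ⟨α, hinj, P, P⁻¹, Matrix.mul_nonsing_inv _ hd, Matrix.nonsing_inv_mul _ hd, ?_⟩
  have hMP : M * P = P * Matrix.diagonal α := by
    ext i j
    have h4 := congrFun (hv j).apply_eq_smul i
    rw [Matrix.mul_diagonal]
    simp only [Matrix.toLin'_apply, Pi.smul_apply, smul_eq_mul] at h4
    rw [mul_comm]
    exact h4
  rw [← hMP, mul_assoc, Matrix.mul_nonsing_inv _ hd, mul_one]

lemma aux_aeval_conj {F : Type*} [CommRing F] [Algebra F ℂ] {n : ℕ}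
    (P Q : Matrix (Fin n) (Fin n) ℂ) (hPQ : P * Q = 1) (hQP : Q * P = 1) (α : Fin n → ℂ) (q : F[X]) :
    aeval (P * Matrix.diagonal α * Q) q = P * Matrix.diagonal (aeval α q) * Q := by
  let ψ : (Fin n → ℂ) →ₐ[F] Matrix (Fin n) (Fin n) ℂ :=
    { toFun := fun t => P * Matrix.diagonal t * Q
      map_one' := by simp [hPQ]
      map_mul' := by
        intro s t
        have : P * Matrix.diagonal s * Q * (P * Matrix.diagonal t * Q)
          = P * Matrix.diagonal s * (Q * P) * Matrix.diagonal t * Q := by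
          simp only [mul_assoc]
        rw [this, hQP, mul_one, mul_assoc P (Matrix.diagonal s), Matrix.diagonal_mul_diagonal]
        rfl
      map_zero' := by simp
      map_add' := by
        intro s t
        rw [← add_mul, ← mul_add, Matrix.diagonal_add]
        rfl
      commutes' := by
        intro r
        have h1 : Matrix.diagonal (algebraMap F (Fin n → ℂ) r)
            = algebraMap F (Matrix (Fin n) (Fin n) ℂ) r := by
          rw [Matrix.algebraMap_eq_diagonal]
        show P * Matrix.diagonal (algebraMap F (Fin n → ℂ) r) * Q = _
        rw [h1, ← Algebra.commutes, mul_assoc, hPQ, mul_one] }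
  exact aeval_algHom_apply ψ α q

lemma aux_pi {F : Type*} [CommRing F] [Algebra F ℂ] {n : ℕ} (α : Fin n → ℂ) (q : F[X]) (k : Fin n) :
    aeval α q k = aeval (α k) q := by
  exact (aeval_algHom_apply (Pi.evalAlgHom F (fun _ : Fin n => ℂ) k) α q).symm

lemma aux_split (q : ℂ[X]) : ∃ p r : ℝ[X],
    q = p.map (algebraMap ℝ ℂ) + C Complex.I * r.map (algebraMap ℝ ℂ) := by
  induction q using Polynomial.induction_on' with
  | add p q hp hq =>
    obtain ⟨a, b, rfl⟩ := hp
    obtain ⟨c, d, rfl⟩ := hq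
    refine ⟨a + c, b + d, ?_⟩
    simp only [Polynomial.map_add]; ring
  | monomial k a =>
    refine ⟨monomial k a.re, monomial k a.im, ?_⟩
    simp only [Polynomial.map_monomial, C_mul_monomial]
    rw [← map_add]
    congr 1
    rw [mul_comm]; exact (Complex.re_add_im a).symm

lemma aux_det_conj {n : ℕ} (P Q : Matrix (Fin n) (Fin n) ℂ) (hPQ : P * Q = 1) (t : Fin n → ℂ) :
    (P * Matrix.diagonal t * Q).det = ∏ l, t l := by
  have h := congrArg Matrix.det hPQ
  rw [Matrix.det_mul, Matrix.det_one] at h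
  rw [Matrix.det_mul, Matrix.det_mul, Matrix.det_diagonal, mul_right_comm, h, one_mul]

lemma aux_map_aeval {F : Type*} [CommRing F] [Algebra F ℂ] {n : ℕ} (A : Matrix (Fin n) (Fin n) F)
    (q : F[X]) : (aeval A q).map (algebraMap F ℂ) = aeval (A.map (algebraMap F ℂ)) q :=
  (aeval_algHom_apply (Algebra.ofId F ℂ).mapMatrix A q).symm

lemma aux_prodrat {n : ℕ} (A : Matrix (Fin n) (Fin n) ℚ) (P Q : Matrix (Fin n) (Fin n) ℂ)
    (hPQ : P * Q = 1) (hQP : Q * P = 1) (α : Fin n → ℂ)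
    (hA : A.map (algebraMap ℚ ℂ) = P * Matrix.diagonal α * Q) (q : ℚ[X]) :
    ∃ R : ℚ[X], ∀ z : ℂ, aeval z R = ∏ l, (1 + z * aeval α q l) := by
  refine ⟨(1 + (X : ℚ[X]) • (aeval A q).map C).det, fun z => ?_⟩
  rw [AlgHom.map_det, ← aux_det_conj P Q hPQ]
  congr 1
  have h1 : (P * Matrix.diagonal (fun l => 1 + z * aeval α q l) * Q)
      = 1 + z • (aeval A q).map (algebraMap ℚ ℂ) := by
    rw [aux_map_aeval, hA, aux_aeval_conj P Q hPQ hQP]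
    have : Matrix.diagonal (fun l => 1 + z * aeval α q l)
      = 1 + z • Matrix.diagonal (aeval α q) := by
      rw [← Matrix.diagonal_one, ← Matrix.diagonal_smul, Matrix.diagonal_add]
      rfl
    rw [this, mul_add, add_mul, mul_one, hPQ, Matrix.mul_smul, Matrix.smul_mul]
  rw [h1, map_add, map_one]
  congr 1
  ext i j
  simp
  exact mul_comm _ _

lemma aux_prodrat0 {n : ℕ} (A : Matrix (Fin n) (Fin n) ℚ) (P Q : Matrix (Fin n) (Fin n) ℂ)
    (hPQ : P * Q = 1) (hQP : Q * P = 1) (α : Fin n → ℂ)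
    (hA : A.map (algebraMap ℚ ℂ) = P * Matrix.diagonal α * Q) (q : ℚ[X]) :
    algebraMap ℚ ℂ (aeval A q).det = ∏ l, aeval α q l := by
  rw [RingHom.map_det, ← aux_det_conj P Q hPQ, ← aux_aeval_conj P Q hPQ hQP, ← hA, ← aux_map_aeval]
  rfl

lemma aux_charpoly {n : ℕ} (A : Matrix (Fin n) (Fin n) ℚ) (P Q : Matrix (Fin n) (Fin n) ℂ)
    (hPQ : P * Q = 1) (hQP : Q * P = 1) (α : Fin n → ℂ)
    (hA : A.map (algebraMap ℚ ℂ) = P * Matrix.diagonal α * Q) (z : ℂ) :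
    aeval z A.charpoly = ∏ l, (z - α l) := by
  have h0 : aeval z A.charpoly = ((A.map (algebraMap ℚ ℂ)).charpoly).eval z := by
    rw [Matrix.charpoly_map, eval_map_algebraMap]
  rw [h0, Matrix.eval_charpoly, hA, ← aux_det_conj P Q hPQ]
  congr 1
  have : Matrix.diagonal (fun l => z - α l) = Matrix.scalar (Fin n) z - Matrix.diagonal α := by
    rw [Matrix.scalar_apply, Matrix.diagonal_sub]
  rw [this, mul_sub, sub_mul]
  congr 1
  rw [← Matrix.scalar_comm z (fun _ => Commute.all _ _), mul_assoc, hPQ, mul_one]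

lemma aux_inv {n : ℕ} (A : Matrix (Fin n) (Fin n) ℚ) (P Q : Matrix (Fin n) (Fin n) ℂ)
    (hPQ : P * Q = 1) (hQP : Q * P = 1) (α : Fin n → ℂ)
    (hA : A.map (algebraMap ℚ ℂ) = P * Matrix.diagonal α * Q) (q : ℚ[X])
    (hq : ∀ k, aeval α q k ≠ 0) :
    ∃ q' : ℚ[X], ∀ k, aeval α q' k = (aeval α q k)⁻¹ := by
  have hc : IsCoprime q A.charpoly := by
    rw [Polynomial.isCoprime_iff_aeval_ne_zero_of_isAlgClosed ℚ ℂ]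
    intro z
    by_contra! hz
    obtain ⟨h1, h2⟩ := hz
    rw [aux_charpoly A P Q hPQ hQP α hA, Finset.prod_eq_zero_iff] at h2
    obtain ⟨k, -, hk⟩ := h2
    apply hq k
    rw [aux_pi, ← sub_eq_zero.1 hk, h1]
  obtain ⟨a, b, hab⟩ := hc
  refine ⟨a, fun k => ?_⟩
  have h3 := congrArg (aeval (α k)) hab
  have h4 : aeval (α k) A.charpoly = 0 := by
    rw [aux_charpoly A P Q hPQ hQP α hA]
    exact Finset.prod_eq_zero (Finset.mem_univ k) (sub_self _)
  rw [map_add, map_mul, map_mul, h4, mul_zero, add_zero, map_one] at h3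
  rw [aux_pi, aux_pi]
  exact eq_inv_of_mul_eq_one_left h3

lemma aux_closure {n : ℕ} (α : Fin n → ℂ) (p : ℝ[X]) :
    aeval α p ∈ closure (Set.range (fun q : ℚ[X] => aeval α q)) := by
  let S : Subring (Fin n → ℂ) := (aeval (R := ℚ) α).toRingHom.range.topologicalClosure
  have hS : (S : Set (Fin n → ℂ)) = closure (Set.range (fun q : ℚ[X] => aeval α q)) := by
    rfl
  rw [← hS]
  have hα : α ∈ S := by
    apply Subring.le_topologicalClosure
    exact ⟨X, by simp⟩
  have hc : ∀ r : ℝ, algebraMap ℝ (Fin n → ℂ) r ∈ S := by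
    intro r
    have h1 : Continuous (algebraMap ℝ (Fin n → ℂ)) := continuous_algebraMap _ _
    have h2 : r ∈ closure (Set.range ((↑) : ℚ → ℝ)) := Rat.denseRange_cast r
    have h3 := map_mem_closure h1 h2 (t := Set.range (fun q : ℚ[X] => aeval α q)) (by
      rintro _ ⟨q, rfl⟩
      refine ⟨C q, ?_⟩
      funext k
      simp [Pi.algebraMap_apply])
    rw [← hS] at h3
    exact h3
  induction p using Polynomial.induction_on' with
  | add p q hp hq => rw [map_add]; exact S.add_mem hp hq
  | monomial k a =>
    rw [aeval_monomial]
    exact S.mul_mem (hc a) (S.pow_mem hα k)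

lemma aux_real {n : ℕ} (α : Fin n → ℂ) (hα : Function.Injective α)
    (τ : Fin n → Fin n) (hτ : ∀ k, α (τ k) = starRingEnd ℂ (α k))
    (u : Fin n → ℂ) (hu : ∀ k, u (τ k) = starRingEnd ℂ (u k)) :
    ∃ p : ℝ[X], aeval α p = u := by
  obtain ⟨p, r, hpr⟩ := aux_split (Lagrange.interpolate Finset.univ α u)
  have h1 : ∀ k, u k = aeval (α k) p + Complex.I * aeval (α k) r := by
    intro k
    have := Lagrange.eval_interpolate_at_node (r := u) (hα.injOn (s := ↑(Finset.univ : Finset (Fin n))))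
      (Finset.mem_univ k)
    rw [hpr] at this
    rw [← this]
    simp
  refine ⟨p, ?_⟩
  funext k
  have h2 := hu k
  rw [h1 k, h1 (τ k), hτ, aeval_conj, aeval_conj, map_add, map_mul, Complex.conj_I] at h2
  have h3 : starRingEnd ℂ (aeval (α k) r) = 0 := by
    have : Complex.I * starRingEnd ℂ (aeval (α k) r) = 0 := by linear_combination h2 / 2
    simpa using this
  have h4 : aeval (α k) r = 0 := by simpa using h3
  rw [aux_pi, h1 k, h4, mul_zero, add_zero]

lemma aux_core1 {n : ℕ} (A : Matrix (Fin n) (Fin n) ℚ) (P Q : Matrix (Fin n) (Fin n) ℂ)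
    (hPQ : P * Q = 1) (hQP : Q * P = 1) (α : Fin n → ℂ)
    (hA : A.map (algebraMap ℚ ℂ) = P * Matrix.diagonal α * Q)
    (p e : ℝ[X]) (k₀ : Fin n) (he : aeval α e = Pi.single k₀ 1) (hp : ∏ k, aeval α p k = 1) :
    aeval α p ∈ closure {s : Fin n → ℂ | (∃ q : ℚ[X], aeval α q = s) ∧ ∏ k, s k = 1} := by
  let N : (Fin n → ℂ) × (Fin n → ℂ) → Fin n → ℂ := fun x k => ∏ l, (1 + x.1 k * x.2 l)
  let D : (Fin n → ℂ) × (Fin n → ℂ) → Fin n → ℂ := fun x k => ∏ l, (1 + x.2 k * x.1 l)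
  let F : (Fin n → ℂ) × (Fin n → ℂ) → Fin n → ℂ := fun x k => N x k * (D x k)⁻¹
  let R : Set (Fin n → ℂ) := Set.range (fun q : ℚ[X] => aeval α q)
  let O : Set ((Fin n → ℂ) × (Fin n → ℂ)) := {x | ∀ k, D x k ≠ 0}
  have hN : ∀ k, Continuous (fun x => N x k) := by intro k; fun_prop
  have hD : ∀ k, Continuous (fun x => D x k) := by intro k; fun_prop
  have hO : IsOpen O := by
    have : O = ⋂ k, {x | D x k ≠ 0} := by ext x; simp [O]
    rw [this]
    exact isOpen_iInter_of_finite fun k => isOpen_ne_fun (hD k) continuous_const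
  let x₀ : (Fin n → ℂ) × (Fin n → ℂ) := (aeval α (p - 1), aeval α e)
  have hx₀ : x₀ ∈ closure (R ×ˢ R) := by
    rw [closure_prod_eq]
    exact ⟨aux_closure α _, aux_closure α _⟩
  have hN0 : ∀ k, N x₀ k = aeval α p k := by
    intro k
    simp only [N, x₀, he]
    rw [Finset.prod_eq_single k₀]
    · simp
    · intro b _ hb; simp [hb]
    · simp
  have hD0 : ∀ k, D x₀ k = 1 := by
    intro k
    simp only [D, x₀, he]
    by_cases hk : k = k₀
    · subst hk
      simpa using hp
    · simp [hk]
  have hxO : x₀ ∈ O := by intro k; rw [hD0]; exact one_ne_zero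
  have hF0 : F x₀ = aeval α p := by
    funext k
    simp only [F, hN0, hD0, inv_one, mul_one]
  rw [← hF0]
  have hcont : ContinuousAt F x₀ := by
    rw [continuousAt_pi]
    intro k
    exact (hN k).continuousAt.mul ((hD k).continuousAt.inv₀ (hxO k))
  refine hcont.continuousWithinAt.mem_closure (hO.inter_closure ⟨hxO, hx₀⟩) ?_
  rintro ⟨u, v⟩ ⟨hxO', ⟨q, rfl⟩, ⟨r, rfl⟩⟩
  constructor
  · obtain ⟨a, ha⟩ := aux_prodrat A P Q hPQ hQP α hA r
    obtain ⟨b, hb⟩ := aux_prodrat A P Q hPQ hQP α hA q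
    have hcomp : ∀ (f g : ℚ[X]) k, aeval α (f.comp g) k = aeval (aeval α g k) f := by
      intro f g k
      rw [aux_pi, aux_pi, aeval_comp]
    have hDb : ∀ k, aeval α (b.comp r) k = D (aeval α q, aeval α r) k := by
      intro k; rw [hcomp, hb]
    obtain ⟨c, hc⟩ := aux_inv A P Q hPQ hQP α hA (b.comp r) (by
      intro k; rw [hDb]; exact hxO' k)
    refine ⟨a.comp q * c, ?_⟩
    funext k
    rw [map_mul, Pi.mul_apply, hc, hDb, hcomp, ha]
  · simp only [F]
    rw [Finset.prod_mul_distrib, Finset.prod_inv_distrib]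
    have h1 : ∏ k, N (aeval α q, aeval α r) k = ∏ k, D (aeval α q, aeval α r) k := by
      simp only [N, D]
      rw [Finset.prod_comm]
      simp only [mul_comm]
    rw [h1]
    exact mul_inv_cancel₀ (Finset.prod_ne_zero_iff.2 fun k _ => hxO' k)

lemma aux_core2 {n : ℕ} (A : Matrix (Fin n) (Fin n) ℚ) (P Q : Matrix (Fin n) (Fin n) ℂ)
    (hPQ : P * Q = 1) (hQP : Q * P = 1) (α : Fin n → ℂ)
    (hA : A.map (algebraMap ℚ ℂ) = P * Matrix.diagonal α * Q)
    (hα : Function.Injective α)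
    (τ : Fin n → Fin n) (hτ : ∀ k, α (τ k) = starRingEnd ℂ (α k))
    (hreal : ∀ k, (α k).im ≠ 0)
    (p : ℝ[X]) (hp : ∏ k, aeval α p k = 1) :
    aeval α p ∈ closure {s : Fin n → ℂ | (∃ q : ℚ[X], aeval α q = s) ∧ ∏ k, s k = 1} := by
  let t : Fin n → ℂ := aeval α p
  have htt : ∀ k, t (τ k) = starRingEnd ℂ (t k) := by
    intro k
    simp only [t]
    rw [aux_pi, aux_pi, hτ, aeval_conj]
  have hroot : ∀ z : ℂ, ∃ w : ℂ, n ≠ 0 → w ^ (2 * n) = z := by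
    intro z
    by_cases hn : n = 0
    · exact ⟨0, fun h => absurd hn h⟩
    · obtain ⟨w, hw⟩ := IsAlgClosed.exists_pow_nat_eq z (n := 2 * n) (by omega)
      exact ⟨w, fun _ => hw⟩
  choose ρ hρ using hroot
  let w : Fin n → ℂ := fun k => if 0 < (α k).im then ρ (t k) else starRingEnd ℂ (ρ (starRingEnd ℂ (t k)))
  have hw : ∀ k, w k ^ (2 * n) = t k := by
    intro k
    have hn : n ≠ 0 := by have := k.2; omega
    simp only [w]
    split_ifs
    · exact hρ _ hn
    · rw [← map_pow, hρ _ hn, Complex.conj_conj]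
  have hwτ : ∀ k, w (τ k) = starRingEnd ℂ (w k) := by
    intro k
    simp only [w]
    rw [hτ, htt, Complex.conj_im, Complex.conj_conj]
    rcases lt_or_gt_of_ne (hreal k) with h | h
    · rw [if_pos (by linarith), if_neg (by linarith), Complex.conj_conj]
    · rw [if_neg (by linarith), if_pos h]
  obtain ⟨m, hm⟩ := aux_real α hα τ hτ w hwτ
  have hinv : Function.Involutive τ := by
    intro k
    apply hα
    rw [hτ, hτ, Complex.conj_conj]
  have hsq : (∏ k, w k) ^ 2 = 1 := by
    rcases Nat.eq_zero_or_pos n with hn | hn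
    · subst hn; simp
    have h1 : starRingEnd ℂ (∏ k, w k) = ∏ k, w k := by
      rw [map_prod]
      simp only [← hwτ]
      exact Equiv.prod_comp hinv.toPerm w
    obtain ⟨r, hr⟩ := Complex.conj_eq_iff_real.1 h1
    have h2 : (∏ k, w k) ^ (2 * n) = 1 := by
      rw [← Finset.prod_pow]
      simp only [hw]
      exact hp
    rw [hr] at h2 ⊢
    norm_cast at h2 ⊢
    rw [pow_mul] at h2
    exact (pow_eq_one_iff_of_nonneg (sq_nonneg r) hn.ne').1 h2
  let F : (Fin n → ℂ) → Fin n → ℂ := fun x k => x k ^ (2 * n) * ((∏ l, x l) ^ 2)⁻¹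
  let O : Set (Fin n → ℂ) := {x | (∏ l, x l) ^ 2 ≠ 0}
  have hO : IsOpen O := isOpen_ne_fun (by fun_prop) continuous_const
  have hwO : w ∈ O := by
    show (∏ l, w l) ^ 2 ≠ 0
    rw [hsq]; exact one_ne_zero
  have hF0 : F w = aeval α p := by
    funext k
    simp only [F]
    rw [hsq, hw, inv_one, mul_one]
  have hwc : w ∈ closure (Set.range (fun q : ℚ[X] => aeval α q)) := by
    rw [← hm]; exact aux_closure α m
  have hcont : ContinuousAt F w := by
    rw [continuousAt_pi]
    intro k
    refine ContinuousAt.mul ((continuous_apply k).pow _).continuousAt (ContinuousAt.inv₀ (by fun_prop) hwO)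
  rw [← hF0]
  refine hcont.continuousWithinAt.mem_closure (hO.inter_closure ⟨hwO, hwc⟩) ?_
  rintro _ ⟨hx, q, rfl⟩
  constructor
  · have h5 := aux_prodrat0 A P Q hPQ hQP α hA q
    refine ⟨q ^ (2 * n) * C (((aeval A q).det ^ 2)⁻¹), ?_⟩
    funext k
    simp only [F]
    rw [← h5, map_mul, map_pow, aeval_C, Pi.mul_apply, Pi.pow_apply, Pi.algebraMap_apply, map_inv₀, map_pow]
  · simp only [F]
    have hx' : (∏ l, aeval α q l) ^ 2 ≠ 0 := hx
    rw [Finset.prod_mul_distrib, Finset.prod_pow, Finset.prod_const, Finset.card_univ, Fintype.card_fin,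
      inv_pow, ← pow_mul]
    apply mul_inv_cancel₀
    rw [pow_mul]
    exact pow_ne_zero _ hx'



/-- `SL(n,R)` carries the subspace topology induced from the space of matrices. -/
instance specialLinearGroupTopology (n : Type*) [DecidableEq n] [Fintype n]
    (R : Type*) [CommRing R] [TopologicalSpace R] :
    TopologicalSpace (Matrix.SpecialLinearGroup n R) :=
  TopologicalSpace.induced ((↑) : Matrix.SpecialLinearGroup n R → Matrix n n R) inferInstance

/-- If `A ∈ SL(n,ℚ)` has `n` distinct complex eigenvalues, then the rational points of the
centralizer of `A` in `SL(n,ℝ)` are dense in that centralizer. -/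
theorem rational_points_dense_in_centralizer (n : ℕ) (A : Matrix.SpecialLinearGroup (Fin n) ℚ)
    (hA : (((A : Matrix (Fin n) (Fin n) ℚ).map ((↑) : ℚ → ℂ)).charpoly.roots).toFinset.card = n) :
    Dense (X := {B : Matrix.SpecialLinearGroup (Fin n) ℝ //
        B * Matrix.SpecialLinearGroup.map (Rat.castHom ℝ) A
          = Matrix.SpecialLinearGroup.map (Rat.castHom ℝ) A * B})
      {B | ∀ i j, ((B : Matrix.SpecialLinearGroup (Fin n) ℝ) : Matrix (Fin n) (Fin n) ℝ) i j ∈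
        Set.range ((↑) : ℚ → ℝ)} := by
  obtain ⟨α, hα, P, Q, hPQ, hQP, hAP⟩ := aux_diag _ hA
  have hA1 : (A : Matrix (Fin n) (Fin n) ℚ).map (algebraMap ℚ ℂ) = P * Matrix.diagonal α * Q := by
    rw [← hAP]
    ext i j
    simp
  clear hAP hA
  obtain ⟨A, hdetA⟩ := A
  change A.map (algebraMap ℚ ℂ) = P * Matrix.diagonal α * Q at hA1
  let ι : {B : Matrix.SpecialLinearGroup (Fin n) ℝ //
        B * Matrix.SpecialLinearGroup.map (Rat.castHom ℝ) ⟨A, hdetA⟩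
          = Matrix.SpecialLinearGroup.map (Rat.castHom ℝ) ⟨A, hdetA⟩ * B} →
      Matrix (Fin n) (Fin n) ℂ := fun B => (B.1 : Matrix (Fin n) (Fin n) ℝ).map (algebraMap ℝ ℂ)
  have hι : Topology.IsInducing ι := by
    have h1 : Topology.IsInducing
        (fun (M : Matrix (Fin n) (Fin n) ℝ) => M.map (algebraMap ℝ ℂ)) :=
      Topology.IsInducing.piMap fun _ => Topology.IsInducing.piMap fun _ =>
        Complex.isometry_ofReal.isEmbedding.isInducing
    have h2 : Topology.IsInducing
        ((↑) : Matrix.SpecialLinearGroup (Fin n) ℝ → Matrix (Fin n) (Fin n) ℝ) := ⟨rfl⟩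
    exact h1.comp (h2.comp Topology.IsInducing.subtypeVal)
  have hτ : ∀ k, ∃ l, α l = starRingEnd ℂ (α k) := by
    intro k
    have h1 : aeval (starRingEnd ℂ (α k)) A.charpoly = 0 := by
      have h2 : aeval (α k) A.charpoly = 0 := by
        rw [aux_charpoly A P Q hPQ hQP α hA1]
        exact Finset.prod_eq_zero (Finset.mem_univ k) (sub_self _)
      have h3 : ∀ z : ℂ, aeval z A.charpoly = aeval z (A.charpoly.map (algebraMap ℚ ℝ)) := by
        intro z; rw [aeval_map_algebraMap]
      rw [h3, aeval_conj, ← h3, h2, map_zero]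
    rw [aux_charpoly A P Q hPQ hQP α hA1, Finset.prod_eq_zero_iff] at h1
    obtain ⟨l, -, hl⟩ := h1
    exact ⟨l, (sub_eq_zero.1 hl).symm⟩
  choose τ hτ using hτ
  intro B
  rw [hι.closure_eq_preimage_closure_image, Set.mem_preimage]
  let AR : Matrix (Fin n) (Fin n) ℝ := A.map (algebraMap ℚ ℝ)
  have hARC : AR.map (algebraMap ℝ ℂ) = A.map (algebraMap ℚ ℂ) := by
    ext i j
    simp [AR]
  have hARC' : AR.map (algebraMap ℝ ℂ) = P * Matrix.diagonal α * Q := hARC.trans hA1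
  have hBA : (B.1 : Matrix (Fin n) (Fin n) ℝ) * AR = AR * B.1 := congrArg Subtype.val B.2
  have hcomm : ι B * (P * Matrix.diagonal α * Q) = (P * Matrix.diagonal α * Q) * ι B := by
    rw [← hARC']
    have := congrArg (fun M : Matrix (Fin n) (Fin n) ℝ => M.map (algebraMap ℝ ℂ)) hBA
    simpa only [Matrix.map_mul] using this
  let E := Q * ι B * P
  have hE : E * Matrix.diagonal α = Matrix.diagonal α * E := by
    have h1 : Q * (ι B * (P * Matrix.diagonal α * Q)) * P
        = Q * ι B * P * Matrix.diagonal α * (Q * P) := by simp only [mul_assoc]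
    have h2 : Q * ((P * Matrix.diagonal α * Q) * ι B) * P
        = (Q * P) * Matrix.diagonal α * (Q * ι B * P) := by simp only [mul_assoc]
    rw [hcomm, h2, hQP, mul_one, one_mul] at h1
    exact h1.symm
  let t : Fin n → ℂ := fun k => E k k
  have hEt : E = Matrix.diagonal t := by
    ext i j
    by_cases hij : i = j
    · subst hij; simp [t]
    · rw [Matrix.diagonal_apply_ne _ hij]
      have h1 := congrFun (congrFun hE i) j
      rw [Matrix.mul_diagonal, Matrix.diagonal_mul] at h1
      have h2 : E i j * (α j - α i) = 0 := by linear_combination h1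
      rcases mul_eq_zero.1 h2 with h | h
      · exact h
      · exact absurd (hα (sub_eq_zero.1 h)).symm hij
  have hB1 : ι B = P * Matrix.diagonal t * Q := by
    rw [← hEt]
    have : P * (Q * ι B * P) * Q = (P * Q) * ι B * (P * Q) := by simp only [mul_assoc]
    rw [this, hPQ, one_mul, mul_one]
  obtain ⟨p, r, hpr⟩ := aux_split (Lagrange.interpolate Finset.univ α t)
  have ht : aeval α (Lagrange.interpolate Finset.univ α t) = t := by
    funext k
    rw [aux_pi, coe_aeval_eq_eval]
    exact Lagrange.eval_interpolate_at_node (r := t)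
      (hα.injOn (s := ↑(Finset.univ : Finset (Fin n)))) (Finset.mem_univ k)
  have hB2 : ι B = (aeval AR p).map (algebraMap ℝ ℂ)
      + Complex.I • (aeval AR r).map (algebraMap ℝ ℂ) := by
    rw [aux_map_aeval, aux_map_aeval, hARC', hB1, ← ht, ← aux_aeval_conj P Q hPQ hQP, hpr,
      map_add, map_mul, aeval_C, aeval_map_algebraMap, aeval_map_algebraMap, Algebra.smul_def]
  have hB3 : (B.1 : Matrix (Fin n) (Fin n) ℝ) = aeval AR p := by
    ext i j
    have h1 := congrArg Complex.re (congrFun (congrFun hB2 i) j)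
    simpa [ι] using h1
  have hB4 : ι B = P * Matrix.diagonal (aeval α p) * Q := by
    show (B.1 : Matrix (Fin n) (Fin n) ℝ).map (algebraMap ℝ ℂ) = _
    rw [hB3, aux_map_aeval, hARC', aux_aeval_conj P Q hPQ hQP]
  have hp : ∏ k, aeval α p k = 1 := by
    rw [← aux_det_conj P Q hPQ, ← hB4]
    have h1 : ι B = (algebraMap ℝ ℂ).mapMatrix (B.1 : Matrix (Fin n) (Fin n) ℝ) := rfl
    rw [h1, ← RingHom.map_det, B.1.2, map_one]
  have hmain : aeval α p ∈
      closure {s : Fin n → ℂ | (∃ q : ℚ[X], aeval α q = s) ∧ ∏ k, s k = 1} := by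
    by_cases hreal : ∀ k, (α k).im ≠ 0
    · exact aux_core2 A P Q hPQ hQP α hA1 hα τ hτ hreal p hp
    · push Not at hreal
      obtain ⟨k₀, hk₀⟩ := hreal
      have hfix : τ k₀ = k₀ := by
        apply hα
        rw [hτ]
        exact Complex.conj_eq_iff_im.2 hk₀
      have hinv : Function.Involutive τ := by
        intro k
        apply hα
        rw [hτ, hτ, Complex.conj_conj]
      obtain ⟨e, he⟩ := aux_real α hα τ hτ (Pi.single k₀ 1) (by
        intro k
        by_cases hk : k = k₀
        · rw [hk, hfix]; simp
        · have hk' : τ k ≠ k₀ := by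
            intro h
            apply hk
            rw [← hinv k, h, hfix]
          simp [hk, hk'])
      exact aux_core1 A P Q hPQ hQP α hA1 p e k₀ he hp
  rw [hB4]
  have hcont : Continuous (fun s : Fin n → ℂ => P * Matrix.diagonal s * Q) :=
    (continuous_const.matrix_mul continuous_id.matrix_diagonal).matrix_mul continuous_const
  refine map_mem_closure (f := fun s : Fin n → ℂ => P * Matrix.diagonal s * Q) hcont hmain ?_
  rintro _ ⟨⟨q, rfl⟩, hq⟩
  have hdet : (aeval A q).det = 1 := by
    have h1 := aux_prodrat0 A P Q hPQ hQP α hA1 q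
    rw [hq] at h1
    exact (algebraMap ℚ ℂ).injective (h1.trans (map_one _).symm)
  let S : Matrix.SpecialLinearGroup (Fin n) ℚ := ⟨aeval A q, hdet⟩
  have hS : S * ⟨A, hdetA⟩ = ⟨A, hdetA⟩ * S := by
    apply Subtype.ext
    show aeval A q * A = A * aeval A q
    have h1 : aeval A (q * X) = aeval A (X * q) := by rw [mul_comm]
    simpa only [map_mul, aeval_X] using h1
  refine ⟨⟨Matrix.SpecialLinearGroup.map (Rat.castHom ℝ) S, ?_⟩, ?_, ?_⟩
  · have h1 := congrArg (Matrix.SpecialLinearGroup.map (n := Fin n) (Rat.castHom ℝ)) hS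
    exact ((map_mul _ _ _).symm.trans h1).trans (map_mul _ _ _)
  · intro i j
    exact ⟨aeval A q i j, rfl⟩
  · show ((aeval A q).map (Rat.castHom ℝ)).map (algebraMap ℝ ℂ) = _
    dsimp only
    rw [← aux_aeval_conj P Q hPQ hQP, ← hA1, ← aux_map_aeval]
    ext i j
    simp
end

section
/- Rational points are dense in the real symplectic centralizer of a regular rational symplectic matrix: let A be a 2k×2k matrix over ℚ lying in Sp(2k,ℚ) whose characteristic polynomial has 2k distinct roots in ℂ, and let A' denote its image in Sp(2k,ℝ) under the entrywise coercion. Then the set {B ∈ Sp(2k,ℝ) : B commutes with A' and all entries of B are rational} is dense in the centralizer {B ∈ Sp(2k,ℝ) : B commutes with A'}. -/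
open Matrix Polynomial

/-- The adjoint of a matrix with respect to the symplectic form. -/
def sg {l R : Type*} [Fintype l] [DecidableEq l] [CommRing R] (X : Matrix (l ⊕ l) (l ⊕ l) R) :
    Matrix (l ⊕ l) (l ⊕ l) R := -(J l R * Xᵀ * J l R)

section
variable {l R : Type*} [Fintype l] [DecidableEq l] [CommRing R]

lemma sg_mul (X Y : Matrix (l ⊕ l) (l ⊕ l) R) : sg (X * Y) = sg Y * sg X := by
  have h : sg Y * sg X = J l R * Yᵀ * (J l R * J l R) * Xᵀ * J l R := by
    simp only [sg, neg_mul, mul_neg, neg_neg, Matrix.mul_assoc]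
  rw [h, J_squared]
  simp [sg, Matrix.mul_assoc]

lemma sg_add (X Y : Matrix (l ⊕ l) (l ⊕ l) R) : sg (X + Y) = sg X + sg Y := by
  simp only [sg, transpose_add, Matrix.mul_add, Matrix.add_mul, neg_add]

lemma sg_smul_one (c : R) : sg (c • (1 : Matrix (l ⊕ l) (l ⊕ l) R)) = c • 1 := by
  simp [sg, J_squared]

lemma sg_one : sg (1 : Matrix (l ⊕ l) (l ⊕ l) R) = 1 := by
  simp [sg, J_squared]

lemma sg_sg (X : Matrix (l ⊕ l) (l ⊕ l) R) : sg (sg X) = X := by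
  have h : sg (sg X) = (J l R * J l R) * X * (J l R * J l R) := by
    simp only [sg, transpose_neg, transpose_mul, transpose_transpose, J_transpose, neg_mul,
      mul_neg, neg_neg, Matrix.mul_assoc]
  rw [h, J_squared]
  simp

lemma mem_iff_sg (X : Matrix (l ⊕ l) (l ⊕ l) R) :
    X ∈ symplecticGroup l R ↔ X * sg X = 1 := by
  rw [SymplecticGroup.mem_iff]
  have e : X * sg X = -(X * J l R * Xᵀ * J l R) := by
    simp only [sg, mul_neg, Matrix.mul_assoc]
  rw [e]
  constructor
  · intro h
    rw [h, J_squared, neg_neg]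
  · intro h
    have h2 : -(X * J l R * Xᵀ * J l R) * J l R = J l R := by rw [h, one_mul]
    rw [neg_mul, Matrix.mul_assoc _ (J l R) (J l R), J_squared] at h2
    simpa using h2

lemma sg_map {S : Type*} [CommRing S] (f : R →+* S) (X : Matrix (l ⊕ l) (l ⊕ l) R) :
    f.mapMatrix (sg X) = sg (f.mapMatrix X) := by
  have hJ : f.mapMatrix (J l R) = J l S := by simp [J, fromBlocks_map, Matrix.map_neg]
  simp only [sg, map_neg, map_mul, hJ]
  simp [transpose_map]

lemma sg_det (X : Matrix (l ⊕ l) (l ⊕ l) R) : (sg X).det = X.det := by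
  have h : sg X * J l R = J l R * Xᵀ := by
    simp only [sg, neg_mul, Matrix.mul_assoc, J_squared]; simp
  have := congrArg det h
  rw [det_mul, det_mul, det_transpose, mul_comm] at this
  exact (isUnit_det_J l R).mul_left_cancel this
end

section
variable {l F : Type*} [Fintype l] [DecidableEq l] [Field F]

/-- `Y * (sg Y)⁻¹`. -/
def cay (Y : Matrix (l ⊕ l) (l ⊕ l) F) : Matrix (l ⊕ l) (l ⊕ l) F :=
  Y * ((sg Y).det⁻¹ • (sg Y).adjugate)

lemma cay_inv (Y : Matrix (l ⊕ l) (l ⊕ l) F) (h : Y.det ≠ 0) :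
    sg Y * ((sg Y).det⁻¹ • (sg Y).adjugate) = 1 := by
  rw [← sg_det] at h
  rw [mul_smul_comm, mul_adjugate, smul_smul, inv_mul_cancel₀ h, one_smul]

lemma cay_map {K : Type*} [Field K] (f : F →+* K) (Y : Matrix (l ⊕ l) (l ⊕ l) F) :
    f.mapMatrix (cay Y) = cay (f.mapMatrix Y) := by
  simp only [cay, map_mul, ← sg_map, ← RingHom.map_adjugate, ← RingHom.map_det]
  congr 1
  ext i j
  simp

lemma commute_sg {A Y : Matrix (l ⊕ l) (l ⊕ l) F} (hA : A ∈ symplecticGroup l F)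
    (h : Commute Y A) : Commute (sg Y) A := by
  rw [mem_iff_sg] at hA
  have hA' := mul_eq_one_comm.1 hA
  have h1 : sg Y * sg A = sg A * sg Y := by
    rw [← sg_mul, ← sg_mul, h.eq]
  have h2 : A * (sg Y * sg A) * A = A * (sg A * sg Y) * A := by rw [h1]
  rw [← Matrix.mul_assoc A (sg A), hA, one_mul, Matrix.mul_assoc, Matrix.mul_assoc (sg Y), hA',
    mul_one] at h2
  exact h2.symm

lemma cay_mem {A Y : Matrix (l ⊕ l) (l ⊕ l) F} (hA : A ∈ symplecticGroup l F)
    (hY : Commute Y A) (hY2 : Commute (sg Y) Y) (hd : Y.det ≠ 0) :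
    cay Y ∈ symplecticGroup l F ∧ Commute (cay Y) A := by
  have hW := cay_inv Y hd
  rw [cay]
  set W := (sg Y).det⁻¹ • (sg Y).adjugate with hWd
  have hW' := mul_eq_one_comm.1 hW
  have inv_comm : ∀ X : Matrix (l ⊕ l) (l ⊕ l) F, Commute (sg Y) X → Commute W X := by
    intro X hX
    have h2 : W * (sg Y * X) * W = W * (X * sg Y) * W := by rw [hX.eq]
    rw [← Matrix.mul_assoc W (sg Y), hW', one_mul, Matrix.mul_assoc W, Matrix.mul_assoc X, hW,
      mul_one] at h2
    exact h2.symm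
  have hWY := inv_comm _ hY2
  have hWA := inv_comm _ (commute_sg hA hY)
  refine ⟨?_, hY.mul_left hWA⟩
  have h1 : sg W * Y = 1 := by
    have := congrArg sg hW
    rwa [sg_mul, sg_sg, sg_one] at this
  have h2 := mul_eq_one_comm.1 h1
  rw [mem_iff_sg, sg_mul]
  calc Y * W * (sg W * sg Y) = W * (Y * sg W) * sg Y := by
        rw [← hWY.eq]; simp only [Matrix.mul_assoc]
    _ = 1 := by rw [h2, mul_one, hW']
end

section
variable {n : Type*} [Fintype n] [DecidableEq n]

lemma exists_diag (A : Matrix n n ℂ) (hA : A.charpoly.roots.toFinset.card = Fintype.card n) :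
    ∃ (S T : Matrix n n ℂ) (d : n → ℂ), Function.Injective d ∧ S * T = 1 ∧
      A * S = S * diagonal d := by
  classical
  have e : n ≃ A.charpoly.roots.toFinset := Fintype.equivOfCardEq (by simp [hA])
  have hv : ∀ i, ∃ v : n → ℂ, v ≠ 0 ∧ A *ᵥ v = ((e i : ℂ)) • v := by
    intro i
    have h1 : (e i : ℂ) ∈ A.charpoly.roots := Multiset.mem_toFinset.1 (e i).2
    have h2 := (Polynomial.mem_roots'.1 h1).2
    rw [Polynomial.IsRoot, Matrix.eval_charpoly] at h2
    obtain ⟨v, hv, h⟩ := Matrix.exists_mulVec_eq_zero_iff.2 h2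
    refine ⟨v, hv, ?_⟩
    rw [Matrix.sub_mulVec, sub_eq_zero] at h
    rw [← h]
    ext j
    simp [Matrix.scalar, mulVec_diagonal]
  choose v hv0 hv using hv
  have hinj : Function.Injective (fun i => (e i : ℂ)) := Subtype.val_injective.comp e.injective
  have hli := Module.End.eigenvectors_linearIndependent' (Matrix.toLin' A) (fun i => (e i : ℂ))
    hinj v (fun i => by
      rw [Module.End.hasEigenvector_iff, Module.End.mem_eigenspace_iff]
      exact ⟨by simpa using hv i, hv0 i⟩)
  let S : Matrix n n ℂ := Matrix.of fun i j => v j i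
  have hS : IsUnit S := Matrix.linearIndependent_cols_iff_isUnit.1 hli
  obtain ⟨u, hu⟩ := hS
  refine ⟨S, (u⁻¹ : (Matrix n n ℂ)ˣ), fun i => (e i : ℂ), hinj, by rw [← hu]; simp, ?_⟩
  ext i j
  have := congrFun (hv j) i
  rw [mul_diagonal]
  simpa [S, mulVec, dotProduct, Matrix.mul_apply, mul_comm] using this

lemma exists_diag_of_commute {A S T X : Matrix n n ℂ} {d : n → ℂ} (hd : Function.Injective d)
    (hST : S * T = 1) (hAS : A * S = S * diagonal d) (hX : Commute X A) :
    ∃ b : n → ℂ, X * S = S * diagonal b := by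
  have hTS := mul_eq_one_comm.1 hST
  set Y := T * X * S with hY
  have hXS : X * S = S * Y := by
    rw [hY, ← Matrix.mul_assoc, ← Matrix.mul_assoc, hST, one_mul]
  have hc : Y * diagonal d = diagonal d * Y := by
    have h1 : S * (Y * diagonal d) = S * (diagonal d * Y) := by
      rw [← Matrix.mul_assoc, ← hXS, Matrix.mul_assoc, ← hAS, ← Matrix.mul_assoc, hX.eq,
        Matrix.mul_assoc, hXS, ← Matrix.mul_assoc, hAS, Matrix.mul_assoc]
    have h2 := congrArg (T * ·) h1
    simpa [← Matrix.mul_assoc, hTS] using h2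
  refine ⟨fun i => Y i i, ?_⟩
  rw [hXS]
  congr 1
  ext i j
  by_cases hij : i = j
  · subst hij; simp
  · have := congrFun (congrFun hc i) j
    rw [mul_diagonal, diagonal_mul] at this
    have h3 : (d j - d i) * Y i j = 0 := by linear_combination this
    rcases mul_eq_zero.1 h3 with h | h
    · exact absurd (hd (sub_eq_zero.1 h)).symm hij
    · rw [h, diagonal_apply_ne _ hij]

lemma diag_pow {A S : Matrix n n ℂ} {d : n → ℂ} (hAS : A * S = S * diagonal d) (m : ℕ) :
    A ^ m * S = S * diagonal (fun i => d i ^ m) := by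
  induction m with
  | zero => simp
  | succ m ih =>
    rw [pow_succ, Matrix.mul_assoc, hAS, ← Matrix.mul_assoc, ih, Matrix.mul_assoc,
      diagonal_mul_diagonal]
    simp [pow_succ]

lemma diag_aeval {A S : Matrix n n ℂ} {d : n → ℂ} (hAS : A * S = S * diagonal d) (p : ℂ[X]) :
    aeval A p * S = S * diagonal (fun i => p.eval (d i)) := by
  rw [aeval_eq_sum_range, Finset.sum_mul]
  simp only [smul_mul_assoc, diag_pow hAS]
  ext i j
  simp [Matrix.sum_apply, mul_diagonal, eval_eq_sum_range, Finset.mul_sum]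
  exact Finset.sum_congr rfl fun _ _ => by ring

lemma exists_poly (A X : Matrix n n ℝ)
    (hA : (A.map ((↑) : ℝ → ℂ)).charpoly.roots.toFinset.card = Fintype.card n)
    (hX : Commute X A) :
    ∃ (N : ℕ) (v : Fin N → ℝ), X = ∑ i, v i • A ^ (i : ℕ) := by
  classical
  obtain ⟨S, T, d, hd, hST, hAS⟩ := exists_diag _ hA
  have hX' : Commute (Complex.ofRealHom.mapMatrix X) (Complex.ofRealHom.mapMatrix A) :=
    hX.map _
  obtain ⟨b, hb⟩ := exists_diag_of_commute hd hST hAS hX'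
  let p := Lagrange.interpolate Finset.univ d b
  have hp : ∀ i, p.eval (d i) = b i := fun i =>
    Lagrange.eval_interpolate_at_node b hd.injOn (Finset.mem_univ i)
  have h1 : Complex.ofRealHom.mapMatrix X = aeval (Complex.ofRealHom.mapMatrix A) p := by
    have h2 := diag_aeval hAS p
    simp only [hp] at h2
    rw [← hb] at h2
    have h3 := congrArg (· * T) h2
    simp only [Matrix.mul_assoc, hST, mul_one] at h3
    exact h3.symm
  refine ⟨p.natDegree + 1, fun i => (p.coeff i).re, ?_⟩
  rw [aeval_eq_sum_range] at h1
  simp only [← map_pow] at h1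
  rw [Finset.sum_range] at h1
  ext i j
  have h2 := congrArg Complex.re (congrFun (congrFun h1 i) j)
  simpa [Matrix.sum_apply] using h2
end

lemma diag_sq_ne {l : Type*} [Fintype l] [DecidableEq l]
    {A S T : Matrix (l ⊕ l) (l ⊕ l) ℂ} {d : l ⊕ l → ℂ}
    (hd : Function.Injective d)
    (hST : S * T = 1) (hAS : A * S = S * diagonal d) (hA : A ∈ symplecticGroup l ℂ)
    (i : l ⊕ l) : d i * d i ≠ 1 := by
  intro hi
  rw [SymplecticGroup.mem_iff'] at hA
  set K := Sᵀ * J l ℂ * S with hK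
  have hKt : Kᵀ = -K := by
    simp [hK, J_transpose, Matrix.mul_assoc]
  have hDK : diagonal d * K * diagonal d = K := by
    have h1 : diagonal d * Sᵀ = Sᵀ * Aᵀ := by
      rw [← transpose_mul, hAS, transpose_mul, diagonal_transpose]
    calc diagonal d * K * diagonal d = (diagonal d * Sᵀ) * J l ℂ * (S * diagonal d) := by
          simp only [hK, Matrix.mul_assoc]
      _ = Sᵀ * (Aᵀ * J l ℂ * A) * S := by rw [h1, ← hAS]; simp only [Matrix.mul_assoc]
      _ = K := by rw [hA]
  have hrow : ∀ j, K i j = 0 := by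
    intro j
    have h1 := congrFun (congrFun hDK i) j
    rw [mul_diagonal, diagonal_mul] at h1
    by_cases hij : i = j
    · subst hij
      have h2 := congrFun (congrFun hKt i) i
      rw [transpose_apply, Matrix.neg_apply] at h2
      linear_combination h2 / 2
    · have h3 : (d i * d j - 1) * K i j = 0 := by linear_combination h1
      rcases mul_eq_zero.1 h3 with h | h
      · exfalso
        apply hij
        apply hd
        linear_combination d j * hi - d i * h
      · exact h
  have hdet : K.det = 0 := det_eq_zero_of_row_eq_zero i hrow
  rw [hK, det_mul, det_mul, det_transpose] at hdet
  have hS : S.det ≠ 0 := by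
    intro h
    have := congrArg det hST
    simp [h] at this
  have hJ := (isUnit_det_J l ℂ).ne_zero
  simp_all

lemma exists_good {l : Type*} [Fintype l] [DecidableEq l]
    (A B : Matrix (l ⊕ l) (l ⊕ l) ℝ)
    (hAc : (A.map ((↑) : ℝ → ℂ)).charpoly.roots.toFinset.card = Fintype.card (l ⊕ l))
    (hA : A ∈ symplecticGroup l ℝ) (hB : Commute B A) :
    ∃ c : ℝ, ((c • 1 + A) + B * (c • 1 + sg A)).det ≠ 0 := by
  classical
  obtain ⟨S, T, d, hd, hST, hAS⟩ := exists_diag _ hAc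
  have hB' : Commute (Complex.ofRealHom.mapMatrix B) (Complex.ofRealHom.mapMatrix A) :=
    hB.map _
  obtain ⟨b, hb⟩ := exists_diag_of_commute hd hST hAS hB'
  have hAC : Complex.ofRealHom.mapMatrix A * Complex.ofRealHom.mapMatrix (sg A) = 1 := by
    rw [← map_mul, (mem_iff_sg A).1 hA, map_one]
  have hA' : Complex.ofRealHom.mapMatrix A ∈ symplecticGroup l ℂ := by
    rw [mem_iff_sg, ← sg_map]; exact hAC
  have hsq := diag_sq_ne hd hST hAS hA'
  change Complex.ofRealHom.mapMatrix A * S = S * diagonal d at hAS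
  obtain ⟨c, hc⟩ := Infinite.exists_notMem_finset
    (Finset.univ.image fun i => (-(d i + b i * (d i)⁻¹) / (1 + b i)).re)
  refine ⟨c, fun h0 => ?_⟩
  have hS : S.det ≠ 0 := by
    intro h
    have := congrArg det hST
    simp [h] at this
  have hd0 : ∀ i, d i ≠ 0 := by
    intro i hi
    have h1 := congrArg det hAS
    rw [det_mul, det_mul, det_diagonal, Finset.prod_eq_zero (Finset.mem_univ i) hi, mul_zero] at h1
    have h2 := congrArg det hAC
    rw [det_mul, det_one] at h2
    rcases mul_eq_zero.1 h1 with h | h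
    · rw [h, zero_mul] at h2; exact zero_ne_one h2
    · exact hS h
  have hsA : Complex.ofRealHom.mapMatrix (sg A) * S = S * diagonal (fun i => (d i)⁻¹) := by
    have h1 : S * diagonal (fun i => (d i)⁻¹) =
        Complex.ofRealHom.mapMatrix (sg A) * (Complex.ofRealHom.mapMatrix A * S) *
          diagonal (fun i => (d i)⁻¹) := by
      rw [← Matrix.mul_assoc, mul_eq_one_comm.1 hAC, one_mul]
    rw [h1, hAS, Matrix.mul_assoc, Matrix.mul_assoc, diagonal_mul_diagonal]
    simp [hd0]
  have hcm : Complex.ofRealHom.mapMatrix (c • (1 : Matrix (l ⊕ l) (l ⊕ l) ℝ)) =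
      (c : ℂ) • 1 := by
    ext i j
    by_cases h : i = j <;> simp [h]
  have hM : Complex.ofRealHom.mapMatrix ((c • 1 + A) + B * (c • 1 + sg A)) * S =
      S * diagonal (fun i => (c + d i) + b i * (c + (d i)⁻¹)) := by
    simp only [map_add, map_mul, hcm, Matrix.add_mul, Matrix.mul_assoc, hsA, hAS]
    rw [Matrix.mul_add, smul_mul_assoc, one_mul, mul_smul_comm, hb, ← Matrix.mul_assoc _ S, hb,
      Matrix.mul_assoc, diagonal_mul_diagonal]
    ext i j
    simp only [Matrix.add_apply, Matrix.smul_apply, mul_diagonal, smul_eq_mul]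
    ring
  have h1 := congrArg det hM
  rw [det_mul, ← RingHom.map_det, h0, map_zero, zero_mul, det_mul, det_diagonal] at h1
  rcases mul_eq_zero.1 h1.symm with h | h
  · exact hS h
  obtain ⟨i, -, hi⟩ := Finset.prod_eq_zero_iff.1 h
  by_cases hbi : 1 + b i = 0
  · apply hsq i
    have : b i = -1 := by linear_combination hbi
    rw [this] at hi
    have h5 := mul_inv_cancel₀ (hd0 i)
    linear_combination d i * hi + h5
  · apply hc
    refine Finset.mem_image.2 ⟨i, Finset.mem_univ i, ?_⟩
    have : -(d i + b i * (d i)⁻¹) / (1 + b i) = c := by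
      rw [div_eq_iff hbi]
      linear_combination -hi
    rw [this, Complex.ofReal_re]

/-- If `A ∈ Sp(2k,ℚ)` has `2k` distinct complex eigenvalues, then the set of rational points of
the centralizer of (the entrywise real image of) `A` in `Sp(2k,ℝ)` is dense in that
centralizer. -/
theorem rational_points_dense_in_symplectic_centralizer (k : ℕ)
    (A : Matrix (Fin k ⊕ Fin k) (Fin k ⊕ Fin k) ℚ)
    (hAsp : A ∈ Matrix.symplecticGroup (Fin k) ℚ)
    (hA : ((A.map ((↑) : ℚ → ℂ)).charpoly.roots).toFinset.card = 2 * k) :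
    Dense (X := {B : Matrix.symplecticGroup (Fin k) ℝ //
        (B : Matrix (Fin k ⊕ Fin k) (Fin k ⊕ Fin k) ℝ) * A.map ((↑) : ℚ → ℝ)
          = A.map ((↑) : ℚ → ℝ) * (B : Matrix (Fin k ⊕ Fin k) (Fin k ⊕ Fin k) ℝ)})
      {B | ∀ i j,
        ((B : Matrix.symplecticGroup (Fin k) ℝ) : Matrix (Fin k ⊕ Fin k) (Fin k ⊕ Fin k) ℝ) i j ∈
          Set.range ((↑) : ℚ → ℝ)} := by
  have hmapA : A.map ((↑) : ℚ → ℝ) = (Rat.castHom ℝ).mapMatrix A := rfl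
  rw [hmapA] at *
  set A' := (Rat.castHom ℝ).mapMatrix A with hA'
  have hAsp' : A' ∈ symplecticGroup (Fin k) ℝ := by
    rw [mem_iff_sg, hA', ← sg_map, ← map_mul, (mem_iff_sg A).1 hAsp, map_one]
  have hAc : (A'.map ((↑) : ℝ → ℂ)).charpoly.roots.toFinset.card =
      Fintype.card (Fin k ⊕ Fin k) := by
    have : A'.map ((↑) : ℝ → ℂ) = A.map ((↑) : ℚ → ℂ) := by
      ext i j; simp [hA']
    rw [this, hA]; simp [two_mul]
  refine (Topology.IsInducing.dense_iff
    (Topology.IsInducing.subtypeVal.comp Topology.IsInducing.subtypeVal)).2 ?_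
  rintro ⟨⟨B, hB⟩, hBA⟩
  change Commute B A' at hBA
  rw [mem_closure_iff]
  intro O hO hBO
  change B ∈ O at hBO
  obtain ⟨c, hc⟩ := exists_good A' B hAc hAsp' hBA
  set y := (c • 1 + A') + B * (c • 1 + sg A') with hy
  have hAA := (mem_iff_sg A').1 hAsp'
  have hBB := (mem_iff_sg B).1 hB
  have hsA : Commute (sg A') A' := commute_sg hAsp' (Commute.refl _)
  have hcA : Commute (c • (1 : Matrix (Fin k ⊕ Fin k) (Fin k ⊕ Fin k) ℝ)) A' :=
    (Commute.one_left _).smul_left c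
  have hyA : Commute y A' := (hcA.add_left (Commute.refl _)).add_left
    (hBA.mul_left (hcA.add_left hsA))
  have hBy : B * sg y = y := by
    have h1 : sg y = (c • 1 + sg A') + (c • 1 + A') * sg B := by
      rw [hy, sg_add, sg_mul, sg_add, sg_add, sg_smul_one, sg_sg]
    have h2 : Commute B (c • 1 + A') := ((Commute.one_right B).smul_right c).add_right hBA
    rw [h1, Matrix.mul_add, ← Matrix.mul_assoc, h2.eq, Matrix.mul_assoc _ B, hBB, mul_one, hy,
      add_comm]
  have hcay : cay y = B := by
    rw [cay]
    nth_rewrite 1 [← hBy]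
    rw [Matrix.mul_assoc, cay_inv y hc, mul_one]
  obtain ⟨N, v, hv⟩ := exists_poly A' y hAc hyA
  let Y : (Fin N → ℝ) → Matrix (Fin k ⊕ Fin k) (Fin k ⊕ Fin k) ℝ :=
    fun v => ∑ i, v i • A' ^ (i : ℕ)
  have hYv : Y v = y := hv.symm
  have hYc : Continuous Y := by fun_prop
  have hsYc : Continuous fun v => sg (Y v) := by unfold sg; fun_prop
  have hYd : Continuous fun v => (Y v).det := hYc.matrix_det
  have hF : ContinuousAt (fun v => cay (Y v)) v := by
    unfold cay
    have h1 : ContinuousAt (fun v => (sg (Y v)).det⁻¹) v :=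
      ContinuousAt.inv₀ hsYc.matrix_det.continuousAt (by rw [sg_det, hYv]; exact hc)
    have h2 : ContinuousAt (fun v => (sg (Y v)).adjugate) v :=
      hsYc.matrix_adjugate.continuousAt
    exact hYc.continuousAt.mul (h1.smul h2)
  have hev : ∀ᶠ w in nhds v, cay (Y w) ∈ O ∧ (Y w).det ≠ 0 := by
    refine (hF.eventually_mem (hO.mem_nhds ?_)).and (hYd.continuousAt.eventually_ne ?_)
    · simpa only [hYv, hcay] using hBO
    · rw [hYv]; exact hc
  have hdense : DenseRange (Pi.map (fun _ : Fin N => ((↑) : ℚ → ℝ))) :=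
    DenseRange.piMap fun _ => Rat.denseRange_cast
  obtain ⟨U, hU, hUo, hvU⟩ := eventually_nhds_iff.1 hev
  obtain ⟨q, hq⟩ := hdense.exists_mem_open hUo ⟨v, hvU⟩
  obtain ⟨hqO, hqd⟩ := hU _ hq
  set w := Pi.map (fun _ : Fin N => ((↑) : ℚ → ℝ)) q with hw
  have hcomm : ∀ X, Commute X A' → Commute X (Y w) := by
    intro X hX
    refine Commute.sum_right _ _ _ fun i _ => (hX.pow_right _).smul_right _
  have hYA : Commute (Y w) A' := (hcomm A' (Commute.refl _)).symm
  obtain ⟨hm, hmA⟩ := cay_mem hAsp' hYA (hcomm _ (commute_sg hAsp' hYA)) hqd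
  refine ⟨_, hqO, ⟨⟨⟨cay (Y w), hm⟩, hmA⟩, ?_, rfl⟩⟩
  have hrat : Y w = (Rat.castHom ℝ).mapMatrix (∑ i, q i • A ^ (i : ℕ)) := by
    simp only [Y, map_sum, hA']
    refine Finset.sum_congr rfl fun i _ => ?_
    rw [← map_pow]
    ext a b
    simp [hw]
  intro i j
  change cay (Y w) i j ∈ _
  rw [hrat, ← cay_map]
  exact ⟨_, rfl⟩
end

section
/- The centralizer of a regular semisimple element of SL(n,ℂ) is connected: if A ∈ SL(n,ℂ) has n distinct eigenvalues (its characteristic polynomial has n pairwise distinct roots in ℂ), then the centralizer {B ∈ SL(n,ℂ) : B * A = A * B}, with the subspace topology from the space of n×n complex matrices, is a connected topological space. -/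
theorem exists_diagonalization (n : ℕ) (A : Matrix (Fin n) (Fin n) ℂ)
    (hA : (A.charpoly.roots).toFinset.card = n) :
    ∃ (P Q : Matrix (Fin n) (Fin n) ℂ) (d : Fin n → ℂ), P * Q = 1 ∧ Q * P = 1 ∧
      Function.Injective d ∧ A = P * Matrix.diagonal d * Q := by
  let e := (A.charpoly.roots.toFinset.equivFinOfCardEq hA).symm
  let d : Fin n → ℂ := fun i => (e i : ℂ)
  have hd : Function.Injective d := Subtype.val_injective.comp e.injective
  have hev : ∀ i, ∃ v, Module.End.HasEigenvector (Matrix.toLin' A) (d i) v := by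
    intro i
    have h1 : d i ∈ A.charpoly.roots := Multiset.mem_toFinset.mp (e i).2
    have h2 : (Matrix.toLin' A).charpoly.IsRoot (d i) := by
      rw [Matrix.charpoly_toLin']
      exact (Polynomial.mem_roots'.mp h1).2
    exact ((Module.End.hasEigenvalue_iff_isRoot_charpoly _ _).mpr h2).exists_hasEigenvector
  choose v hv using hev
  have hli := Module.End.eigenvectors_linearIndependent' (Matrix.toLin' A) d hd v hv
  let P : Matrix (Fin n) (Fin n) ℂ := Matrix.of fun i j => v j i
  have hP : IsUnit P := Matrix.linearIndependent_cols_iff_isUnit.mp hli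
  have hdet : IsUnit P.det := (Matrix.isUnit_iff_isUnit_det P).mp hP
  have hAP : A * P = P * Matrix.diagonal d := by
    ext i j
    have h := congrFun (hv j).apply_eq_smul i
    rw [Matrix.mul_diagonal]
    simp only [Matrix.toLin'_apply, Pi.smul_apply, smul_eq_mul] at h
    rw [mul_comm]
    exact h
  refine ⟨P, P⁻¹, d, Matrix.mul_nonsing_inv _ hdet, Matrix.nonsing_inv_mul _ hdet, hd, ?_⟩
  rw [← hAP, Matrix.mul_assoc, Matrix.mul_nonsing_inv _ hdet, Matrix.mul_one]

theorem exists_log_sum_zero (n : ℕ) (c : Fin n → ℂ) (hc : ∏ i, c i = 1) :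
    ∃ x : Fin n → ℂ, ∑ i, x i = 0 ∧ ∀ i, Complex.exp (x i) = c i := by
  cases n with
  | zero => exact ⟨0, by simp, fun i => i.elim0⟩
  | succ m =>
    have hne : ∀ i, c i ≠ 0 := by
      intro i hi
      rw [Finset.prod_eq_zero (Finset.mem_univ i) hi] at hc
      exact zero_ne_one hc
    have hs : Complex.exp (∑ i, Complex.log (c i)) = 1 := by
      rw [Complex.exp_sum, ← hc]
      exact Finset.prod_congr rfl fun i _ => Complex.exp_log (hne i)
    refine ⟨fun i => Complex.log (c i) - Pi.single (M := fun _ => ℂ) 0 (∑ i, Complex.log (c i)) i,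
      ?_, ?_⟩
    · rw [Finset.sum_sub_distrib, Finset.sum_pi_single']
      simp
    · intro i
      rw [Complex.exp_sub, Complex.exp_log (hne i)]
      by_cases h : i = 0
      · subst h
        rw [Pi.single_eq_same, hs, div_one]
      · rw [Pi.single_eq_of_ne h, Complex.exp_zero, div_one]

/-- The centralizer of a regular semisimple element of `SL(n,ℂ)` is connected. -/
theorem centralizer_connected (n : ℕ) (A : Matrix.SpecialLinearGroup (Fin n) ℂ)
    (hA : (((A : Matrix (Fin n) (Fin n) ℂ)).charpoly.roots).toFinset.card = n) :
    ConnectedSpace {B : Matrix.SpecialLinearGroup (Fin n) ℂ // B * A = A * B} := by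
  obtain ⟨P, Q, d, hPQ, hQP, hd, hAd⟩ := exists_diagonalization n A hA
  let S : Submodule ℝ (Fin n → ℂ) := LinearMap.ker (∑ i, LinearMap.proj (R := ℝ) (φ := fun _ => ℂ) i)
  have hS : ∀ x : Fin n → ℂ, x ∈ S ↔ ∑ i, x i = 0 := by
    intro x
    simp [S, LinearMap.sum_apply]
  let F : (Fin n → ℂ) → Matrix (Fin n) (Fin n) ℂ :=
    fun x => P * Matrix.diagonal (fun i => Complex.exp (x i)) * Q
  have hFc : Continuous F := by
    refine (continuous_const.matrix_mul (Continuous.matrix_diagonal ?_)).matrix_mul continuous_const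
    fun_prop
  have hdetPQ : P.det * Q.det = 1 := by rw [← Matrix.det_mul, hPQ, Matrix.det_one]
  have hFdet : ∀ x : S, (F x).det = 1 := by
    intro x
    simp only [F, Matrix.det_mul, Matrix.det_diagonal]
    rw [← Complex.exp_sum, (hS _).mp x.2, Complex.exp_zero, mul_one, hdetPQ]
  have hconj : ∀ u w : Fin n → ℂ, (P * Matrix.diagonal u * Q) * (P * Matrix.diagonal w * Q) =
      P * Matrix.diagonal (fun i => u i * w i) * Q := by
    intro u w
    rw [← Matrix.diagonal_mul_diagonal]
    calc _ = P * Matrix.diagonal u * (Q * P) * Matrix.diagonal w * Q := by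
          simp only [Matrix.mul_assoc]
      _ = _ := by rw [hQP]; simp only [Matrix.mul_assoc, Matrix.one_mul]
  let G : S → {B : Matrix.SpecialLinearGroup (Fin n) ℂ // B * A = A * B} := fun x =>
    ⟨⟨F x, hFdet x⟩, by
      apply Subtype.ext
      change F x * (A : Matrix (Fin n) (Fin n) ℂ) = (A : Matrix (Fin n) (Fin n) ℂ) * F x
      rw [hAd, hconj, hconj]
      simp only [mul_comm]⟩
  have hG : Continuous G := by
    refine Continuous.subtype_mk ?_ _
    exact continuous_induced_rng.mpr (hFc.comp continuous_subtype_val)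
  have hsurj : Function.Surjective G := by
    rintro ⟨B, hB⟩
    have hB' : (B : Matrix (Fin n) (Fin n) ℂ) * (A : Matrix (Fin n) (Fin n) ℂ) = (A : Matrix (Fin n) (Fin n) ℂ) * (B : Matrix (Fin n) (Fin n) ℂ) :=
      congrArg Subtype.val hB
    set M : Matrix (Fin n) (Fin n) ℂ := (B : Matrix (Fin n) (Fin n) ℂ) with hM
    have hcomm : (Q * M * P) * Matrix.diagonal d = Matrix.diagonal d * (Q * M * P) := by
      have h1 : Matrix.diagonal d = Q * (A : Matrix (Fin n) (Fin n) ℂ) * P := by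
        rw [hAd]
        calc _ = 1 * Matrix.diagonal d * 1 := by simp
          _ = (Q * P) * Matrix.diagonal d * (Q * P) := by rw [hQP]
          _ = _ := by simp only [Matrix.mul_assoc]
      rw [h1]
      calc _ = Q * M * (P * Q) * A * P := by simp only [Matrix.mul_assoc]
        _ = Q * (M * A) * P := by rw [hPQ]; simp only [Matrix.mul_assoc, Matrix.one_mul]
        _ = Q * A * (P * Q) * M * P := by
          rw [hB', hPQ]; simp only [Matrix.mul_assoc, Matrix.one_mul]
        _ = _ := by simp only [Matrix.mul_assoc]
    have hdiag : Q * M * P = Matrix.diagonal (fun i => (Q * M * P) i i) := by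
      ext i j
      by_cases hij : i = j
      · subst hij; simp only [Matrix.diagonal_apply_eq]
      · rw [Matrix.diagonal_apply_ne _ hij]
        have h := congrFun (congrFun hcomm i) j
        rw [Matrix.mul_diagonal, Matrix.diagonal_mul] at h
        have h2 : (d j - d i) * (Q * M * P) i j = 0 := by linear_combination h
        rcases mul_eq_zero.mp h2 with h3 | h3
        · exact absurd (hd (sub_eq_zero.mp h3)).symm hij
        · exact h3
    have hprod : ∏ i, (Q * M * P) i i = 1 := by
      rw [← Matrix.det_diagonal, ← hdiag, Matrix.det_mul, Matrix.det_mul]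
      have : M.det = 1 := B.2
      rw [this, mul_one, mul_comm, hdetPQ]
    obtain ⟨x, hx0, hx⟩ := exists_log_sum_zero n _ hprod
    refine ⟨⟨x, (hS x).mpr hx0⟩, ?_⟩
    apply Subtype.ext
    apply Subtype.ext
    change P * Matrix.diagonal (fun i => Complex.exp (x i)) * Q = M
    simp only [hx]
    rw [← hdiag]
    calc _ = (P * Q) * M * (P * Q) := by simp only [Matrix.mul_assoc]
      _ = M := by rw [hPQ]; simp
  have : ConnectedSpace S := inferInstance
  exact hsurj.connectedSpace hG
end

section
/- The centralizer of a regular semisimple element of the complex symplectic group is connected: if A ∈ Sp(2k,ℂ) has 2k distinct eigenvalues (its characteristic polynomial has 2k pairwise distinct roots in ℂ), then the centralizer {B ∈ Sp(2k,ℂ) : B * A = A * B}, with the subspace topology from the space of 2k×2k complex matrices, is a connected topological space. -/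
open Matrix in
/-- A matrix with as many distinct eigenvalues as its size is diagonalizable. -/
lemma exists_diag_of_distinct {ι : Type} [Fintype ι] [DecidableEq ι] (A : Matrix ι ι ℂ)
    (hA : A.charpoly.roots.toFinset.card = Fintype.card ι) :
    ∃ (P Q : Matrix ι ι ℂ) (d : ι → ℂ), P * Q = 1 ∧ Q * P = 1 ∧ Function.Injective d ∧
      A * P = P * diagonal d := by
  have e : ι ≃ A.charpoly.roots.toFinset :=
    Fintype.equivOfCardEq (by rw [Fintype.card_coe, hA])
  have hv : ∀ i, ∃ v : ι → ℂ, Module.End.HasEigenvector (Matrix.toLin' A) (e i : ℂ) v := by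
    intro i
    have h1 : (e i : ℂ) ∈ A.charpoly.roots := Multiset.mem_toFinset.1 (e i).2
    have h2 : A.charpoly.IsRoot (e i : ℂ) := Polynomial.isRoot_of_mem_roots h1
    have h3 : Module.End.HasEigenvalue (Matrix.toLin' A) (e i : ℂ) := by
      rw [Module.End.hasEigenvalue_iff_isRoot_charpoly, Matrix.charpoly_toLin']
      exact h2
    exact h3.exists_hasEigenvector
  choose v hv using hv
  have hinj : Function.Injective (fun i => (e i : ℂ)) :=
    Subtype.val_injective.comp e.injective
  have hli : LinearIndependent ℂ v :=
    Module.End.eigenvectors_linearIndependent' (Matrix.toLin' A) (fun i => (e i : ℂ)) hinj v hv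
  have hu : IsUnit (Matrix.of v) := Matrix.linearIndependent_rows_iff_isUnit.1 hli
  have hu' : IsUnit (Matrix.of v)ᵀ := (Matrix.isUnit_transpose _).2 hu
  have hd := (Matrix.isUnit_iff_isUnit_det _).1 hu'
  refine ⟨(Matrix.of v)ᵀ, (Matrix.of v)ᵀ⁻¹, fun i => (e i : ℂ), Matrix.mul_nonsing_inv _ hd,
    Matrix.nonsing_inv_mul _ hd, hinj, ?_⟩
  ext i j
  have h := congrFun (hv j).apply_eq_smul i
  rw [Matrix.toLin'_apply] at h
  rw [Matrix.mul_diagonal]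
  simpa [Matrix.mul_apply, Matrix.mulVec, dotProduct, mul_comm] using h

open Matrix in
/-- The centralizer of a regular semisimple element of the complex symplectic group
`Sp(2k,ℂ)` is connected. -/
theorem symplectic_centralizer_connected (k : ℕ) (A : Matrix.symplecticGroup (Fin k) ℂ)
    (hA : (((A : Matrix (Fin k ⊕ Fin k) (Fin k ⊕ Fin k) ℂ)).charpoly.roots).toFinset.card
        = 2 * k) :
    ConnectedSpace {B : Matrix.symplecticGroup (Fin k) ℂ // B * A = A * B} := by
  classical
  obtain ⟨A, hAs⟩ := A
  obtain ⟨P, Q, d, hPQ, hQP, hd, hAP⟩ := exists_diag_of_distinct A (by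
    simpa [two_mul] using hA)
  have hAeq : A = P * diagonal d * Q := by
    rw [← hAP, Matrix.mul_assoc, hPQ, Matrix.mul_one]
  set M := Pᵀ * J (Fin k) ℂ * P with hM
  have hPQt : Qᵀ * Pᵀ = 1 := by rw [← Matrix.transpose_mul, hPQ, Matrix.transpose_one]
  have hQPt : Pᵀ * Qᵀ = 1 := by rw [← Matrix.transpose_mul, hQP, Matrix.transpose_one]
  have hJ : Qᵀ * M * Q = J (Fin k) ℂ := by
    calc Qᵀ * M * Q = (Qᵀ * Pᵀ) * J (Fin k) ℂ * (P * Q) := by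
          simp only [hM, Matrix.mul_assoc]
      _ = _ := by rw [hPQt, hPQ, Matrix.one_mul, Matrix.mul_one]
  -- symplecticity in the eigenbasis
  have key : ∀ c : Fin k ⊕ Fin k → ℂ,
      P * diagonal c * Q ∈ symplecticGroup (Fin k) ℂ ↔ ∀ i j, c i * M i j * c j = M i j := by
    intro c
    have h1 : (P * diagonal c * Q)ᵀ * J (Fin k) ℂ * (P * diagonal c * Q)
        = Qᵀ * (diagonal c * M * diagonal c) * Q := by
      simp only [hM, Matrix.transpose_mul, Matrix.diagonal_transpose, Matrix.mul_assoc]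
    have h2 : (∀ i j, c i * M i j * c j = M i j) ↔ diagonal c * M * diagonal c = M := by
      rw [← Matrix.ext_iff]
      simp [Matrix.diagonal_mul, Matrix.mul_diagonal]
    rw [SymplecticGroup.mem_iff', h1, h2]
    constructor
    · intro h
      have h3 : ∀ X : Matrix (Fin k ⊕ Fin k) (Fin k ⊕ Fin k) ℂ, Pᵀ * (Qᵀ * X * Q) * P = X := by
        intro X
        calc Pᵀ * (Qᵀ * X * Q) * P = (Pᵀ * Qᵀ) * X * (Q * P) := by
              simp only [Matrix.mul_assoc]
          _ = X := by rw [hQPt, hQP, Matrix.one_mul, Matrix.mul_one]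
      rw [← h3 (diagonal c * M * diagonal c), h]
    · intro h
      rw [h, hJ]
  have hdM : ∀ i j, M i j ≠ 0 → d i * d j = 1 := by
    intro i j hij
    have h := (key d).1 (hAeq ▸ hAs) i j
    apply mul_right_cancel₀ hij
    linear_combination h
  have hanti : ∀ i j, M j i = - M i j := by
    intro i j
    have : Mᵀ = -M := by
      simp [hM, Matrix.transpose_mul, Matrix.mul_assoc]
    exact congrFun (congrFun this i) j
  have hdet : M.det ≠ 0 := by
    have h1 : P.det ≠ 0 := by
      intro h
      have := congrArg Matrix.det hPQ
      simp [h] at this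
    have h2 := (isUnit_det_J (Fin k) ℂ).ne_zero
    simp [hM, Matrix.det_mul, h1, h2]
  have hrow : ∀ i, ∃ j, M i j ≠ 0 := by
    intro i
    by_contra! h
    exact hdet (Matrix.det_eq_zero_of_row_eq_zero i h)
  choose σ hσ using hrow
  have hσu : ∀ i j, M i j ≠ 0 → j = σ i := by
    intro i j hij
    have h1 := hdM i j hij
    have h2 := hdM i (σ i) (hσ i)
    apply hd
    have h3 : d i ≠ 0 := by
      intro h
      simp [h] at h1
    exact mul_left_cancel₀ h3 (h1.trans h2.symm)
  have hσσ : ∀ i, σ (σ i) = i := by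
    intro i
    refine (hσu _ _ ?_).symm
    rw [hanti i (σ i)]
    exact neg_ne_zero.2 (hσ i)
  have hσne : ∀ i, σ i ≠ i := by
    intro i h
    have h1 := hanti i i
    have h2 := hσ i
    rw [h] at h2
    exact h2 (self_eq_neg.1 h1)
  have key2 : ∀ c : Fin k ⊕ Fin k → ℂ,
      P * diagonal c * Q ∈ symplecticGroup (Fin k) ℂ ↔ ∀ i, c i * c (σ i) = 1 := by
    intro c
    rw [key]
    constructor
    · intro h i
      apply mul_right_cancel₀ (hσ i)
      linear_combination h i (σ i)
    · intro h i j
      by_cases hij : M i j = 0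
      · simp [hij]
      · rw [hσu i j hij]
        linear_combination (M i (σ i)) * h i
  let f := Fintype.equivFin (Fin k ⊕ Fin k)
  let c : (Fin k ⊕ Fin k → ℂ) → (Fin k ⊕ Fin k → ℂ) := fun l i =>
    if f i < f (σ i) then Complex.exp (l i) else Complex.exp (- l (σ i))
  have hc : ∀ l i, c l i * c l (σ i) = 1 := by
    intro l i
    have hne : f i ≠ f (σ i) := fun h => hσne i (f.injective h).symm
    simp only [c, hσσ]
    rcases lt_or_gt_of_ne hne with h | h
    · rw [if_pos h, if_neg (not_lt.2 h.le), ← Complex.exp_add]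
      simp
    · rw [if_pos h, if_neg (not_lt.2 h.le), ← Complex.exp_add]
      simp
  have hcc : Continuous c := by
    refine continuous_pi fun i => ?_
    simp only [c]
    split_ifs <;> fun_prop
  let F : (Fin k ⊕ Fin k → ℂ) →
      {B : Matrix.symplecticGroup (Fin k) ℂ // B * ⟨A, hAs⟩ = ⟨A, hAs⟩ * B} := fun l =>
    ⟨⟨P * diagonal (c l) * Q, (key2 _).2 (hc l)⟩, by
      apply Subtype.ext
      change P * diagonal (c l) * Q * A = A * (P * diagonal (c l) * Q)
      have h4 : ∀ a b : Fin k ⊕ Fin k → ℂ, P * diagonal a * Q * (P * diagonal b * Q)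
          = P * diagonal (fun i => a i * b i) * Q := by
        intro a b
        calc P * diagonal a * Q * (P * diagonal b * Q)
            = P * diagonal a * (Q * P) * diagonal b * Q := by simp only [Matrix.mul_assoc]
          _ = _ := by rw [hQP, Matrix.mul_one, Matrix.mul_assoc P, Matrix.diagonal_mul_diagonal]
      rw [hAeq, h4, h4]
      simp only [mul_comm]⟩
  have hF : Continuous F := by
    refine Continuous.subtype_mk (Continuous.subtype_mk ?_ _) _
    exact (continuous_const.matrix_mul hcc.matrix_diagonal).matrix_mul continuous_const
  have hFs : Function.Surjective F := by
    rintro ⟨⟨B, hB⟩, hBA⟩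
    have hBA' : B * A = A * B := congrArg Subtype.val hBA
    set E := Q * B * P with hE
    have hcomm : E * diagonal d = diagonal d * E := by
      have h1 : E * diagonal d = Q * (B * A) * P := by
        rw [Matrix.mul_assoc Q, Matrix.mul_assoc B, hAP]
        simp only [hE, Matrix.mul_assoc]
      have h2 : diagonal d * E = Q * (A * B) * P := by
        calc diagonal d * E = (Q * P) * (diagonal d * E) := by rw [hQP, Matrix.one_mul]
          _ = _ := by rw [hAeq]; simp only [hE, Matrix.mul_assoc]
      rw [h1, h2, hBA']
    have hEd : E = diagonal (fun i => E i i) := by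
      ext i j
      by_cases hij : i = j
      · subst hij
        simp
      · rw [Matrix.diagonal_apply_ne _ hij]
        have h := congrFun (congrFun hcomm i) j
        rw [Matrix.mul_diagonal, Matrix.diagonal_mul] at h
        have h5 : (d i - d j) * E i j = 0 := by linear_combination -h
        exact (mul_eq_zero.1 h5).resolve_left (sub_ne_zero.2 fun h => hij (hd h))
    have hBE : B = P * diagonal (fun i => E i i) * Q := by
      rw [← hEd]
      calc B = (P * Q) * B * (P * Q) := by rw [hPQ, Matrix.one_mul, Matrix.mul_one]
        _ = _ := by simp only [hE, Matrix.mul_assoc]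
    have hEE := (key2 (fun i => E i i)).1 (hBE ▸ hB)
    have hE0 : ∀ i, E i i ≠ 0 := fun i h => by
      have := hEE i
      simp [h] at this
    refine ⟨fun i => Complex.log (E i i), ?_⟩
    apply Subtype.ext
    apply Subtype.ext
    change P * diagonal (c _) * Q = B
    rw [hBE]
    congr 3
    ext i
    simp only [c]
    split_ifs
    · exact Complex.exp_log (hE0 i)
    · rw [Complex.exp_neg, Complex.exp_log (hE0 _)]
      exact (eq_inv_of_mul_eq_one_left (hEE i)).symm
  exact hFs.connectedSpace hF
end

section
/- The group Γ = ⟨a, b | (aba⁻¹b⁻¹)²⟩ contains a genus-2 surface subgroup of index 4: letting Γ be the presented group with generators a, b and single relator (a*b*a⁻¹*b⁻¹)², there exists a subgroup H of Γ with index 4 such that H is isomorphic to the genus-2 surface group Σ₂. -/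
/-- The single relator `(a * b * a⁻¹ * b⁻¹)^2` in the free group on two generators. -/
def magnusRelator : FreeGroup (Fin 2) :=
  (FreeGroup.of 0 * FreeGroup.of 1 * (FreeGroup.of 0)⁻¹ * (FreeGroup.of 1)⁻¹) ^ 2

/-- The group `Γ = ⟨a, b ∣ (aba⁻¹b⁻¹)²⟩`. -/
abbrev MagnusGroup : Type := PresentedGroup ({magnusRelator} : Set (FreeGroup (Fin 2)))

/-- The surface relator `[a₁,b₁] ⋯ [a_g,b_g]` in the free group on `a₁,b₁,…,a_g,b_g`. -/
def surfaceRelator (g : ℕ) : FreeGroup (Fin g ⊕ Fin g) :=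
  (List.ofFn fun i : Fin g =>
    FreeGroup.of (Sum.inl i) * FreeGroup.of (Sum.inr i) *
      (FreeGroup.of (Sum.inl i))⁻¹ * (FreeGroup.of (Sum.inr i))⁻¹).prod

/-- The genus-`g` surface group `Σ_g = ⟨a₁,b₁,…,a_g,b_g ∣ [a₁,b₁]⋯[a_g,b_g]⟩`. -/
abbrev SurfaceGroup (g : ℕ) : Type :=
  PresentedGroup ({surfaceRelator g} : Set (FreeGroup (Fin g ⊕ Fin g)))

/-- The surface relation in terms of four elements of a group. -/
def SurfRel {G : Type} [Group G] (x₁ y₁ x₂ y₂ : G) : Prop :=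
  x₁ * y₁ * x₁⁻¹ * y₁⁻¹ * (x₂ * y₂ * x₂⁻¹ * y₂⁻¹) = 1

/-- The cocycle of `a`. -/
def cocA {G : Type} [Group G] (y₁ y₂ : G) : Fin 4 → G := ![1, 1, 1, y₁⁻¹ * y₂⁻¹]

/-- The cocycle of `b`. -/
def cocB {G : Type} [Group G] (x₁ y₁ x₂ : G) : Fin 4 → G :=
  ![y₁⁻¹ * x₂ * y₁, x₁, y₁⁻¹ * x₂, y₁⁻¹ * x₂ * y₁ * x₁⁻¹ * (y₁⁻¹ * x₂)]

/-- The permutation of the four cosets induced by `b`. -/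
def sigB : Fin 4 → Fin 4 := ![0, 3, 2, 1]

theorem sigB_sigB (i : Fin 4) : sigB (sigB i) = i := by
  fin_cases i <;> rfl

/-- The action of `a` on `Fin 4 × G`. -/
def permA {G : Type} [Group G] (y₁ y₂ : G) : Equiv.Perm (Fin 4 × G) where
  toFun z := (z.1 + 1, cocA y₁ y₂ z.1 * z.2)
  invFun z := (z.1 - 1, (cocA y₁ y₂ (z.1 - 1))⁻¹ * z.2)
  left_inv z := by simp
  right_inv z := by simp

/-- The action of `b` on `Fin 4 × G`. -/
def permB {G : Type} [Group G] (x₁ y₁ x₂ : G) : Equiv.Perm (Fin 4 × G) where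
  toFun z := (sigB z.1, cocB x₁ y₁ x₂ z.1 * z.2)
  invFun z := (sigB z.1, (cocB x₁ y₁ x₂ (sigB z.1))⁻¹ * z.2)
  left_inv z := by simp [sigB_sigB]
  right_inv z := by simp [sigB_sigB]

theorem surf_rel1 {G : Type} [Group G] {x₁ y₁ x₂ y₂ : G} (h : SurfRel x₁ y₁ x₂ y₂) :
    y₁⁻¹ * y₂⁻¹ * x₁ * (y₁⁻¹ * x₂)⁻¹ * (y₁⁻¹ * x₂ * y₁ * x₁⁻¹ * (y₁⁻¹ * x₂)) *
      (y₁⁻¹ * y₂⁻¹)⁻¹ * (y₁⁻¹ * x₂ * y₁)⁻¹ = 1 := by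
  have e : y₁⁻¹ * y₂⁻¹ * x₁ * (y₁⁻¹ * x₂)⁻¹ * (y₁⁻¹ * x₂ * y₁ * x₁⁻¹ * (y₁⁻¹ * x₂)) *
      (y₁⁻¹ * y₂⁻¹)⁻¹ * (y₁⁻¹ * x₂ * y₁)⁻¹ =
      (y₁⁻¹ * y₂⁻¹) * (x₁ * y₁ * x₁⁻¹ * y₁⁻¹ * (x₂ * y₂ * x₂⁻¹ * y₂⁻¹)) *
        (y₁⁻¹ * y₂⁻¹)⁻¹ := by group
  rw [e, show _ = (1 : G) from h]; group

theorem perm_rel {G : Type} [Group G] {x₁ y₁ x₂ y₂ : G} (h : SurfRel x₁ y₁ x₂ y₂) :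
    (permA y₁ y₂ * permB x₁ y₁ x₂ * (permA y₁ y₂)⁻¹ * (permB x₁ y₁ x₂)⁻¹) ^ 2 = 1 := by
  have h1 := surf_rel1 h
  have key : ∀ (i j : Fin 4) (u x : G),
      i = j → u = 1 → (i, u * x) = (j, x) := by
    rintro i j u x rfl rfl; simp
  ext1 ⟨i, x⟩
  let w : Fin 4 → G := fun i => cocA y₁ y₂ (sigB (sigB i - 1)) *
    cocB x₁ y₁ x₂ (sigB i - 1) * (cocA y₁ y₂ (sigB i - 1))⁻¹ * (cocB x₁ y₁ x₂ (sigB i))⁻¹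
  have hw : ∀ (i : Fin 4) (x : G),
      (permA y₁ y₂ * permB x₁ y₁ x₂ * (permA y₁ y₂)⁻¹ * (permB x₁ y₁ x₂)⁻¹) (i, x) =
      (sigB (sigB i - 1) + 1, w i * x) := by
    intro i x
    change (sigB (sigB i - 1) + 1, _) = _
    simp only [w, mul_assoc]
    rfl
  rw [pow_two, Equiv.Perm.mul_apply, hw, hw, ← mul_assoc, Equiv.Perm.one_apply]
  apply key
  · fin_cases i <;> rfl
  · have h20 : w 2 * w 0 = 1 := by
      rw [← h1]
      change y₁⁻¹ * y₂⁻¹ * x₁ * 1⁻¹ * (y₁⁻¹ * x₂)⁻¹ *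
        (1 * (y₁⁻¹ * x₂ * y₁ * x₁⁻¹ * (y₁⁻¹ * x₂)) * (y₁⁻¹ * y₂⁻¹)⁻¹ * (y₁⁻¹ * x₂ * y₁)⁻¹) = _
      group
    have h31 : w 3 * w 1 = 1 := by
      change 1 * (y₁⁻¹ * x₂ * y₁) * 1⁻¹ * x₁⁻¹ *
        (1 * (y₁⁻¹ * x₂) * 1⁻¹ * (y₁⁻¹ * x₂ * y₁ * x₁⁻¹ * (y₁⁻¹ * x₂))⁻¹) = _
      group
    fin_cases i
    · exact h20
    · exact h31
    · exact mul_eq_one_comm.1 h20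
    · exact mul_eq_one_comm.1 h31

theorem phi_t {G : Type} [Group G] {a b : G} (h : (a * b * a⁻¹ * b⁻¹) ^ 2 = 1) :
    b * a⁻¹ * b⁻¹ * a * b = a⁻¹ * b * a := by
  have : a⁻¹ * b * a = (a⁻¹ * (a * b * a⁻¹ * b⁻¹) ^ 2 * a)⁻¹ * (b * a⁻¹ * b⁻¹ * a * b) := by
    rw [pow_two]; group
  rw [this, h]; group

/-- Images of the surface generators. -/
def gX₁ {G : Type} [Group G] (a b : G) : G := a⁻¹ ^ 3 * b * a
/-- Images of the surface generators. -/
def gY₁ {G : Type} [Group G] (a b : G) : G := a⁻¹ ^ 2 * b⁻¹ * a ^ 2 * b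
/-- Images of the surface generators. -/
def gX₂ {G : Type} [Group G] (a b : G) : G := a⁻¹ ^ 2 * b⁻¹ * a ^ 2 * b * a⁻¹ ^ 2 * b * a ^ 2
/-- Images of the surface generators. -/
def gY₂ {G : Type} [Group G] (a b : G) : G := a⁻¹ ^ 4 * b⁻¹ * a⁻¹ ^ 2 * b * a ^ 2

theorem g_rel {G : Type} [Group G] {a b : G} (h : (a * b * a⁻¹ * b⁻¹) ^ 2 = 1) :
    SurfRel (gX₁ a b) (gY₁ a b) (gX₂ a b) (gY₂ a b) := by
  have h1 := phi_t h
  unfold SurfRel gX₁ gY₁ gX₂ gY₂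
  calc _ = a⁻¹ ^ 3 * b * a⁻¹ * b⁻¹ * a ^ 2 * (b * a⁻¹ * b⁻¹ * a * b) * a⁻¹ ^ 2 * b⁻¹ * a ^ 4 := by
        group
    _ = a⁻¹ ^ 4 * (a * b * a⁻¹ * b⁻¹) ^ 2 * a ^ 4 := by rw [h1, pow_two (a * b * a⁻¹ * b⁻¹)]; group
    _ = 1 := by rw [h]; group

theorem g_cocA {G : Type} [Group G] (a b : G) (i : Fin 4) :
    a * a ^ (i : ℕ) = a ^ ((i + 1 : Fin 4) : ℕ) * cocA (gY₁ a b) (gY₂ a b) i := by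
  fin_cases i
  · change a * a ^ 0 = a ^ 1 * 1; group
  · change a * a ^ 1 = a ^ 2 * 1; group
  · change a * a ^ 2 = a ^ 3 * 1; group
  · change a * a ^ 3 = a ^ 0 * ((gY₁ a b)⁻¹ * (gY₂ a b)⁻¹)
    unfold gY₁ gY₂; group

theorem g_cocB {G : Type} [Group G] {a b : G} (h : (a * b * a⁻¹ * b⁻¹) ^ 2 = 1) (i : Fin 4) :
    b * a ^ (i : ℕ) = a ^ (sigB i : ℕ) * cocB (gX₁ a b) (gY₁ a b) (gX₂ a b) i := by
  fin_cases i
  · change b * a ^ 0 = a ^ 0 * ((gY₁ a b)⁻¹ * gX₂ a b * gY₁ a b)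
    unfold gY₁ gX₂; group
  · change b * a ^ 1 = a ^ 3 * gX₁ a b
    unfold gX₁; group
  · change b * a ^ 2 = a ^ 2 * ((gY₁ a b)⁻¹ * gX₂ a b)
    unfold gY₁ gX₂; group
  · change b * a ^ 3 = a ^ 1 * ((gY₁ a b)⁻¹ * gX₂ a b * gY₁ a b * (gX₁ a b)⁻¹ *
      ((gY₁ a b)⁻¹ * gX₂ a b))
    have h1 := phi_t h
    calc _ = a * (a⁻¹ * b * a) * a ^ 2 := by group
      _ = a * (b * a⁻¹ * b⁻¹ * a * b) * a ^ 2 := by rw [h1]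
      _ = _ := by unfold gY₁ gX₂ gX₁; group

/-- The generators of the Magnus group. -/
def mA : MagnusGroup := PresentedGroup.of 0
/-- The generators of the Magnus group. -/
def mB : MagnusGroup := PresentedGroup.of 1

theorem m_rel : (mA * mB * mA⁻¹ * mB⁻¹) ^ 2 = 1 :=
  PresentedGroup.one_of_mem (rels := {magnusRelator}) (Set.mem_singleton _)

/-- Generators of the surface group. -/
def sX (i : Fin 2) : SurfaceGroup 2 := PresentedGroup.of (Sum.inl i)
/-- Generators of the surface group. -/
def sY (i : Fin 2) : SurfaceGroup 2 := PresentedGroup.of (Sum.inr i)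

theorem s_rel : SurfRel (sX 0) (sY 0) (sX 1) (sY 1) := by
  have h := PresentedGroup.one_of_mem (rels := {surfaceRelator 2}) (Set.mem_singleton _)
  have e : surfaceRelator 2 = FreeGroup.of (Sum.inl 0) * FreeGroup.of (Sum.inr 0) *
      (FreeGroup.of (Sum.inl 0))⁻¹ * (FreeGroup.of (Sum.inr 0))⁻¹ *
      (FreeGroup.of (Sum.inl 1) * FreeGroup.of (Sum.inr 1) *
      (FreeGroup.of (Sum.inl 1))⁻¹ * (FreeGroup.of (Sum.inr 1))⁻¹) := by
    simp [surfaceRelator, List.ofFn_succ]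
  have h2 := (congrArg (PresentedGroup.mk {surfaceRelator 2}) e).symm.trans h
  exact h2

/-- The map from the surface group to the Magnus group. -/
def phi : SurfaceGroup 2 →* MagnusGroup :=
  PresentedGroup.toGroup (rels := {surfaceRelator 2})
    (f := Sum.elim ![gX₁ mA mB, gX₂ mA mB] ![gY₁ mA mB, gY₂ mA mB]) (by
      rintro r rfl
      have h := g_rel m_rel
      simpa [surfaceRelator, SurfRel, List.ofFn_succ] using h)

theorem phi_sX0 : phi (sX 0) = gX₁ mA mB := PresentedGroup.toGroup.of _
theorem phi_sX1 : phi (sX 1) = gX₂ mA mB := PresentedGroup.toGroup.of _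
theorem phi_sY0 : phi (sY 0) = gY₁ mA mB := PresentedGroup.toGroup.of _
theorem phi_sY1 : phi (sY 1) = gY₂ mA mB := PresentedGroup.toGroup.of _

/-- The action of the Magnus group on `Fin 4 × SurfaceGroup 2`. -/
def act : MagnusGroup →* Equiv.Perm (Fin 4 × SurfaceGroup 2) :=
  PresentedGroup.toGroup (rels := {magnusRelator})
    (f := ![permA (sY 0) (sY 1), permB (sX 0) (sY 0) (sX 1)]) (by
      rintro r rfl
      have h := perm_rel s_rel
      simpa [magnusRelator] using h)

theorem act_mA : act mA = permA (sY 0) (sY 1) := PresentedGroup.toGroup.of _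
theorem act_mB : act mB = permB (sX 0) (sY 0) (sX 1) := PresentedGroup.toGroup.of _

/-- The equivariant bijection. -/
def theta (z : Fin 4 × SurfaceGroup 2) : MagnusGroup := mA ^ (z.1 : ℕ) * phi z.2

theorem theta_A (z) : theta (act mA z) = mA * theta z := by
  obtain ⟨i, x⟩ := z
  have h := g_cocA mA mB i
  have e : phi (cocA (sY 0) (sY 1) i) = cocA (gY₁ mA mB) (gY₂ mA mB) i := by
    fin_cases i <;> simp [cocA, phi_sY0, phi_sY1]
  rw [act_mA]
  change mA ^ ((i + 1 : Fin 4) : ℕ) * phi (cocA (sY 0) (sY 1) i * x) = mA * (mA ^ (i : ℕ) * phi x)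
  rw [map_mul, e, ← mul_assoc, ← mul_assoc, h]

theorem theta_B (z) : theta (act mB z) = mB * theta z := by
  obtain ⟨i, x⟩ := z
  have h := g_cocB m_rel i
  have e : phi (cocB (sX 0) (sY 0) (sX 1) i) =
      cocB (gX₁ mA mB) (gY₁ mA mB) (gX₂ mA mB) i := by
    fin_cases i <;> simp [cocB, phi_sX0, phi_sX1, phi_sY0]
  rw [act_mB]
  change mA ^ (sigB i : ℕ) * phi (cocB (sX 0) (sY 0) (sX 1) i * x) = mB * (mA ^ (i : ℕ) * phi x)
  rw [map_mul, e, ← mul_assoc, ← mul_assoc, h]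

theorem theta_act (g : MagnusGroup) : ∀ z, theta (act g z) = g * theta z := by
  have hg : g ∈ Subgroup.closure
      (Set.range (PresentedGroup.of : Fin 2 → MagnusGroup)) := by
    rw [PresentedGroup.closure_range_of]; trivial
  induction hg using Subgroup.closure_induction with
  | mem x hx =>
    obtain ⟨i, rfl⟩ := hx
    fin_cases i
    · exact theta_A
    · exact theta_B
  | one => simp
  | mul x y _ _ hx hy => intro z; rw [map_mul, Equiv.Perm.mul_apply, hx, hy, mul_assoc]
  | inv x _ hx =>
    intro z
    have := hx ((act x)⁻¹ z)
    rw [← Equiv.Perm.mul_apply, mul_inv_cancel, Equiv.Perm.one_apply] at this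
    rw [map_inv, this]; simp

theorem perm_gen {G : Type} [Group G] (x₁ y₁ x₂ y₂ x : G) :
    gX₁ (permA y₁ y₂) (permB x₁ y₁ x₂) (0, x) = (0, x₁ * x) ∧
    gX₂ (permA y₁ y₂) (permB x₁ y₁ x₂) (0, x) = (0, x₂ * x) ∧
    gY₁ (permA y₁ y₂) (permB x₁ y₁ x₂) (0, x) = (0, y₁ * x) ∧
    gY₂ (permA y₁ y₂) (permB x₁ y₁ x₂) (0, x) = (0, y₂ * x) := by
  have hA : ∀ i x, permA y₁ y₂ (i, x) = (i + 1, cocA y₁ y₂ i * x) := fun _ _ => rfl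
  have hA' : ∀ i x, (permA y₁ y₂)⁻¹ (i, x) = (i - 1, (cocA y₁ y₂ (i - 1))⁻¹ * x) :=
    fun _ _ => rfl
  have hB : ∀ i x, permB x₁ y₁ x₂ (i, x) = (sigB i, cocB x₁ y₁ x₂ i * x) := fun _ _ => rfl
  have hB' : ∀ i x, (permB x₁ y₁ x₂)⁻¹ (i, x) =
    (sigB i, (cocB x₁ y₁ x₂ (sigB i))⁻¹ * x) := fun _ _ => rfl
  have d1 : (0 - 1 : Fin 4) = 3 := rfl
  have d2 : (3 - 1 : Fin 4) = 2 := rfl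
  have d3 : (2 - 1 : Fin 4) = 1 := rfl
  have d4 : (1 + 1 : Fin 4) = 2 := rfl
  have d7 : (1 - 1 : Fin 4) = 0 := rfl
  have d8 : (0 + 1 : Fin 4) = 1 := rfl
  have s0 : sigB 0 = 0 := rfl
  have s1 : sigB 1 = 3 := rfl
  have s2 : sigB 2 = 2 := rfl
  have a0 : cocA y₁ y₂ 0 = 1 := rfl
  have a1 : cocA y₁ y₂ 1 = 1 := rfl
  have a2 : cocA y₁ y₂ 2 = 1 := rfl
  have a3 : cocA y₁ y₂ 3 = y₁⁻¹ * y₂⁻¹ := rfl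
  have b0 : cocB x₁ y₁ x₂ 0 = y₁⁻¹ * x₂ * y₁ := rfl
  have b1 : cocB x₁ y₁ x₂ 1 = x₁ := rfl
  have b2 : cocB x₁ y₁ x₂ 2 = y₁⁻¹ * x₂ := rfl
  refine ⟨?_, ?_, ?_, ?_⟩ <;>
    simp only [gX₁, gX₂, gY₁, gY₂, pow_succ, pow_zero, one_mul, Equiv.Perm.mul_apply,
      hA, hA', hB, hB', d1, d2, d3, d4, d7, d8, s0, s1, s2,
      a0, a1, a2, a3, b0, b1, b2, Prod.mk.injEq, true_and] <;>
    group

theorem act_phi (g : SurfaceGroup 2) : ∀ x, act (phi g) (0, x) = (0, g * x) := by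
  have hg : g ∈ Subgroup.closure
      (Set.range (PresentedGroup.of : Fin 2 ⊕ Fin 2 → SurfaceGroup 2)) := by
    rw [PresentedGroup.closure_range_of]; trivial
  induction hg using Subgroup.closure_induction with
  | mem x hx =>
    have hX₁ : act (gX₁ mA mB) = gX₁ (act mA) (act mB) := by simp [gX₁]
    have hX₂ : act (gX₂ mA mB) = gX₂ (act mA) (act mB) := by simp [gX₂]
    have hY₁ : act (gY₁ mA mB) = gY₁ (act mA) (act mB) := by simp [gY₁]
    have hY₂ : act (gY₂ mA mB) = gY₂ (act mA) (act mB) := by simp [gY₂]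
    rw [act_mA, act_mB] at hX₁ hX₂ hY₁ hY₂
    intro z
    obtain ⟨h1, h2, h3, h4⟩ := perm_gen (sX 0) (sY 0) (sX 1) (sY 1) z
    obtain ⟨i | i, rfl⟩ := hx <;> fin_cases i
    · change act (phi (sX 0)) (0, z) = (0, sX 0 * z); rw [phi_sX0, hX₁, h1]
    · change act (phi (sX 1)) (0, z) = (0, sX 1 * z); rw [phi_sX1, hX₂, h2]
    · change act (phi (sY 0)) (0, z) = (0, sY 0 * z); rw [phi_sY0, hY₁, h3]
    · change act (phi (sY 1)) (0, z) = (0, sY 1 * z); rw [phi_sY1, hY₂, h4]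
  | one => simp
  | mul x y _ _ hx hy => intro z; rw [map_mul, map_mul, Equiv.Perm.mul_apply, hy, hx, mul_assoc]
  | inv x _ hx =>
    intro z
    rw [map_inv, map_inv, Equiv.Perm.inv_eq_iff_eq, hx]; simp

theorem act_pow (i : Fin 4) (x : SurfaceGroup 2) : act (mA ^ (i : ℕ)) (0, x) = (i, x) := by
  have h : ∀ i : Fin 4, i ≠ 3 → ∀ x, permA (sY 0) (sY 1) (i, x) = (i + 1, x) := by
    intro i hi x
    change (i + 1, cocA (sY 0) (sY 1) i * x) = _
    fin_cases i <;> simp_all [cocA]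
  rw [map_pow, act_mA]
  fin_cases i
  · rfl
  · change permA (sY 0) (sY 1) _ = _; exact h 0 (by decide) x
  · change permA (sY 0) (sY 1) (permA (sY 0) (sY 1) _) = _
    rw [h 0 (by decide), h (0 + 1) (by decide)]; rfl
  · change permA (sY 0) (sY 1) (permA (sY 0) (sY 1) (permA (sY 0) (sY 1) _)) = _
    rw [h 0 (by decide), h (0 + 1) (by decide), h (0 + 1 + 1) (by decide)]; rfl

theorem act_theta (z) : act (theta z) (0, 1) = z := by
  rw [theta, map_mul, Equiv.Perm.mul_apply, act_phi, act_pow]; simp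

theorem theta_bij (g : MagnusGroup) : theta (act g (0, 1)) = g := by
  rw [theta_act]; simp [theta]

theorem phi_inj : Function.Injective phi := by
  intro x y h
  have := act_phi x 1
  rw [h, act_phi] at this
  simpa using this.symm

theorem phi_index : phi.range.index = 4 := by
  have e : MagnusGroup ⧸ phi.range ≃ Fin 4 := by
    refine Equiv.symm (Equiv.ofBijective (fun i => (↑(mA ^ (i : ℕ)) : MagnusGroup ⧸ phi.range))
      ⟨?_, ?_⟩)
    · intro i j h
      obtain ⟨x, hx⟩ := QuotientGroup.eq.1 h
      have h2 : theta (j, 1) = theta (i, x) := by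
        simp [theta, hx]
      have := congrArg (fun g => (act g (0, 1)).1) h2
      simp only [act_theta] at this
      exact this.symm
    · intro q
      obtain ⟨g, rfl⟩ := QuotientGroup.mk_surjective q
      refine ⟨(act g (0, 1)).1, ?_⟩
      apply QuotientGroup.eq.2
      refine ⟨(act g (0, 1)).2, ?_⟩
      have h := theta_bij g
      rw [theta] at h
      exact eq_inv_mul_of_mul_eq h
  rw [Subgroup.index, Nat.card_congr e, Nat.card_fin]

/-- `Γ = ⟨a, b ∣ (aba⁻¹b⁻¹)²⟩` contains an index-`4` subgroup isomorphic to the genus-`2`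
surface group. -/
theorem magnus_group_contains_genus_two_surface_group :
    ∃ H : Subgroup MagnusGroup, H.index = 4 ∧ Nonempty (H ≃* SurfaceGroup 2) := by
  exact ⟨phi.range, phi_index, ⟨(MonoidHom.ofInjective phi_inj).symm⟩⟩
end

section
/- The genus-2 surface group contains surface subgroups of every genus: for every g ≥ 2, the genus-2 surface group Σ₂ contains a subgroup of index g - 1 that is isomorphic to the genus-g surface group Σ_g. -/
namespace GenusTwo

/-- The commutator. -/
def cm {G : Type*} [Group G] (x y : G) : G := x * y * x⁻¹ * y⁻¹

lemma map_cm {G H : Type*} [Group G] [Group H] (f : G →* H) (x y : G) :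
    f (cm x y) = cm (f x) (f y) := by
  simp [cm]

/-- Partial products of the commutators `[c i, d i]`. -/
def pp {G : Type*} [Group G] (c d : ℕ → G) : ℕ → G
  | 0 => 1
  | k + 1 => pp c d k * cm (c k) (d k)

lemma ofFn_eq_pp {G : Type*} [Group G] (c d : ℕ → G) (m : ℕ) :
    (List.ofFn fun i : Fin m => cm (c i) (d i)).prod = pp c d m := by
  induction m with
  | zero => simp [pp]
  | succ m ih =>
    rw [List.ofFn_succ', List.concat_eq_append, List.prod_append]
    simp [pp, ih]

lemma map_pp {G H : Type*} [Group G] [Group H] (f : G →* H) (c d : ℕ → G) (m : ℕ) :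
    f (pp c d m) = pp (fun i => f (c i)) (fun i => f (d i)) m := by
  induction m with
  | zero => simp [pp]
  | succ m ih => simp [pp, ih, map_cm]

lemma map_relator {m : ℕ} {G : Type*} [Group G] (f : FreeGroup (Fin m ⊕ Fin m) →* G) :
    f (surfaceRelator m) =
      (List.ofFn fun i : Fin m => cm (f (FreeGroup.of (Sum.inl i)))
        (f (FreeGroup.of (Sum.inr i)))).prod := by
  rw [surfaceRelator, map_list_prod, List.map_ofFn]
  congr 2
  funext i
  simp [cm]

/-- Universal property. -/
def lift {m : ℕ} {G : Type*} [Group G] (u : Fin m ⊕ Fin m → G)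
    (h : (List.ofFn fun i : Fin m => cm (u (Sum.inl i)) (u (Sum.inr i))).prod = 1) :
    SurfaceGroup m →* G :=
  PresentedGroup.toGroup (f := u) (by
    intro r hr
    rw [Set.mem_singleton_iff] at hr
    subst hr
    rw [map_relator]
    simpa using h)

lemma lift_of {m : ℕ} {G : Type*} [Group G] (u : Fin m ⊕ Fin m → G) (h) (x) :
    lift u h (PresentedGroup.of x) = u x := by
  simp [lift]

lemma rel {m : ℕ} : (List.ofFn fun i : Fin m =>
    cm (PresentedGroup.of (Sum.inl i) : SurfaceGroup m) (PresentedGroup.of (Sum.inr i))).prod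
      = 1 := by
  have := map_relator (PresentedGroup.mk ({surfaceRelator m} : Set (FreeGroup (Fin m ⊕ Fin m))))
  rw [show PresentedGroup.mk ({surfaceRelator m} : Set (FreeGroup (Fin m ⊕ Fin m)))
    (surfaceRelator m) = 1 from PresentedGroup.one_of_mem (by simp)] at this
  exact this.symm

/-- Fibrewise left multiplication. -/
def mulPerm {N : ℕ} {G : Type*} [Group G] : (Fin N → G) →* Equiv.Perm (Fin N × G) where
  toFun s :=
    { toFun := fun p => (p.1, s p.1 * p.2)
      invFun := fun p => (p.1, (s p.1)⁻¹ * p.2)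
      left_inv := fun p => by simp
      right_inv := fun p => by simp }
  map_one' := by ext p <;> simp
  map_mul' s t := by ext p <;> simp [mul_assoc]

lemma mulPerm_apply {N : ℕ} {G : Type*} [Group G] (s : Fin N → G) (i : Fin N) (x : G) :
    mulPerm s (i, x) = (i, s i * x) := rfl

/-- The action of the first generator. -/
def aPerm (n : ℕ) {G : Type*} [Group G] (t : G) : Equiv.Perm (Fin (n + 1) × G) :=
  (Equiv.prodCongr (finRotate (n + 1)).symm (Equiv.refl G)) *
    mulPerm (Fin.cons t (fun _ => 1))

lemma aPerm_zero (n : ℕ) {G : Type*} [Group G] (t x : G) :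
    aPerm n t (0, x) = (Fin.last n, t * x) := by
  have : (finRotate (n + 1)).symm 0 = Fin.last n := by
    rw [Equiv.symm_apply_eq]; simp
  simp [aPerm, mulPerm_apply, this]

lemma aPerm_succ (n : ℕ) {G : Type*} [Group G] (t x : G) (i : Fin n) :
    aPerm n t (i.succ, x) = (i.castSucc, x) := by
  have : (finRotate (n + 1)).symm i.succ = i.castSucc := by
    rw [Equiv.symm_apply_eq]; simp
  simp [aPerm, mulPerm_apply, this]

lemma aPerm_pow (n : ℕ) {G : Type*} [Group G] (t x : G) (k : ℕ) (hk : k < n + 1) :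
    (aPerm n t ^ k) (⟨k, hk⟩, x) = (0, x) := by
  induction k with
  | zero => rfl
  | succ k ih =>
    rw [pow_succ, Equiv.Perm.mul_apply]
    have := aPerm_succ n t x ⟨k, by omega⟩
    simp only [Fin.succ_mk, Fin.castSucc_mk] at this
    rw [this, ih]

/-- Key: an abstract criterion. `S` plays the genus-2 group, `G` the genus `n+2` group. -/
lemma key (n : ℕ) {S G : Type*} [Group S] [Group G] (a b c d : S)
    (hgen : Subgroup.closure {a, b, c, d} = (⊤ : Subgroup S))
    (hS : cm a b * cm c d = 1)
    (t b0 : G) (cc dd : ℕ → G) (φ : G →* S)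
    (hφt : φ t = a ^ (n + 1)) (hφb : φ b0 = b)
    (hφc : ∀ i ≤ n, φ (cc i) = a ^ i * c * (a ^ i)⁻¹)
    (hφd : ∀ i ≤ n, φ (dd i) = a ^ i * d * (a ^ i)⁻¹)
    (hGgen : ∀ K : Subgroup G, t ∈ K → b0 ∈ K → (∀ i ≤ n, cc i ∈ K) → (∀ i ≤ n, dd i ∈ K) → K = ⊤)
    (ρ : S →* Equiv.Perm (Fin (n + 1) × G))
    (ρa : ρ a = aPerm n t) (ρb : ρ b = mulPerm fun i => (pp cc dd i)⁻¹ * b0)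
    (ρc : ρ c = mulPerm fun i => cc i) (ρd : ρ d = mulPerm fun i => dd i) :
    φ.range.index = n + 1 ∧ Function.Injective φ := by
  have hcd : cm c d = b * a * b⁻¹ * a⁻¹ := by
    rw [← inv_eq_iff_mul_eq_one] at hS
    rw [← hS]; simp [cm, mul_assoc]
  have hP : ∀ k ≤ n + 1, φ (pp cc dd k) = b * a ^ k * b⁻¹ * (a ^ k)⁻¹ := by
    intro k hk
    induction k with
    | zero => simp [pp]
    | succ k ih =>
      have h1 : cm (a ^ k * c * (a ^ k)⁻¹) (a ^ k * d * (a ^ k)⁻¹) = a ^ k * cm c d * (a ^ k)⁻¹ := by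
        simp only [cm]; group
      rw [pp, map_mul, ih (by omega), map_cm, hφc k (by omega), hφd k (by omega), h1, hcd, pow_succ]
      group
  -- the orbit map
  let ψ : Fin (n + 1) × G → S := fun p => (a ^ (p.1 : ℕ))⁻¹ * φ p.2
  have hψ : ∀ σ : S, ∀ p, ψ (ρ σ p) = σ * ψ p := by
    intro σ
    have hσ : σ ∈ Subgroup.closure {a, b, c, d} := by rw [hgen]; trivial
    induction hσ using Subgroup.closure_induction with
    | mem x hx =>
      rintro ⟨i, x⟩
      have hi : (i : ℕ) ≤ n := by omega
      rcases hx with rfl | rfl | rfl | rfl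
      · rw [ρa]
        refine Fin.cases ?_ (fun j => ?_) i
        · rw [aPerm_zero]; simp [ψ, hφt, pow_succ, mul_assoc]
        · rw [aPerm_succ]; simp [ψ, pow_succ, mul_assoc]
      · rw [ρb, mulPerm_apply]; simp [ψ, hP i (by omega), hφb, mul_assoc]
      · rw [ρc, mulPerm_apply]; simp [ψ, hφc i hi, mul_assoc]
      · rw [ρd, mulPerm_apply]; simp [ψ, hφd i hi, mul_assoc]
    | one => simp
    | mul x y _ _ hx hy => intro p; rw [map_mul, Equiv.Perm.mul_apply, hx, hy, mul_assoc]
    | inv x _ hx =>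
      intro p
      have := hx (ρ x⁻¹ p)
      rw [← Equiv.Perm.mul_apply, ← map_mul] at this
      simp only [mul_inv_cancel, map_one, Equiv.Perm.one_apply] at this
      rw [this]; simp
  have hpow : ∀ (i : ℕ) (hi : i < n + 1) (x : G), ρ (a ^ i)⁻¹ (0, x) = (⟨i, hi⟩, x) := by
    intro i hi x
    rw [map_inv, Equiv.Perm.inv_eq_iff_eq, map_pow, ρa, aPerm_pow]
  have hpow' : ∀ (i : ℕ) (hi : i < n + 1) (x : G), ρ (a ^ i) (⟨i, hi⟩, x) = (0, x) := by
    intro i hi x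
    rw [map_pow, ρa, aPerm_pow]
  have hφρ : ∀ y x, ρ (φ y) (0, x) = (0, y * x) := by
    let K : Subgroup G :=
      { carrier := {y | ∀ x, ρ (φ y) (0, x) = (0, y * x)}
        one_mem' := by simp
        mul_mem' := by
          intro y z hy hz x
          rw [map_mul, map_mul, Equiv.Perm.mul_apply, hz, hy, mul_assoc]
        inv_mem' := by
          intro y hy x
          rw [map_inv, map_inv, Equiv.Perm.inv_eq_iff_eq, hy]; simp }
    have hK : K = ⊤ := by
      apply hGgen
      · intro x
        rw [hφt, pow_succ, map_mul, Equiv.Perm.mul_apply, ρa, aPerm_zero]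
        exact hpow' n (by omega) _
      · intro x
        rw [hφb, ρb, mulPerm_apply]; simp [pp]
      · intro i hi x
        rw [hφc i hi, map_mul, map_mul, Equiv.Perm.mul_apply, Equiv.Perm.mul_apply,
          hpow i (by omega), ρc, mulPerm_apply, hpow']
      · intro i hi x
        rw [hφd i hi, map_mul, map_mul, Equiv.Perm.mul_apply, Equiv.Perm.mul_apply,
          hpow i (by omega), ρd, mulPerm_apply, hpow']
    intro y
    have : y ∈ K := by rw [hK]; trivial
    exact this
  refine ⟨?_, ?_⟩
  · have hbij : Function.Bijective
        (fun i : Fin (n + 1) => (QuotientGroup.mk ((a ^ (i : ℕ))⁻¹) : S ⧸ φ.range)) := by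
      constructor
      · intro i j hij
        obtain ⟨y, hy⟩ := QuotientGroup.eq.mp hij
        have h1 : (a ^ (i : ℕ))⁻¹ * φ y = (a ^ (j : ℕ))⁻¹ := by rw [hy]; group
        have h2 := congrArg (fun s => ρ s (0, 1)) h1
        simp only [map_mul, Equiv.Perm.mul_apply, hφρ] at h2
        rw [hpow i i.2, hpow j j.2] at h2
        exact congrArg Prod.fst h2
      · intro q
        obtain ⟨σ, rfl⟩ := QuotientGroup.mk_surjective q
        refine ⟨(ρ σ (0, 1)).1, ?_⟩
        refine QuotientGroup.eq.mpr ⟨(ρ σ (0, 1)).2, ?_⟩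
        have := hψ σ (0, 1)
        simp only [ψ, map_one, Fin.val_zero, pow_zero, inv_one, mul_one] at this
        rw [inv_inv, ← inv_mul_eq_iff_eq_mul]; exact this
    rw [Subgroup.index, ← Nat.card_eq_of_bijective _ hbij, Nat.card_eq_fintype_card, Fintype.card_fin]
  · intro x y hxy
    have h1 := hφρ x 1
    rw [hxy, hφρ y 1] at h1
    simpa using (congrArg Prod.snd h1).symm

end GenusTwo

open GenusTwo in
/-- The genus-`2` surface group contains, for every `g ≥ 2`, a subgroup of index `g - 1`
isomorphic to the genus-`g` surface group. -/
theorem genus_two_contains_all_genera (g : ℕ) (hg : 2 ≤ g) :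
    ∃ H : Subgroup (SurfaceGroup 2), H.index = g - 1 ∧ Nonempty (H ≃* SurfaceGroup g) := by
  obtain ⟨n, rfl⟩ : ∃ n, g = n + 2 := ⟨g - 2, by omega⟩
  let a : SurfaceGroup 2 := PresentedGroup.of (Sum.inl 0)
  let b : SurfaceGroup 2 := PresentedGroup.of (Sum.inr 0)
  let c : SurfaceGroup 2 := PresentedGroup.of (Sum.inl 1)
  let d : SurfaceGroup 2 := PresentedGroup.of (Sum.inr 1)
  have hS : cm a b * cm c d = 1 := by
    have := rel (m := 2)
    simpa [List.ofFn_succ] using this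
  have hcd : cm c d = b * a * b⁻¹ * a⁻¹ := by
    have h := hS
    rw [← inv_eq_iff_mul_eq_one] at h
    rw [← h]; simp [cm, mul_assoc]
  let t : SurfaceGroup (n + 2) := PresentedGroup.of (Sum.inl 0)
  let b0 : SurfaceGroup (n + 2) := PresentedGroup.of (Sum.inr 0)
  let cc : ℕ → SurfaceGroup (n + 2) := fun i =>
    if h : i < n + 1 then PresentedGroup.of (Sum.inl (Fin.succ ⟨i, h⟩)) else 1
  let dd : ℕ → SurfaceGroup (n + 2) := fun i =>
    if h : i < n + 1 then PresentedGroup.of (Sum.inr (Fin.succ ⟨i, h⟩)) else 1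
  have hcc : ∀ i : Fin (n + 1), cc i = PresentedGroup.of (Sum.inl i.succ) := by
    intro i; exact dif_pos i.2
  have hdd : ∀ i : Fin (n + 1), dd i = PresentedGroup.of (Sum.inr i.succ) := by
    intro i; exact dif_pos i.2
  have hG : cm t b0 * pp cc dd (n + 1) = 1 := by
    have := rel (m := n + 2)
    rw [List.ofFn_succ, List.prod_cons] at this
    rw [← ofFn_eq_pp]
    simp only [hcc, hdd]
    exact this
  -- the map from genus n+2 to genus 2
  let u : Fin (n + 2) ⊕ Fin (n + 2) → SurfaceGroup 2 := Sum.elim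
    (Fin.cons (a ^ (n + 1)) fun i : Fin (n + 1) => a ^ (i : ℕ) * c * (a ^ (i : ℕ))⁻¹)
    (Fin.cons b fun i : Fin (n + 1) => a ^ (i : ℕ) * d * (a ^ (i : ℕ))⁻¹)
  have hu : (List.ofFn fun i : Fin (n + 2) => cm (u (Sum.inl i)) (u (Sum.inr i))).prod = 1 := by
    rw [List.ofFn_succ, List.prod_cons]
    simp only [u, Sum.elim_inl, Sum.elim_inr, Fin.cons_zero, Fin.cons_succ]
    have hP : ∀ k, pp (fun i => a ^ i * c * (a ^ i)⁻¹) (fun i => a ^ i * d * (a ^ i)⁻¹) k =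
        b * a ^ k * b⁻¹ * (a ^ k)⁻¹ := by
      intro k
      induction k with
      | zero => simp [pp]
      | succ k ih =>
        have h1 : cm (a ^ k * c * (a ^ k)⁻¹) (a ^ k * d * (a ^ k)⁻¹)
            = a ^ k * cm c d * (a ^ k)⁻¹ := by
          simp only [cm]; group
        rw [pp, ih, h1, hcd, pow_succ]
        group
    rw [ofFn_eq_pp (fun i => a ^ i * c * (a ^ i)⁻¹) (fun i => a ^ i * d * (a ^ i)⁻¹), hP]
    simp only [cm]; group
  -- the action of genus 2
  let v : Fin 2 ⊕ Fin 2 → Equiv.Perm (Fin (n + 1) × SurfaceGroup (n + 2)) := Sum.elim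
    ![aPerm n t, mulPerm fun i => cc i] ![mulPerm fun i => (pp cc dd i)⁻¹ * b0, mulPerm fun i => dd i]
  have hv : (List.ofFn fun i : Fin 2 => cm (v (Sum.inl i)) (v (Sum.inr i))).prod = 1 := by
    have key2 : aPerm n t * mulPerm (fun i : Fin (n + 1) => (pp cc dd i)⁻¹ * b0) =
        mulPerm (fun i : Fin (n + 1) => (cm (cc i) (dd i))⁻¹ * ((pp cc dd i)⁻¹ * b0)) *
          aPerm n t := by
      ext1 ⟨i, x⟩
      rw [Equiv.Perm.mul_apply, Equiv.Perm.mul_apply, mulPerm_apply]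
      refine Fin.cases ?_ (fun j => ?_) i
      · rw [aPerm_zero, aPerm_zero, mulPerm_apply]
        have h3 : (pp cc dd (n + 1))⁻¹ = cm t b0 := by
          exact (eq_inv_of_mul_eq_one_left hG).symm
        have h2 : (cm (cc n) (dd n))⁻¹ * (pp cc dd n)⁻¹ = cm t b0 := by
          rw [← h3, pp, mul_inv_rev]
        rw [Prod.mk.injEq]
        refine ⟨rfl, ?_⟩
        simp only [Fin.val_last, Fin.val_zero, ← mul_assoc, h2]
        simp [cm, pp]
      · rw [aPerm_succ, aPerm_succ, mulPerm_apply]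
        simp [pp, mul_assoc]
    have e1 : mulPerm (fun i : Fin (n + 1) => (cm (cc i) (dd i))⁻¹ * ((pp cc dd i)⁻¹ * b0)) =
        (cm (mulPerm fun i : Fin (n + 1) => cc i) (mulPerm fun i => dd i))⁻¹ *
          mulPerm (fun i : Fin (n + 1) => (pp cc dd i)⁻¹ * b0) := by
      rw [← map_cm, ← map_inv, ← map_mul]; rfl
    rw [e1] at key2
    simp only [List.ofFn_succ, List.ofFn_zero, List.prod_cons, List.prod_nil, mul_one]
    change cm (aPerm n t) (mulPerm fun i : Fin (n + 1) => (pp cc dd i)⁻¹ * b0) *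
      cm (mulPerm fun i : Fin (n + 1) => cc i) (mulPerm fun i => dd i) = 1
    rw [cm, key2]; group
  have hk := key n a b c d (by
      rw [eq_top_iff, ← PresentedGroup.closure_range_of, Subgroup.closure_le]
      rintro _ ⟨x, rfl⟩
      apply Subgroup.subset_closure
      rcases x with i | i <;> fin_cases i <;> simp [a, b, c, d]) hS t b0 cc dd (lift u hu)
    (by simp [t, lift_of, u]) (by simp [b0, lift_of, u])
    (fun i hi => by rw [hcc ⟨i, by omega⟩, lift_of]; rfl)
    (fun i hi => by rw [hdd ⟨i, by omega⟩, lift_of]; rfl)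
    (fun K h1 h2 h3 h4 => by
      rw [eq_top_iff, ← PresentedGroup.closure_range_of, Subgroup.closure_le]
      rintro _ ⟨x, rfl⟩
      rcases x with i | i
      · refine Fin.cases h1 (fun j => ?_) i
        have := h3 j (by omega)
        rwa [hcc] at this
      · refine Fin.cases h2 (fun j => ?_) i
        have := h4 j (by omega)
        rwa [hdd] at this)
    (lift v hv) (by simp [a, lift_of, v]) (by simp [b, lift_of, v])
    (by simp [c, lift_of, v]) (by simp [d, lift_of, v])
  exact ⟨(lift u hu).range, hk.1, ⟨(MonoidHom.ofInjective hk.2).symm⟩⟩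
end

section
/- Existence of discrete, faithful, rational representations of surface groups in rank one: for every g ≥ 2, there exists an injective group homomorphism ρ from the genus-g surface group Σ_g to SL(2,ℝ) such that every matrix entry of every element of the image of ρ is rational (lies in the range of the coercion ℚ → ℝ) and the image of ρ is a discrete subgroup of SL(2,ℝ). -/
namespace RatSurf

/-! ### Covering: the genus `n+2` group embeds in the genus `2` group -/

/-- Wreath-type permutation of `G × I`. -/
def wr {G I : Type*} [Group G] (t : I → G) (π : Equiv.Perm I) : Equiv.Perm (G × I) where
  toFun y := (t y.2 * y.1, π y.2)
  invFun y := ((t (π.symm y.2))⁻¹ * y.1, π.symm y.2)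
  left_inv y := by simp
  right_inv y := by simp

theorem wr_apply {G I : Type*} [Group G] (t : I → G) (π : Equiv.Perm I) (x : G) (i : I) :
    wr t π (x, i) = (t i * x, π i) := rfl

theorem wr_inv_apply {G I : Type*} [Group G] (t : I → G) (π : Equiv.Perm I) (x : G) (i : I) :
    (wr t π)⁻¹ (x, i) = ((t (π⁻¹ i))⁻¹ * x, π⁻¹ i) := rfl

abbrev ga (g : ℕ) (i : Fin g) : SurfaceGroup g := PresentedGroup.of (Sum.inl i)
abbrev gb (g : ℕ) (i : Fin g) : SurfaceGroup g := PresentedGroup.of (Sum.inr i)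

theorem surface_rel (g : ℕ) :
    (List.ofFn fun i : Fin g => ga g i * gb g i * (ga g i)⁻¹ * (gb g i)⁻¹).prod = 1 := by
  have h : PresentedGroup.mk ({surfaceRelator g} : Set (FreeGroup (Fin g ⊕ Fin g)))
      (surfaceRelator g) = 1 :=
    PresentedGroup.one_of_mem (Set.mem_singleton _)
  rw [surfaceRelator, map_list_prod, List.map_ofFn] at h
  exact h

/-- The universal property of the surface group. -/
theorem exists_surfHom {G : Type*} [Group G] (g : ℕ) (A B : Fin g → G)
    (h : (List.ofFn fun i : Fin g => A i * B i * (A i)⁻¹ * (B i)⁻¹).prod = 1) :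
    ∃ φ : SurfaceGroup g →* G, (∀ i, φ (ga g i) = A i) ∧ (∀ i, φ (gb g i) = B i) := by
  have hr : ∀ r ∈ ({surfaceRelator g} : Set (FreeGroup (Fin g ⊕ Fin g))),
      FreeGroup.lift (Sum.elim A B) r = 1 := by
    intro r hr
    rw [Set.mem_singleton_iff] at hr
    subst hr
    rw [surfaceRelator, map_list_prod, List.map_ofFn, ← h]
    congr 2
    funext i
    simp
  refine ⟨PresentedGroup.toGroup hr, fun i => ?_, fun i => ?_⟩ <;> simp [PresentedGroup.toGroup.of]

theorem surf_induction {g : ℕ} {p : SurfaceGroup g → Prop} (h1 : p 1)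
    (ha : ∀ i, p (ga g i)) (hb : ∀ i, p (gb g i)) (hm : ∀ x y, p x → p y → p (x * y))
    (hi : ∀ x, p x → p x⁻¹) (x : SurfaceGroup g) : p x := by
  obtain ⟨w, rfl⟩ := PresentedGroup.mk_surjective _ x
  induction w using FreeGroup.induction_on with
  | C1 => simpa using h1
  | of s => rcases s with s | s
            · exact ha s
            · exact hb s
  | inv_of s h => rw [map_inv]; exact hi _ h
  | mul x y hx hy => rw [map_mul]; exact hm _ _ hx hy

theorem prod_ofFn_conj {G : Type*} [Group G] (a k : G) (m : ℕ) :
    (List.ofFn fun i : Fin m => a ^ (i : ℕ) * k * (a ^ (i : ℕ))⁻¹).prod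
      = (k * a) ^ m * (a ^ m)⁻¹ := by
  induction m with
  | zero => simp
  | succ m ih =>
    rw [List.ofFn_succ', List.prod_concat]
    simp only [Fin.val_castSucc, Fin.val_last]
    rw [ih, pow_succ (k * a), pow_succ' a]
    group

/-- Action of the genus two group on `Σ_{n+2} × Fin (n+1)`. -/
theorem exists_action (n : ℕ) :
    ∃ (Φ : SurfaceGroup 2 →* Equiv.Perm (SurfaceGroup (n + 2) × Fin (n + 1)))
      (β : Fin (n + 1) → SurfaceGroup (n + 2)), β 0 = gb (n + 2) 0 ∧
      Φ (ga 2 0) = (wr (fun i => if i = Fin.last n then (ga (n + 2) 0)⁻¹ else 1)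
        (finRotate (n + 1)))⁻¹ ∧
      Φ (gb 2 0) = wr β 1 ∧
      Φ (ga 2 1) = wr (fun i => ga (n + 2) i.succ) 1 ∧
      Φ (gb 2 1) = wr (fun i => gb (n + 2) i.succ) 1 := by
  set K : Fin (n + 1) → SurfaceGroup (n + 2) := fun i =>
    ga (n + 2) i.succ * gb (n + 2) i.succ * (ga (n + 2) i.succ)⁻¹ * (gb (n + 2) i.succ)⁻¹ with hK
  set α := (ga (n + 2) 0)⁻¹ with hα
  set β : Fin (n + 1) → SurfaceGroup (n + 2) := fun i =>
    (((List.ofFn K).take i).prod)⁻¹ * gb (n + 2) 0 with hβ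
  have hrel := surface_rel (n + 2)
  rw [List.ofFn_succ, List.prod_cons] at hrel
  change _ * (List.ofFn K).prod = 1 at hrel
  have hβs : ∀ i : Fin (n + 1), (((List.ofFn K).take (i + 1)).prod)⁻¹ * gb (n + 2) 0
      = (K i)⁻¹ * β i := by
    intro i
    rw [hβ, List.prod_take_succ _ _ (by rw [List.length_ofFn]; exact i.2), List.getElem_ofFn,
      mul_inv_rev, mul_assoc]
  set T : Fin (n + 1) → SurfaceGroup (n + 2) := fun i => if i = Fin.last n then α else 1 with hT
  have key : ∀ i, β (finRotate (n + 1) i) * T i = T i * ((K i)⁻¹ * β i) := by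
    intro i
    rw [← hβs]
    by_cases hi : i = Fin.last n
    · subst hi
      rw [finRotate_last]
      have : (List.ofFn K).take (((Fin.last n : Fin (n + 1)) : ℕ) + 1) = List.ofFn K :=
        List.take_of_length_le (by simp)
      rw [this]
      have hP := eq_inv_of_mul_eq_one_right hrel
      rw [hP]
      simp [hβ, hT, hα, mul_assoc]
    · have hv : ((finRotate (n + 1) i : Fin (n + 1)) : ℕ) = i + 1 := by
        rw [coe_finRotate_of_ne_last hi]
      simp only [hT, if_neg hi, hβ, hv, mul_one, one_mul]
  obtain ⟨Φ, h1, h2⟩ := exists_surfHom 2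
    (![(wr T (finRotate (n + 1)))⁻¹, wr (fun i => ga (n + 2) i.succ) 1])
    (![wr β 1, wr (fun i => gb (n + 2) i.succ) 1]) (by
      simp only [List.ofFn_succ, List.ofFn_zero, List.prod_cons, List.prod_nil]
      simp only [Matrix.cons_val_zero, Fin.succ_zero_eq_one, Matrix.cons_val_one, mul_one, inv_inv]
      have e : wr β 1 * wr T (finRotate (n + 1)) =
        wr T (finRotate (n + 1)) * (wr (fun i => ga (n + 2) i.succ) 1 *
          wr (fun i => gb (n + 2) i.succ) 1 * (wr (fun i => ga (n + 2) i.succ) 1)⁻¹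
          * (wr (fun i => gb (n + 2) i.succ) 1)⁻¹)⁻¹ * wr β 1 := by
        ext1 ⟨x, i⟩
        simp only [Equiv.Perm.mul_apply, wr_apply, wr_inv_apply, mul_inv_rev, inv_inv,
          Equiv.Perm.one_apply, inv_one]
        rw [← mul_assoc, key]
        simp [hK, mul_assoc]
      rw [mul_assoc _ (wr β 1), e]
      group)
  refine ⟨Φ, β, ?_, h1 0, h2 0, h1 1, h2 1⟩
  simp [hβ]

theorem exists_cover (n : ℕ) :
    ∃ ι : SurfaceGroup (n + 2) →* SurfaceGroup 2, Function.Injective ι := by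
  have r2 := surface_rel 2
  simp only [List.ofFn_succ, List.ofFn_zero, List.prod_cons, List.prod_nil,
    Fin.succ_zero_eq_one, mul_one] at r2
  set a := ga 2 0
  set b := gb 2 0
  set e := ga 2 1
  set f := gb 2 1
  have hk : e * f * e⁻¹ * f⁻¹ = b * a * b⁻¹ * a⁻¹ := by
    rw [eq_inv_of_mul_eq_one_right r2]; group
  obtain ⟨ι, i1, i2⟩ := exists_surfHom (n + 2)
    (Fin.cons (a ^ (n + 1)) fun i : Fin (n + 1) => a ^ (i : ℕ) * e * (a ^ (i : ℕ))⁻¹)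
    (Fin.cons b fun i : Fin (n + 1) => a ^ (i : ℕ) * f * (a ^ (i : ℕ))⁻¹) (by
      rw [List.ofFn_succ, List.prod_cons]
      simp only [Fin.cons_zero, Fin.cons_succ]
      have : (fun i : Fin (n + 1) => a ^ (i : ℕ) * e * (a ^ (i : ℕ))⁻¹ *
          (a ^ (i : ℕ) * f * (a ^ (i : ℕ))⁻¹) * (a ^ (i : ℕ) * e * (a ^ (i : ℕ))⁻¹)⁻¹ *
          (a ^ (i : ℕ) * f * (a ^ (i : ℕ))⁻¹)⁻¹) =
          fun i : Fin (n + 1) => a ^ (i : ℕ) * (e * f * e⁻¹ * f⁻¹) * (a ^ (i : ℕ))⁻¹ := by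
        funext i; group
      rw [this, prod_ofFn_conj, hk, inv_mul_cancel_right, conj_pow]
      group)
  obtain ⟨Φ, β, hβ, ha, hb, he, hf⟩ := exists_action n
  set S := wr (fun i => if i = Fin.last n then (ga (n + 2) 0)⁻¹ else 1) (finRotate (n + 1)) with hS
  have hup : ∀ (m : ℕ) (hm : m < n + 1) (x : SurfaceGroup (n + 2)),
      (S ^ m) (x, 0) = (x, ⟨m, hm⟩) := by
    intro m
    induction m with
    | zero => intro hm x; simp
    | succ m ih =>
      intro hm x
      rw [pow_succ', Equiv.Perm.mul_apply, ih (by omega), hS, wr_apply]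
      have hne : (⟨m, by omega⟩ : Fin (n + 1)) ≠ Fin.last n := by
        intro h; have := congrArg Fin.val h; simp at this; omega
      rw [if_neg hne, one_mul]
      congr 1
      ext
      rw [coe_finRotate_of_ne_last hne]
  have hwrap : ∀ x, (S ^ (n + 1)) (x, 0) = ((ga (n + 2) 0)⁻¹ * x, 0) := by
    intro x
    rw [pow_succ', Equiv.Perm.mul_apply, hup n (by omega), hS, wr_apply]
    have : (⟨n, by omega⟩ : Fin (n + 1)) = Fin.last n := rfl
    rw [this, if_pos rfl, finRotate_last]
  have main : ∀ w : SurfaceGroup (n + 2), ∀ x, Φ (ι w) (x, 0) = (w * x, 0) := by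
    intro w
    induction w using surf_induction with
    | h1 => intro x; simp
    | ha i =>
      intro x
      rw [i1]
      refine Fin.cases ?_ (fun i => ?_) i
      · simp only [Fin.cons_zero, map_pow]
        rw [ha, inv_pow, Equiv.Perm.inv_eq_iff_eq, hwrap]
        simp
      · simp only [Fin.cons_succ, map_mul, map_pow, map_inv]
        rw [ha, he, inv_pow, inv_inv, Equiv.Perm.mul_apply, Equiv.Perm.mul_apply,
          Equiv.Perm.inv_eq_iff_eq, hup i i.2, hup i i.2, wr_apply]
        rfl
    | hb i =>
      intro x
      rw [i2]
      refine Fin.cases ?_ (fun i => ?_) i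
      · simp only [Fin.cons_zero]
        rw [hb, wr_apply, hβ]; rfl
      · simp only [Fin.cons_succ, map_mul, map_pow, map_inv]
        rw [ha, hf, inv_pow, inv_inv, Equiv.Perm.mul_apply, Equiv.Perm.mul_apply,
          Equiv.Perm.inv_eq_iff_eq, hup i i.2, hup i i.2, wr_apply]
        rfl
    | hm x y hx hy => intro z; rw [map_mul, map_mul, Equiv.Perm.mul_apply, hy, hx, mul_assoc]
    | hi y hy => intro x; rw [map_inv, map_inv, Equiv.Perm.inv_eq_iff_eq, hy]; simp
  refine ⟨ι, (injective_iff_map_eq_one ι).2 fun w hw => ?_⟩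
  have := main w 1
  rw [hw] at this
  simpa using (congrArg Prod.fst this).symm

end RatSurf

namespace RatSurf

/-! ### Ping-pong for the one-holed torus group -/

abbrev SLQ := Matrix.SpecialLinearGroup (Fin 2) ℚ

/-- The linear action on the plane. -/
def act (m : SLQ) (v : ℚ × ℚ) : ℚ × ℚ :=
  (m.1 0 0 * v.1 + m.1 0 1 * v.2, m.1 1 0 * v.1 + m.1 1 1 * v.2)

theorem act_one (v : ℚ × ℚ) : act 1 v = v := by
  simp [act]

theorem act_mul (m n : SLQ) (v : ℚ × ℚ) : act (m * n) v = act m (act n v) := by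
  simp only [act, Matrix.SpecialLinearGroup.coe_mul, Matrix.mul_apply, Fin.sum_univ_two]
  ext <;> ring

theorem act_inv_act (m : SLQ) (v : ℚ × ℚ) : act m⁻¹ (act m v) = v := by
  rw [← act_mul, inv_mul_cancel, act_one]

theorem act_act_inv (m : SLQ) (v : ℚ × ℚ) : act m (act m⁻¹ v) = v := by
  rw [← act_mul, mul_inv_cancel, act_one]

def mA : SLQ := ⟨!![3, 0; 0, 1/3], by norm_num [Matrix.det_fin_two]⟩
def mB : SLQ := ⟨!![5/3, 4/3; 4/3, 5/3], by norm_num [Matrix.det_fin_two]⟩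

theorem act_A (p q : ℚ) : act mA (p, q) = (3 * p, q / 3) := by
  simp only [act, mA]; ext <;> simp; ring
theorem act_A_inv (p q : ℚ) : act mA⁻¹ (p, q) = (p / 3, 3 * q) := by
  have := act_inv_act mA (p / 3, 3 * q)
  rw [act_A] at this
  rw [← this]; congr 2 <;> ring
theorem act_B (p q : ℚ) : act mB (p, q) = ((5 * p + 4 * q) / 3, (4 * p + 5 * q) / 3) := by
  simp only [act, mB]; ext <;> simp <;> ring
theorem act_B_inv (p q : ℚ) : act mB⁻¹ (p, q) = ((5 * p - 4 * q) / 3, (-4 * p + 5 * q) / 3) := by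
  have := act_inv_act mB ((5 * p - 4 * q) / 3, (-4 * p + 5 * q) / 3)
  rw [act_B] at this
  rw [← this]; congr 2 <;> ring

/-- The four quadratic forms. -/
def Q0 (v : ℚ × ℚ) : ℚ := v.1 ^ 2 - 8 * v.1 * v.2 + 9 * v.2 ^ 2
def Q1 (v : ℚ × ℚ) : ℚ := 9 * v.1 ^ 2 - 8 * v.1 * v.2 + v.2 ^ 2
def Q2 (v : ℚ × ℚ) : ℚ := 9 * v.1 ^ 2 + 8 * v.1 * v.2 + v.2 ^ 2
def Q3 (v : ℚ × ℚ) : ℚ := v.1 ^ 2 + 8 * v.1 * v.2 + 9 * v.2 ^ 2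

def QE (v : ℚ × ℚ) : Prop := 0 < Q0 v ∧ 0 < Q1 v ∧ 0 < Q2 v ∧ 0 < Q3 v

theorem Q0_A (v : ℚ × ℚ) : Q0 (act mA v) = Q1 v := by
  obtain ⟨p, q⟩ := v; rw [act_A]; simp only [Q0, Q1]; ring
theorem Q1_A_inv (v : ℚ × ℚ) : Q1 (act mA⁻¹ v) = Q0 v := by
  rw [← Q0_A, act_act_inv]
theorem Q1_B (v : ℚ × ℚ) : Q1 (act mB v) = Q2 v := by
  obtain ⟨p, q⟩ := v; rw [act_B]; simp only [Q1, Q2]; ring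
theorem Q2_B_inv (v : ℚ × ℚ) : Q2 (act mB⁻¹ v) = Q1 v := by
  rw [← Q1_B, act_act_inv]
theorem Q3_A (v : ℚ × ℚ) : Q3 (act mA v) = Q2 v := by
  obtain ⟨p, q⟩ := v; rw [act_A]; simp only [Q3, Q2]; ring
theorem Q2_A_inv (v : ℚ × ℚ) : Q2 (act mA⁻¹ v) = Q3 v := by
  rw [← Q3_A, act_act_inv]
theorem Q0_B (v : ℚ × ℚ) : Q0 (act mB v) = Q3 v := by
  obtain ⟨p, q⟩ := v; rw [act_B]; simp only [Q0, Q3]; ring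
theorem Q3_B_inv (v : ℚ × ℚ) : Q3 (act mB⁻¹ v) = Q0 v := by
  rw [← Q0_B, act_act_inv]

/-- The ping-pong arcs. -/
def Arc : Bool × Bool → ℚ × ℚ → Prop
  | (true, true), v => 9 * v.2 ^ 2 < v.1 ^ 2
  | (true, false), v => 9 * v.1 ^ 2 < v.2 ^ 2
  | (false, true), v => 2 * v.1 ^ 2 - 5 * v.1 * v.2 + 2 * v.2 ^ 2 < 0
  | (false, false), v => 2 * v.1 ^ 2 + 5 * v.1 * v.2 + 2 * v.2 ^ 2 < 0

/-- The letters as matrices. -/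
def lm : Bool × Bool → SLQ
  | (true, true) => mA
  | (true, false) => mA⁻¹
  | (false, true) => mB
  | (false, false) => mB⁻¹

/-- If `v` lies in the good part and in the arc of a letter other than the inverse of `s`,
then `s v` lies in the good part of the arc of `s`. -/
theorem arc_step (s s' : Bool × Bool) (h : s.1 = s'.1 → s.2 = s'.2) (v : ℚ × ℚ)
    (hE : QE v) (hs : Arc s' v) : QE (act (lm s) v) ∧ Arc s (act (lm s) v) := by
  obtain ⟨p, q⟩ := v
  obtain ⟨h0, h1, h2, h3⟩ := hE
  rcases s with ⟨_ | _, _ | _⟩ <;> rcases s' with ⟨_ | _, _ | _⟩ <;> simp at h <;>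
  simp only [lm, act_A, act_B, act_A_inv, act_B_inv, QE, Arc, Q0, Q1, Q2, Q3] at * <;>
  refine ⟨⟨?_, ?_, ?_, ?_⟩, ?_⟩ <;>
  nlinarith [sq_nonneg (p - q), sq_nonneg (p + q), sq_nonneg p, sq_nonneg q]

theorem exit0 (v : ℚ × ℚ) (h : Q0 v < 0) (s : Bool × Bool)
    (hs : s = (true, true) ∨ s = (false, true)) : QE (act (lm s) v) ∧ Arc s (act (lm s) v) := by
  obtain ⟨p, q⟩ := v
  rcases hs with rfl | rfl <;>
  simp only [lm, act_A, act_B, act_A_inv, act_B_inv, QE, Arc, Q0, Q1, Q2, Q3] at * <;>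
  refine ⟨⟨?_, ?_, ?_, ?_⟩, ?_⟩ <;>
  nlinarith [sq_nonneg (p - q), sq_nonneg (p + q), sq_nonneg p, sq_nonneg q]

theorem exit1 (v : ℚ × ℚ) (h : Q1 v < 0) (s : Bool × Bool)
    (hs : s = (true, false) ∨ s = (false, true)) : QE (act (lm s) v) ∧ Arc s (act (lm s) v) := by
  obtain ⟨p, q⟩ := v
  rcases hs with rfl | rfl <;>
  simp only [lm, act_A, act_B, act_A_inv, act_B_inv, QE, Arc, Q0, Q1, Q2, Q3] at * <;>
  refine ⟨⟨?_, ?_, ?_, ?_⟩, ?_⟩ <;>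
  nlinarith [sq_nonneg (p - q), sq_nonneg (p + q), sq_nonneg p, sq_nonneg q]

theorem exit2 (v : ℚ × ℚ) (h : Q2 v < 0) (s : Bool × Bool)
    (hs : s = (true, false) ∨ s = (false, false)) : QE (act (lm s) v) ∧ Arc s (act (lm s) v) := by
  obtain ⟨p, q⟩ := v
  rcases hs with rfl | rfl <;>
  simp only [lm, act_A, act_B, act_A_inv, act_B_inv, QE, Arc, Q0, Q1, Q2, Q3] at * <;>
  refine ⟨⟨?_, ?_, ?_, ?_⟩, ?_⟩ <;>
  nlinarith [sq_nonneg (p - q), sq_nonneg (p + q), sq_nonneg p, sq_nonneg q]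

theorem exit3 (v : ℚ × ℚ) (h : Q3 v < 0) (s : Bool × Bool)
    (hs : s = (true, true) ∨ s = (false, false)) : QE (act (lm s) v) ∧ Arc s (act (lm s) v) := by
  obtain ⟨p, q⟩ := v
  rcases hs with rfl | rfl <;>
  simp only [lm, act_A, act_B, act_A_inv, act_B_inv, QE, Arc, Q0, Q1, Q2, Q3] at * <;>
  refine ⟨⟨?_, ?_, ?_, ?_⟩, ?_⟩ <;>
  nlinarith [sq_nonneg (p - q), sq_nonneg (p + q), sq_nonneg p, sq_nonneg q]

abbrev F2 := FreeGroup Bool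
abbrev fa : F2 := FreeGroup.of true
abbrev fb : F2 := FreeGroup.of false
def fc : F2 := fa * fb * fa⁻¹ * fb⁻¹

/-- The representation of the free group. -/
def r1 : F2 →* SLQ := FreeGroup.lift fun x => if x then mA else mB

theorem r1_a : r1 fa = mA := by simp [r1]
theorem r1_b : r1 fb = mB := by simp [r1]

theorem r1_letter (s : Bool × Bool) : r1 (FreeGroup.mk [s]) = lm s := by
  rcases s with ⟨_ | _, _ | _⟩ <;> simp [r1, lm]

theorem mk_letter (s : Bool × Bool) : (FreeGroup.mk [s] : F2) =
    if s.2 then FreeGroup.of s.1 else (FreeGroup.of s.1)⁻¹ := by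
  rcases s with ⟨_ | _, _ | _⟩ <;> rfl

theorem Q0_c (v : ℚ × ℚ) : Q0 (act (r1 fc) v) = Q0 v := by
  simp only [fc, map_mul, map_inv, r1_a, r1_b, act_mul]
  rw [Q0_A, Q1_B, Q2_A_inv, Q3_B_inv]

theorem Q0_c_inv (v : ℚ × ℚ) : Q0 (act (r1 fc)⁻¹ v) = Q0 v := by
  rw [← Q0_c, act_act_inv]

theorem Q0_c_zpow (k : ℤ) : ∀ v : ℚ × ℚ, Q0 (act (r1 (fc ^ k)) v) = Q0 v := by
  induction k using Int.induction_on with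
  | zero => intro v; simp [act_one]
  | succ k ih => intro v; rw [zpow_add_one, map_mul, act_mul, ih, Q0_c]
  | pred k ih => intro v; rw [zpow_sub_one, map_mul, act_mul, ih, map_inv, Q0_c_inv]

/-- Elements which permute the four intervals. -/
def Walk (g : F2) : Prop := ∃ k : ℤ, g = fc ^ k ∨ g = fa⁻¹ * fc ^ k ∨ g = fb⁻¹ * fa⁻¹ * fc ^ k ∨
  g = fa * fb⁻¹ * fa⁻¹ * fc ^ k

theorem pingpong_word (w : List (Bool × Bool)) (hw : FreeGroup.IsReduced w) :
    Walk (FreeGroup.mk w) ∨ ∀ v, Q0 v < 0 → QE (act (r1 (FreeGroup.mk w)) v) ∧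
      ∀ s ∈ w.head?, Arc s (act (r1 (FreeGroup.mk w)) v) := by
  induction w with
  | nil => left; exact ⟨0, Or.inl rfl⟩
  | cons s w ih =>
    have hw' : FreeGroup.IsReduced w := hw.infix ⟨[s], [], by simp⟩
    have hmk : (FreeGroup.mk (s :: w) : F2) = FreeGroup.mk [s] * FreeGroup.mk w := by
      rw [FreeGroup.mul_mk]; rfl
    have hr : ∀ v, act (r1 (FreeGroup.mk (s :: w))) v = act (lm s) (act (r1 (FreeGroup.mk w)) v) := by
      intro v; rw [hmk, map_mul, act_mul, r1_letter]
    simp only [hr, List.head?_cons, Option.mem_def, Option.some.injEq, forall_eq']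
    rcases ih hw' with ⟨k, h⟩ | h
    · rcases h with h | h | h | h
      · have hq : ∀ v, Q0 v < 0 → Q0 (act (r1 (FreeGroup.mk w)) v) < 0 := by
          intro v hv; rwa [h, Q0_c_zpow]
        rcases s with ⟨_ | _, _ | _⟩
        · left; refine ⟨k + 1, Or.inr (Or.inr (Or.inr ?_))⟩
          rw [hmk, h, mk_letter, add_comm, zpow_add, zpow_one]
          simp [fc, mul_assoc]
        · right; exact fun v hv => exit0 _ (hq v hv) _ (by simp)
        · left; refine ⟨k, Or.inr (Or.inl ?_)⟩
          rw [hmk, h, mk_letter]; simp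
        · right; exact fun v hv => exit0 _ (hq v hv) _ (by simp)
      · have hq : ∀ v, Q0 v < 0 → Q1 (act (r1 (FreeGroup.mk w)) v) < 0 := by
          intro v hv
          rwa [h, map_mul, map_inv, act_mul, r1_a, Q1_A_inv, Q0_c_zpow]
        rcases s with ⟨_ | _, _ | _⟩
        · left; refine ⟨k, Or.inr (Or.inr (Or.inl ?_))⟩
          rw [hmk, h, mk_letter]; simp [mul_assoc]
        · right; exact fun v hv => exit1 _ (hq v hv) _ (by simp)
        · right; exact fun v hv => exit1 _ (hq v hv) _ (by simp)
        · left; refine ⟨k, Or.inl ?_⟩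
          rw [hmk, h, mk_letter]; simp
      · have hq : ∀ v, Q0 v < 0 → Q2 (act (r1 (FreeGroup.mk w)) v) < 0 := by
          intro v hv
          rwa [h, map_mul, map_mul, map_inv, map_inv, act_mul, act_mul, r1_a, r1_b, Q2_B_inv,
            Q1_A_inv, Q0_c_zpow]
        rcases s with ⟨_ | _, _ | _⟩
        · right; exact fun v hv => exit2 _ (hq v hv) _ (by simp)
        · left; refine ⟨k, Or.inr (Or.inl ?_)⟩
          rw [hmk, h, mk_letter]; simp [mul_assoc]
        · right; exact fun v hv => exit2 _ (hq v hv) _ (by simp)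
        · left; refine ⟨k, Or.inr (Or.inr (Or.inr ?_))⟩
          rw [hmk, h, mk_letter]; simp [mul_assoc]
      · have hq : ∀ v, Q0 v < 0 → Q3 (act (r1 (FreeGroup.mk w)) v) < 0 := by
          intro v hv
          rwa [h, map_mul, map_mul, map_mul, map_inv, map_inv, act_mul, act_mul, act_mul, r1_a,
            r1_b, Q3_A, Q2_B_inv, Q1_A_inv, Q0_c_zpow]
        rcases s with ⟨_ | _, _ | _⟩
        · right; exact fun v hv => exit3 _ (hq v hv) _ (by simp)
        · left; refine ⟨k - 1, Or.inl ?_⟩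
          rw [hmk, h, mk_letter, sub_eq_neg_add, zpow_add, zpow_neg_one]
          simp [fc, mul_assoc]
        · left; refine ⟨k, Or.inr (Or.inr (Or.inl ?_))⟩
          rw [hmk, h, mk_letter]; simp [mul_assoc]
        · right; exact fun v hv => exit3 _ (hq v hv) _ (by simp)
    · right
      intro v hv
      obtain ⟨hE, hA⟩ := h v hv
      cases w with
      | nil =>
        exfalso
        have := hE.1
        rw [← FreeGroup.one_eq_mk, map_one, act_one] at this
        linarith
      | cons s' w =>
        exact arc_step s s' (FreeGroup.isReduced_cons_cons.1 hw).1 _ hE (hA s' (by simp))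

/-- The precise invariance of the boundary interval. -/
theorem pingpong (g : F2) (hg : ∀ k : ℤ, g ≠ fc ^ k) (v : ℚ × ℚ) (hv : Q0 v < 0) :
    0 < Q0 (act (r1 g) v) := by
  have h := pingpong_word g.toWord FreeGroup.isReduced_toWord
  rw [FreeGroup.mk_toWord] at h
  rcases h with ⟨k, h | h | h | h⟩ | h
  · exact absurd h (hg k)
  · have : Q1 (act (r1 g) v) < 0 := by
      rwa [h, map_mul, map_inv, act_mul, r1_a, Q1_A_inv, Q0_c_zpow]
    revert this; generalize act (r1 g) v = u; obtain ⟨p, q⟩ := u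
    simp only [Q0, Q1]; intro this
    nlinarith [sq_nonneg (p - q), sq_nonneg (p + q), sq_nonneg p, sq_nonneg q]
  · have : Q2 (act (r1 g) v) < 0 := by
      rwa [h, map_mul, map_mul, map_inv, map_inv, act_mul, act_mul, r1_a, r1_b, Q2_B_inv,
            Q1_A_inv, Q0_c_zpow]
    revert this; generalize act (r1 g) v = u; obtain ⟨p, q⟩ := u
    simp only [Q0, Q2]; intro this
    nlinarith [sq_nonneg (p - q), sq_nonneg (p + q), sq_nonneg p, sq_nonneg q]
  · have : Q3 (act (r1 g) v) < 0 := by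
      rwa [h, map_mul, map_mul, map_mul, map_inv, map_inv, act_mul, act_mul, act_mul, r1_a,
            r1_b, Q3_A, Q2_B_inv, Q1_A_inv, Q0_c_zpow]
    revert this; generalize act (r1 g) v = u; obtain ⟨p, q⟩ := u
    simp only [Q0, Q3]; intro this
    nlinarith [sq_nonneg (p - q), sq_nonneg (p + q), sq_nonneg p, sq_nonneg q]
  · exact (h v hv).1.1

end RatSurf

namespace RatSurf

/-! ### The doubled representation -/

/-- Reflection in the axis of the boundary element (up to scale). -/
def J (v : ℚ × ℚ) : ℚ × ℚ := (-4 * v.1 + 9 * v.2, -v.1 + 4 * v.2)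

theorem Q0_J (v : ℚ × ℚ) : Q0 (J v) = -7 * Q0 v := by
  simp only [Q0, J]; ring

theorem J_inj {u v : ℚ × ℚ} (h : J u = J v) : u = v := by
  simp only [J, Prod.mk.injEq] at h
  obtain ⟨h1, h2⟩ := h
  ext <;> linarith

theorem J_surj (v : ℚ × ℚ) : ∃ u, J u = v :=
  ⟨((-4 * v.1 + 9 * v.2) / 7, (-v.1 + 4 * v.2) / 7), by simp only [J]; ext <;> simp <;> ring⟩

def mA' : SLQ := ⟨!![45/7, -96/7; 32/21, -65/21], by norm_num [Matrix.det_fin_two]⟩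
def mB' : SLQ := ⟨!![-93/21, 260/21; -60/21, 163/21], by norm_num [Matrix.det_fin_two]⟩

def r2 : F2 →* SLQ := FreeGroup.lift fun x => if x then mA' else mB'

theorem r2_J (g : F2) : ∀ v, act (r2 g) (J v) = J (act (r1 g) v) := by
  have hinv : ∀ x : F2, (∀ v, act (r2 x) (J v) = J (act (r1 x) v)) →
      ∀ v, act (r2 x⁻¹) (J v) = J (act (r1 x⁻¹) v) := by
    intro x hx v
    have := hx (act (r1 x⁻¹) v)
    rw [map_inv r1, act_act_inv] at this
    rw [← this, map_inv, map_inv, act_inv_act]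
  induction g using FreeGroup.induction_on with
  | C1 => intro v; simp [act_one]
  | of s =>
    intro v
    cases s <;> simp [r1, r2, act, J, mA, mB, mA', mB'] <;> constructor <;> ring
  | inv_of s h => exact hinv _ h
  | mul x y hx hy => intro v; rw [map_mul, map_mul, act_mul, act_mul, hy, hx]

def R : Bool → F2 →* SLQ
  | true => r1
  | false => r2

/-- The two sides of the axis. -/
def Side : Bool → ℚ × ℚ → Prop
  | true, v => 0 < Q0 v
  | false, v => Q0 v < 0

theorem R_pingpong (i : Bool) (g : F2) (hg : ∀ k : ℤ, g ≠ fc ^ k) (v : ℚ × ℚ)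
    (hv : Side (!i) v) : Side i (act (R i g) v) := by
  cases i with
  | true => exact pingpong g hg v hv
  | false =>
    obtain ⟨u, rfl⟩ := J_surj v
    simp only [Side, R, Bool.not_false, Q0_J] at *
    rw [r2_J, Q0_J]
    have := pingpong g hg u (by linarith)
    linarith

/-- A point on each side which is never reached from the other side. -/
def x0 : Bool → ℚ × ℚ
  | true => (1, 0)
  | false => (-4, -1)

theorem x0_side (i : Bool) : Side i (x0 i) := by
  cases i <;> norm_num [Side, x0, Q0]

theorem r1_avoid (g : F2) (v : ℚ × ℚ) (hv : Q0 v < 0) : act (r1 g) v ≠ (1, 0) := by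
  intro h
  have hv' : v = act (r1 g)⁻¹ (1, 0) := by rw [← h, act_inv_act]
  have h3 : act (r1 (g⁻¹ * fa * g)) v = (3 * v.1, 3 * v.2) := by
    rw [map_mul, map_mul, act_mul, act_mul, h, r1_a, act_A, map_inv, hv']
    simp only [act]; ext <;> simp <;> ring
  have hne : ∀ k : ℤ, g⁻¹ * fa * g ≠ fc ^ k := by
    intro k hk
    have := congrArg (FreeGroup.lift fun x : Bool =>
      if x then Multiplicative.ofAdd (1 : ℤ) else 1) hk
    simp [fc] at this
  have := pingpong _ hne v hv
  rw [h3] at this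
  simp only [Q0] at *
  nlinarith

theorem R_avoid (i : Bool) (g : F2) (v : ℚ × ℚ) (hv : Side (!i) v) : act (R i g) v ≠ x0 i := by
  cases i with
  | true => exact r1_avoid g v hv
  | false =>
    obtain ⟨u, rfl⟩ := J_surj v
    simp only [Side, R, Bool.not_false, Q0_J] at *
    rw [r2_J]
    have hx : x0 false = J (1, 0) := by norm_num [x0, J]
    rw [hx]
    intro h
    exact r1_avoid g u (by linarith) (J_inj h)

/-! ### The boundary element has infinite order, uniformly away from the identity -/

theorem mA_val : mA.1 = !![3, 0; 0, 1/3] := rfl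
theorem mB_val : mB.1 = !![5/3, 4/3; 4/3, 5/3] := rfl
theorem mA'_val : mA'.1 = !![45/7, -96/7; 32/21, -65/21] := rfl
theorem mB'_val : mB'.1 = !![-93/21, 260/21; -60/21, 163/21] := rfl

theorem r1_fc : (r1 fc).1 = !![-119/9, 160/9; -160/81, 209/81] := by
  simp only [fc, map_mul, map_inv, r1_a, r1_b, Matrix.SpecialLinearGroup.coe_mul,
    Matrix.SpecialLinearGroup.coe_inv, mA_val, mB_val, Matrix.adjugate_fin_two_of]
  ext i j
  fin_cases i <;> fin_cases j <;> norm_num [Matrix.mul_apply, Fin.sum_univ_two]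

theorem fc_pow_entry (n : ℕ) : 1 ≤ |(r1 (fc ^ (n + 1))).1 1 0| ∧
    |(r1 (fc ^ n)).1 1 0| ≤ |(r1 (fc ^ (n + 1))).1 1 0| := by
  induction n with
  | zero => simp [r1_fc]; norm_num [abs_of_neg, abs_of_pos]
  | succ n ih =>
    have hrec : (r1 (fc ^ (n + 1 + 1))).1 1 0 =
        -(862 / 81) * (r1 (fc ^ (n + 1))).1 1 0 - (r1 (fc ^ n)).1 1 0 := by
      simp only [pow_succ', map_mul, Matrix.SpecialLinearGroup.coe_mul, Matrix.mul_apply,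
        Fin.sum_univ_two, r1_fc]
      simp
      ring
    rw [hrec]
    generalize (r1 (fc ^ (n + 1))).1 1 0 = x at *
    generalize (r1 (fc ^ n)).1 1 0 = y at *
    obtain ⟨h1, h2⟩ := ih
    have : (862 / 81) * |x| - |y| ≤ |-(862 / 81) * x - y| := by
      have := abs_sub_abs_le_abs_sub (-(862 / 81) * x) y
      rw [abs_mul] at this
      norm_num at this ⊢
      linarith
    constructor <;> linarith

theorem fc_zpow_entry (k : ℤ) (hk : |(r1 (fc ^ k)).1 1 0| < 1) : k = 0 := by
  by_contra h
  obtain ⟨n, rfl | rfl⟩ := k.eq_nat_or_neg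
  · obtain ⟨m, rfl⟩ : ∃ m, n = m + 1 := ⟨n - 1, by omega⟩
    rw [zpow_natCast] at hk
    linarith [(fc_pow_entry m).1]
  · obtain ⟨m, rfl⟩ : ∃ m, n = m + 1 := ⟨n - 1, by omega⟩
    rw [zpow_neg, zpow_natCast, map_inv] at hk
    have : ((r1 (fc ^ (m + 1)))⁻¹).1 1 0 = -(r1 (fc ^ (m + 1))).1 1 0 := by
      rw [Matrix.SpecialLinearGroup.coe_inv, Matrix.adjugate_fin_two]; simp
    rw [this, abs_neg] at hk
    linarith [(fc_pow_entry m).1]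

/-! ### The representation of the genus two group -/

theorem comm_eq : mA * mB * mA⁻¹ * mB⁻¹ = mA' * mB' * mA'⁻¹ * mB'⁻¹ := by
  apply Subtype.ext
  simp only [Matrix.SpecialLinearGroup.coe_mul, Matrix.SpecialLinearGroup.coe_inv, mA_val, mB_val,
    mA'_val, mB'_val, Matrix.adjugate_fin_two_of]
  ext i j
  fin_cases i <;> fin_cases j <;> norm_num [Matrix.mul_apply, Fin.sum_univ_two]

/-- The two embeddings of the free group in the genus two surface group. -/
def emb : Bool → F2 →* SurfaceGroup 2
  | true => FreeGroup.lift fun x => if x then ga 2 0 else gb 2 0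
  | false => FreeGroup.lift fun x => if x then gb 2 1 else ga 2 1

theorem emb_fc (i j : Bool) : emb i fc = emb j fc := by
  have h : emb true fc = emb false fc := by
    have r2 := surface_rel 2
    simp only [List.ofFn_succ, List.ofFn_zero, List.prod_cons, List.prod_nil,
      Fin.succ_zero_eq_one, mul_one] at r2
    rw [mul_eq_one_iff_eq_inv] at r2
    simp only [emb, fc, map_mul, map_inv, FreeGroup.lift_apply_of, if_true, if_false,
      Bool.false_eq_true]
    rw [r2]; group
  cases i <;> cases j <;> simp [h]

theorem emb_fc_zpow (i j : Bool) (k : ℤ) : emb i (fc ^ k) = emb j (fc ^ k) := by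
  rw [map_zpow, map_zpow, emb_fc i j]

/-- Alternating products whose first factor lies in the vertex group `i`. -/
inductive Red : Bool → SurfaceGroup 2 → Prop
  | base (i : Bool) (g : F2) (hg : ∀ k : ℤ, g ≠ fc ^ k) : Red i (emb i g)
  | cons (i : Bool) (g : F2) (hg : ∀ k : ℤ, g ≠ fc ^ k) (w : SurfaceGroup 2) (hw : Red (!i) w) :
      Red i (emb i g * w)

theorem mul_ne {g : F2} (hg : ∀ k : ℤ, g ≠ fc ^ k) (m k : ℤ) : fc ^ m * g ≠ fc ^ k := by
  intro h
  apply hg (-m + k)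
  rw [zpow_add, ← h, zpow_neg, inv_mul_cancel_left]

theorem Red.zpow_mul {j : Bool} {w : SurfaceGroup 2} (h : Red j w) (i : Bool) (m : ℤ) :
    Red j (emb i (fc ^ m) * w) := by
  rw [emb_fc_zpow i j]
  cases h with
  | base _ g hg => rw [← map_mul]; exact Red.base _ _ (mul_ne hg m)
  | cons _ g hg w hw => rw [← mul_assoc, ← map_mul]; exact Red.cons _ _ (mul_ne hg m) _ hw

/-- Elements admitting a reduced expression. -/
def Good (w : SurfaceGroup 2) : Prop := (∃ k : ℤ, w = emb true (fc ^ k)) ∨ ∃ i, Red i w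

theorem Good.emb_mul {w : SurfaceGroup 2} (h : Good w) (i : Bool) (g : F2) :
    Good (emb i g * w) := by
  by_cases hg : ∃ m : ℤ, g = fc ^ m
  · obtain ⟨m, rfl⟩ := hg
    rcases h with ⟨k, rfl⟩ | ⟨j, h⟩
    · left; refine ⟨m + k, ?_⟩
      rw [emb_fc_zpow i true, ← map_mul, zpow_add]
    · exact Or.inr ⟨j, h.zpow_mul i m⟩
  · push Not at hg
    rcases h with ⟨k, rfl⟩ | ⟨j, h⟩
    · right; refine ⟨i, ?_⟩
      rw [emb_fc_zpow true i, ← map_mul]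
      refine Red.base _ _ fun m hm => hg (m - k) ?_
      rw [zpow_sub, ← hm, mul_inv_cancel_right]
    · by_cases hij : j = i
      · subst hij
        cases h with
        | base _ g' hg' =>
          rw [← map_mul]
          by_cases hp : ∃ m : ℤ, g * g' = fc ^ m
          · obtain ⟨m, hm⟩ := hp
            left; refine ⟨m, ?_⟩
            rw [hm, emb_fc_zpow]
          · push Not at hp
            exact Or.inr ⟨_, Red.base _ _ hp⟩
        | cons _ g' hg' w hw =>
          rw [← mul_assoc, ← map_mul]
          by_cases hp : ∃ m : ℤ, g * g' = fc ^ m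
          · obtain ⟨m, hm⟩ := hp
            rw [hm]
            exact Or.inr ⟨_, hw.zpow_mul _ _⟩
          · push Not at hp
            exact Or.inr ⟨_, Red.cons _ _ hp _ hw⟩
      · have : j = !i := by cases i <;> cases j <;> simp_all
        subst this
        exact Or.inr ⟨i, Red.cons _ _ hg _ h⟩

theorem good_all (w : SurfaceGroup 2) : Good w := by
  have key : ∀ w : SurfaceGroup 2,
      (∀ x, Good x → Good (w * x)) ∧ (∀ x, Good x → Good (w⁻¹ * x)) := by
    intro w
    have hgen : ∀ (i : Bool) (g : F2), (∀ x, Good x → Good (emb i g * x)) ∧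
        (∀ x, Good x → Good ((emb i g)⁻¹ * x)) := by
      intro i g
      refine ⟨fun x hx => hx.emb_mul i g, fun x hx => ?_⟩
      rw [← map_inv]; exact hx.emb_mul i _
    induction w using surf_induction with
    | h1 => simp
    | ha i =>
      fin_cases i
      · simpa [emb] using hgen true fa
      · simpa [emb] using hgen false fb
    | hb i =>
      fin_cases i
      · simpa [emb] using hgen true fb
      · simpa [emb] using hgen false fa
    | hm x y hx hy =>
      refine ⟨fun z hz => ?_, fun z hz => ?_⟩
      · rw [mul_assoc]; exact hx.1 _ (hy.1 _ hz)
      · rw [mul_inv_rev, mul_assoc]; exact hy.2 _ (hx.2 _ hz)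
    | hi x hx => exact ⟨hx.2, by simpa using hx.1⟩
  have := (key w).1 1 (Or.inl ⟨0, by simp⟩)
  rwa [mul_one] at this

theorem exists_rep2 : ∃ ρ : SurfaceGroup 2 →* SLQ, ∀ i g, ρ (emb i g) = R i g := by
  obtain ⟨ρ, h1, h2⟩ := exists_surfHom 2 ![mA, mB'] ![mB, mA'] (by
    simp only [List.ofFn_succ, List.ofFn_zero, List.prod_cons, List.prod_nil]
    simp only [Matrix.cons_val_zero, Fin.succ_zero_eq_one, Matrix.cons_val_one, mul_one]
    rw [comm_eq]; group)
  refine ⟨ρ, fun i g => ?_⟩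
  have : ρ.comp (emb i) = R i := by
    ext1 s
    have a0 := h1 0
    have a1 := h1 1
    have b0 := h2 0
    have b1 := h2 1
    cases i <;> cases s <;> simp_all [emb, R, r1, r2]
  exact DFunLike.congr_fun this g

theorem red_action (ρ : SurfaceGroup 2 →* SLQ) (hρ : ∀ i g, ρ (emb i g) = R i g) (i : Bool)
    (w : SurfaceGroup 2) (h : Red i w) : ∃ j, ∀ v, Side (!j) v →
      Side i (act (ρ w) v) ∧ act (ρ w) v ≠ x0 i := by
  induction h with
  | base i g hg =>
    refine ⟨i, fun v hv => ?_⟩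
    rw [hρ]
    exact ⟨R_pingpong i g hg v hv, R_avoid i g v hv⟩
  | cons i g hg w hw ih =>
    obtain ⟨j, hj⟩ := ih
    refine ⟨j, fun v hv => ?_⟩
    rw [map_mul, act_mul, hρ]
    have := (hj v hv).1
    exact ⟨R_pingpong i g hg _ this, R_avoid i g _ this⟩

theorem side_not {i : Bool} {v : ℚ × ℚ} (h : Side i v) (h' : Side (!i) v) : False := by
  cases i <;> simp only [Side, Bool.not_true, Bool.not_false] at h h' <;> linarith

/-- Elements whose image is close to the identity are trivial. -/
theorem near_one (ρ : SurfaceGroup 2 →* SLQ) (hρ : ∀ i g, ρ (emb i g) = R i g)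
    (w : SurfaceGroup 2) (h1 : ∀ i, Side i (act (ρ w) (x0 i)))
    (h2 : ∀ i, Side i (act (ρ w)⁻¹ (x0 i))) (h3 : |(ρ w).1 1 0| < 1) : w = 1 := by
  rcases good_all w with ⟨k, rfl⟩ | ⟨i, h⟩
  · rw [hρ] at h3
    rw [fc_zpow_entry k h3]; simp
  · exfalso
    obtain ⟨j, hj⟩ := red_action ρ hρ i w h
    by_cases hij : j = i
    · subst hij
      exact side_not (hj _ (x0_side (!j))).1 (h1 _)
    · have : i = !j := by cases i <;> cases j <;> simp_all
      subst this
      exact (hj _ (h2 _)).2 (act_act_inv _ _)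

/-- The open condition on real matrices. -/
def NearR (m : Matrix (Fin 2) (Fin 2) ℝ) : Prop :=
  |m 1 0| < 1 ∧
  0 < (m 0 0) ^ 2 - 8 * (m 0 0) * (m 1 0) + 9 * (m 1 0) ^ 2 ∧
  0 < (m 1 1) ^ 2 - 8 * (m 1 1) * (-m 1 0) + 9 * (-m 1 0) ^ 2 ∧
  (m 0 0 * (-4) + m 0 1 * (-1)) ^ 2 -
    8 * (m 0 0 * (-4) + m 0 1 * (-1)) * (m 1 0 * (-4) + m 1 1 * (-1)) +
    9 * (m 1 0 * (-4) + m 1 1 * (-1)) ^ 2 < 0 ∧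
  (m 1 1 * (-4) + (-m 0 1) * (-1)) ^ 2 -
    8 * (m 1 1 * (-4) + (-m 0 1) * (-1)) * ((-m 1 0) * (-4) + m 0 0 * (-1)) +
    9 * ((-m 1 0) * (-4) + m 0 0 * (-1)) ^ 2 < 0

theorem nearR_one : NearR 1 := by
  norm_num [NearR]

theorem isOpen_nearR : IsOpen {m : Matrix (Fin 2) (Fin 2) ℝ | NearR m} := by
  unfold NearR
  have hc : ∀ i j, Continuous fun m : Matrix (Fin 2) (Fin 2) ℝ => m i j := fun i j =>
    continuous_id.matrix_elem i j
  have h00 := hc 0 0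
  have h01 := hc 0 1
  have h10 := hc 1 0
  have h11 := hc 1 1
  refine IsOpen.and ?_ (IsOpen.and ?_ (IsOpen.and ?_ (IsOpen.and ?_ ?_)))
  all_goals exact isOpen_lt (by fun_prop) (by fun_prop)

/-- Base change to the reals. -/
noncomputable def toR : SLQ →* Matrix.SpecialLinearGroup (Fin 2) ℝ :=
  Matrix.SpecialLinearGroup.map (algebraMap ℚ ℝ)

theorem toR_apply (m : SLQ) (i j : Fin 2) : (toR m).1 i j = ((m.1 i j : ℚ) : ℝ) := by
  simp [toR]

theorem toR_inj : Function.Injective toR := by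
  intro x y h
  ext i j
  have := congrArg (fun z : Matrix.SpecialLinearGroup (Fin 2) ℝ => z.1 i j) h
  simp only [toR_apply] at this
  exact_mod_cast this

theorem near_oneR (ρ : SurfaceGroup 2 →* SLQ) (hρ : ∀ i g, ρ (emb i g) = R i g)
    (w : SurfaceGroup 2) (h : NearR (toR (ρ w)).1) : w = 1 := by
  simp only [NearR, toR_apply] at h
  obtain ⟨h1, h2, h3, h4, h5⟩ := h
  have e : ((ρ w)⁻¹).1 = !![(ρ w).1 1 1, -(ρ w).1 0 1; -(ρ w).1 1 0, (ρ w).1 0 0] := by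
    rw [Matrix.SpecialLinearGroup.coe_inv, Matrix.adjugate_fin_two]
  refine near_one ρ hρ w (fun i => ?_) (fun i => ?_) (by exact_mod_cast h1)
  · cases i
    · simp only [Side, x0, act, Q0]
      exact_mod_cast h4
    · simp only [Side, x0, act, Q0, mul_one, mul_zero, add_zero]
      exact_mod_cast h2
  · cases i
    · simp only [Side, x0, act, Q0, e]
      simp only [Matrix.of_apply, Matrix.cons_val_zero, Matrix.cons_val_one, Matrix.cons_val',
        Matrix.cons_val_fin_one]
      exact_mod_cast h5
    · simp only [Side, x0, act, Q0, e]
      simp only [Matrix.of_apply, Matrix.cons_val_zero, Matrix.cons_val_one, Matrix.cons_val',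
        Matrix.cons_val_fin_one, mul_one, mul_zero, add_zero]
      exact_mod_cast h3

end RatSurf

/-- For every `g ≥ 2` there is a discrete and faithful representation of the genus-`g`
surface group into `SL(2,ℝ)` all of whose matrix entries are rational. -/
theorem exists_discrete_faithful_rational_rep (g : ℕ) (hg : 2 ≤ g) :
    ∃ ρ : SurfaceGroup g →* Matrix.SpecialLinearGroup (Fin 2) ℝ,
      Function.Injective ρ ∧
      (∀ x : SurfaceGroup g, ∀ i j,
        ((ρ x : Matrix.SpecialLinearGroup (Fin 2) ℝ) : Matrix (Fin 2) (Fin 2) ℝ) i j ∈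
          Set.range ((↑) : ℚ → ℝ)) ∧
      DiscreteTopology ↥ρ.range := by
  obtain ⟨n, rfl⟩ : ∃ n, g = n + 2 := ⟨g - 2, by omega⟩
  obtain ⟨ι, hι⟩ := RatSurf.exists_cover n
  obtain ⟨ρ, hρ⟩ := RatSurf.exists_rep2
  have key : ∀ w, RatSurf.NearR (RatSurf.toR (ρ (ι w))).1 → w = 1 := by
    intro w hw
    apply hι
    rw [map_one]
    exact RatSurf.near_oneR ρ hρ _ hw
  refine ⟨RatSurf.toR.comp (ρ.comp ι), ?_, ?_, ?_⟩
  · refine (injective_iff_map_eq_one _).2 fun w hw => key w ?_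
    change RatSurf.toR (ρ (ι w)) = 1 at hw
    rw [hw]
    exact RatSurf.nearR_one
  · intro x i j
    exact ⟨(ρ (ι x)).1 i j, (RatSurf.toR_apply _ i j).symm⟩
  · rw [discreteTopology_iff_isOpen_singleton]
    rintro ⟨y, x, rfl⟩
    have hcoe : Continuous (fun m : Matrix.SpecialLinearGroup (Fin 2) ℝ => m.1) :=
      continuous_induced_dom
    have hcont : Continuous (fun z : ↥(RatSurf.toR.comp (ρ.comp ι)).range =>
        ((RatSurf.toR (ρ (ι x)))⁻¹).1 * z.1.1) :=
      continuous_const.matrix_mul (hcoe.comp continuous_subtype_val)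
    convert RatSurf.isOpen_nearR.preimage hcont using 1
    ext ⟨z, u, rfl⟩
    simp only [Set.mem_singleton_iff, Set.mem_preimage, Set.mem_ofPred_eq]
    have e : ((RatSurf.toR (ρ (ι x)))⁻¹).1 * ((RatSurf.toR.comp (ρ.comp ι)) u).1
        = (RatSurf.toR (ρ (ι (x⁻¹ * u)))).1 := by
      simp only [map_mul, map_inv]
      rfl
    rw [e]
    constructor
    · intro h
      replace h : RatSurf.toR (ρ (ι u)) = RatSurf.toR (ρ (ι x)) := congrArg Subtype.val h
      have : RatSurf.toR (ρ (ι (x⁻¹ * u))) = 1 := by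
        simp only [map_mul, map_inv, h, inv_mul_cancel]
      rw [this]
      exact RatSurf.nearR_one
    · intro h
      have := key _ h
      rw [inv_mul_eq_one] at this
      rw [this]
end

section
/- Existence of an irreducible embedding of SL(2,ℚ) into Sp(2k,ℚ): for every k ≥ 1, there exists an injective group homomorphism φ from SL(2,ℚ) into the rational symplectic group Sp(2k,ℚ) whose image acts irreducibly on ℚ^(2k), i.e., the only ℚ-subspaces W of the underlying 2k-dimensional rational vector space invariant under multiplication by every matrix in the image of φ are the zero subspace and the whole space. -/
namespace SymPow

open Matrix Polynomial

/-- exponents -/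
def ex (k : ℕ) : Fin k ⊕ Fin k → ℕ := Sum.elim (fun i => (i : ℕ)) (fun i => 2 * k - 1 - (i : ℕ))

/-- scale factors -/
def sc (k : ℕ) : Fin k ⊕ Fin k → ℚ :=
  Sum.elim (fun _ => 1) (fun i => (-1) ^ (i : ℕ) * ((2 * k - 1).choose (i : ℕ) : ℚ))

/-- power vectors -/
def v (k : ℕ) (x y : ℚ) : Fin k ⊕ Fin k → ℚ :=
  fun a => sc k a * (x ^ ex k a * y ^ (2 * k - 1 - ex k a))

/-- row polynomials -/
noncomputable def rp (n m : ℕ) (a b c d : ℚ) : ℚ[X] :=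
  (C a * X + C b) ^ m * (C c * X + C d) ^ (n - m)

/-- The matrix of the symmetric power -/
noncomputable def S (k : ℕ) (A : Matrix (Fin 2) (Fin 2) ℚ) :
    Matrix (Fin k ⊕ Fin k) (Fin k ⊕ Fin k) ℚ :=
  fun i j => sc k i * (sc k j)⁻¹ *
    (rp (2 * k - 1) (ex k i) (A 0 0) (A 0 1) (A 1 0) (A 1 1)).coeff (ex k j)

lemma ex_le (k : ℕ) (a) : ex k a ≤ 2 * k - 1 := by
  rcases a with i | i <;> simp [ex] <;> omega

lemma sc_ne (k : ℕ) (a) : sc k a ≠ 0 := by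
  rcases a with i | i
  · simp [sc]
  · have : (2 * k - 1).choose (i : ℕ) ≠ 0 := (Nat.choose_pos (by omega)).ne'
    simp [sc, this]

lemma ex_inj (k : ℕ) : Function.Injective (ex k) := by
  rintro (i | i) (j | j) h <;> simp [ex] at h ⊢ <;> omega

lemma sum_ex (k : ℕ) (hk : 1 ≤ k) (f : ℕ → ℚ) :
    ∑ a, f (ex k a) = ∑ j ∈ Finset.range (2 * k - 1 + 1), f j := by
  have h : Finset.univ.image (ex k) = Finset.range (2 * k - 1 + 1) := by
    apply Finset.eq_of_subset_of_card_le
    · intro j hj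
      simp only [Finset.mem_image] at hj
      obtain ⟨a, -, rfl⟩ := hj
      have := ex_le k a
      simp; omega
    · rw [Finset.card_image_of_injective _ (ex_inj k)]
      simp; omega
  rw [← h, Finset.sum_image (fun a _ b _ hab => ex_inj k hab)]

lemma natDegree_lin (a b : ℚ) : (C a * X + C b).natDegree ≤ 1 := natDegree_linear_le

lemma rp_natDegree (n m : ℕ) (hm : m ≤ n) (a b c d : ℚ) : (rp n m a b c d).natDegree ≤ n := by
  unfold rp
  have h1 := natDegree_pow_le_of_le m (natDegree_lin a b)
  have h2 := natDegree_pow_le_of_le (n - m) (natDegree_lin c d)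
  refine (natDegree_mul_le_of_le h1 h2).trans (by omega)

lemma rp_coeff_top (n m : ℕ) (hm : m ≤ n) (a b c d : ℚ) :
    (rp n m a b c d).coeff n = a ^ m * c ^ (n - m) := by
  unfold rp
  have h1 := natDegree_pow_le_of_le m (natDegree_lin a b)
  have h2 := natDegree_pow_le_of_le (n - m) (natDegree_lin c d)
  have h3 := coeff_mul_add_eq_of_natDegree_le h1 h2
  rw [show m * 1 + (n - m) * 1 = n by omega,
    coeff_pow_of_natDegree_le (natDegree_lin a b),
    coeff_pow_of_natDegree_le (natDegree_lin c d)] at h3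
  rw [h3]; simp

lemma rp_hom (n m : ℕ) (hm : m ≤ n) (a b c d x y : ℚ) :
    ∑ j ∈ Finset.range (n + 1), (rp n m a b c d).coeff j * (x ^ j * y ^ (n - j)) =
      (a * x + b * y) ^ m * (c * x + d * y) ^ (n - m) := by
  by_cases hy : y = 0
  · subst hy
    rw [Finset.sum_range_succ, Finset.sum_eq_zero, rp_coeff_top n m hm]
    · simp only [Nat.sub_self, pow_zero, mul_zero, add_zero, mul_pow, zero_add, mul_one]
      conv_lhs => rw [← Nat.add_sub_cancel' hm, pow_add]
      simp
      ring
    · intro j hj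
      have : n - j ≠ 0 := by simp at hj; omega
      simp [this]
  · have h := eval_eq_sum_range' (Nat.lt_succ_of_le (rp_natDegree n m hm a b c d)) (x / y)
    have e1 : (a * x + b * y) ^ m * (c * x + d * y) ^ (n - m) =
        y ^ n * (rp n m a b c d).eval (x / y) := by
      have h1 : a * x + b * y = y * (a * (x / y) + b) := by field_simp
      have h2 : c * x + d * y = y * (c * (x / y) + d) := by field_simp
      rw [h1, h2, mul_pow, mul_pow]
      conv_rhs => rw [← Nat.add_sub_cancel' hm, pow_add]
      simp [rp]
      ring
    rw [e1, h, Finset.mul_sum]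
    refine Finset.sum_congr rfl fun j hj => ?_
    have hj' : j ≤ n := by simp at hj; omega
    conv_rhs => rw [← Nat.add_sub_cancel' hj', pow_add]
    rw [div_pow]
    simp only [Nat.add_sub_cancel' hj']
    field_simp

lemma S_mulVec (k : ℕ) (hk : 1 ≤ k) (A : Matrix (Fin 2) (Fin 2) ℚ) (x y : ℚ) :
    S k A *ᵥ v k x y = v k (A 0 0 * x + A 0 1 * y) (A 1 0 * x + A 1 1 * y) := by
  funext i
  simp only [mulVec, dotProduct]
  have : ∀ j, S k A i j * v k x y j = sc k i *
      ((fun j => (rp (2 * k - 1) (ex k i) (A 0 0) (A 0 1) (A 1 0) (A 1 1)).coeff j *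
        (x ^ j * y ^ (2 * k - 1 - j))) (ex k j)) := by
    intro j
    have := sc_ne k j
    simp only [S, v]
    field_simp
  rw [Finset.sum_congr rfl fun j _ => this j, ← Finset.mul_sum,
    sum_ex k hk (fun j => (rp (2 * k - 1) (ex k i) (A 0 0) (A 0 1) (A 1 0) (A 1 1)).coeff j *
        (x ^ j * y ^ (2 * k - 1 - j))),
    rp_hom _ _ (ex_le k i), v]

lemma dot_eq_zero (k : ℕ) (w : Fin k ⊕ Fin k → ℚ) (h : ∀ x y, w ⬝ᵥ v k x y = 0) : w = 0 := by
  have hp : (∑ a, C (w a * sc k a) * X ^ ex k a : ℚ[X]) = 0 := by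
    apply Polynomial.funext
    intro t
    have := h t 1
    simp only [dotProduct, v, one_pow, mul_one] at this
    simp only [eval_finsetSum, eval_mul, eval_C, eval_pow, eval_X, eval_zero]
    rw [← this]
    exact Finset.sum_congr rfl fun a _ => by ring
  funext a
  have := congrArg (fun p => p.coeff (ex k a)) hp
  simp only [finsetSum_coeff, coeff_C_mul, coeff_X_pow, coeff_zero, (ex_inj k).eq_iff] at this
  simpa [sc_ne k a] using this

lemma mat_ext (k : ℕ) (M N : Matrix (Fin k ⊕ Fin k) (Fin k ⊕ Fin k) ℚ)
    (h : ∀ x y, M *ᵥ v k x y = N *ᵥ v k x y) : M = N := by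
  have : ∀ i, M i - N i = 0 := by
    intro i
    apply dot_eq_zero k
    intro x y
    have := congrFun (h x y) i
    simp only [mulVec] at this
    rw [sub_dotProduct, this, sub_self]
  funext i
  exact sub_eq_zero.mp (this i)

lemma mat_ext2 (k : ℕ) (M N : Matrix (Fin k ⊕ Fin k) (Fin k ⊕ Fin k) ℚ)
    (h : ∀ x y z w, v k x y ⬝ᵥ (M *ᵥ v k z w) = v k x y ⬝ᵥ (N *ᵥ v k z w)) : M = N := by
  apply mat_ext
  intro z w
  refine sub_eq_zero.mp (dot_eq_zero k _ fun x y => ?_)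
  rw [sub_dotProduct, dotProduct_comm, h, dotProduct_comm, sub_self]

lemma form (k : ℕ) (hk : 1 ≤ k) (x y z w : ℚ) :
    v k x y ⬝ᵥ (J (Fin k) ℚ *ᵥ v k z w) = (x * w - z * y) ^ (2 * k - 1) := by
  have hb : (x * w - z * y) ^ (2 * k - 1) = ∑ a, (fun m : ℕ => (-(z * y)) ^ m *
      (x * w) ^ (2 * k - 1 - m) * ((2 * k - 1).choose m : ℚ)) (ex k a) := by
    rw [sum_ex k hk (fun m : ℕ => (-(z * y)) ^ m *
      (x * w) ^ (2 * k - 1 - m) * ((2 * k - 1).choose m : ℚ)), sub_eq_neg_add, add_pow]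
  rw [hb]
  have hJ : J (Fin k) ℚ *ᵥ v k z w = Sum.elim (fun i => - v k z w (Sum.inr i))
      (fun i => v k z w (Sum.inl i)) := by
    rw [J, fromBlocks_mulVec]
    congr 1
    · funext i; simp [neg_mulVec]
    · funext i; simp
  rw [hJ, dotProduct, Fintype.sum_sum_type, Fintype.sum_sum_type, add_comm]
  congr 1
  · refine Finset.sum_congr rfl fun i _ => ?_
    have hi : 2 * k - 1 - (2 * k - 1 - (i : ℕ)) = i := by omega
    simp only [v, ex, sc, Sum.elim_inl, Sum.elim_inr, hi]
    rw [neg_pow (z * y), mul_pow, mul_pow]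
    ring
  · refine Finset.sum_congr rfl fun i _ => ?_
    have hi : 2 * k - 1 - (2 * k - 1 - (i : ℕ)) = i := by omega
    have hs : (-1 : ℚ) ^ (2 * k - 1 - (i : ℕ)) = - (-1) ^ (i : ℕ) := by
      rcases Nat.even_or_odd (i : ℕ) with h | h
      · rw [h.neg_one_pow, Odd.neg_one_pow]
        obtain ⟨r, hr⟩ := h
        exact ⟨k - 1 - r, by omega⟩
      · rw [h.neg_one_pow, Even.neg_one_pow, neg_neg]
        obtain ⟨r, hr⟩ := h
        exact ⟨k - 1 - r, by omega⟩
    simp only [v, ex, sc, Sum.elim_inl, Sum.elim_inr, hi]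
    rw [neg_pow (z * y), mul_pow, mul_pow, hs, Nat.choose_symm (by omega)]
    ring

lemma S_one (k : ℕ) (hk : 1 ≤ k) : S k 1 = 1 := by
  apply mat_ext
  intro x y
  rw [S_mulVec k hk]
  simp

lemma S_mul (k : ℕ) (hk : 1 ≤ k) (A B : Matrix (Fin 2) (Fin 2) ℚ) :
    S k (A * B) = S k A * S k B := by
  apply mat_ext
  intro x y
  rw [← mulVec_mulVec, S_mulVec k hk, S_mulVec k hk, S_mulVec k hk]
  simp only [mul_apply, Fin.sum_univ_two]
  congr 1 <;> ring

lemma S_mem (k : ℕ) (hk : 1 ≤ k) (A : Matrix (Fin 2) (Fin 2) ℚ) (hA : A.det = 1) :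
    S k A ∈ symplecticGroup (Fin k) ℚ := by
  rw [SymplecticGroup.mem_iff']
  apply mat_ext2
  intro x y z w
  rw [← mulVec_mulVec, ← mulVec_mulVec, dotProduct_mulVec, vecMul_transpose, S_mulVec k hk,
    S_mulVec k hk, form k hk, form k hk]
  congr 1
  rw [det_fin_two] at hA
  linear_combination (x * w - z * y) * hA

/-- The representation -/
noncomputable def φ (k : ℕ) (hk : 1 ≤ k) :
    SpecialLinearGroup (Fin 2) ℚ →* symplecticGroup (Fin k) ℚ where
  toFun A := ⟨S k A, S_mem k hk A A.2⟩
  map_one' := Subtype.ext (by simpa using S_one k hk)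
  map_mul' A B := Subtype.ext (by simpa using S_mul k hk A B)

lemma v_inj (k : ℕ) (hk : 1 ≤ k) (x y z w : ℚ) (h : v k x y = v k z w) : x = z ∧ y = w := by
  have ho : Odd (2 * k - 1) := ⟨k - 1, by omega⟩
  have h1 := congrFun h (Sum.inl ⟨0, hk⟩)
  have h2 := congrFun h (Sum.inr ⟨0, hk⟩)
  simp [v, ex, sc] at h1 h2
  exact ⟨ho.strictMono_pow.injective h2, ho.strictMono_pow.injective h1⟩

lemma φ_inj (k : ℕ) (hk : 1 ≤ k) : Function.Injective (φ k hk) := by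
  intro A B h
  have h' : S k A = S k B := congrArg Subtype.val h
  have h1 := S_mulVec k hk A 1 0
  have h2 := S_mulVec k hk A 0 1
  rw [h', S_mulVec k hk] at h1 h2
  have g1 := v_inj k hk _ _ _ _ h1
  have g2 := v_inj k hk _ _ _ _ h2
  simp at g1 g2
  ext i j
  fin_cases i <;> fin_cases j <;> simp [g1, g2]

lemma pos_step (f : ℚ[X]) (m : ℕ) (a b : ℚ) (ha : 0 < a) (hb : 0 < b)
    (h0 : ∀ i, 0 ≤ f.coeff i) (h : ∀ i ≤ m, 0 < f.coeff i) :
    (∀ i, 0 ≤ (f * (C a * X + C b)).coeff i) ∧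
      ∀ i ≤ m + 1, 0 < (f * (C a * X + C b)).coeff i := by
  have e : ∀ i, (f * (C a * X + C b)).coeff (i + 1) = f.coeff i * a + f.coeff (i + 1) * b := by
    intro i
    rw [mul_add, ← mul_assoc, coeff_add, coeff_mul_X, coeff_mul_C, coeff_mul_C]
  have e0 : (f * (C a * X + C b)).coeff 0 = f.coeff 0 * b := by
    rw [mul_add, ← mul_assoc, coeff_add, coeff_mul_X_zero, coeff_mul_C, zero_add]
  constructor
  · rintro (_ | i)
    · rw [e0]; exact mul_nonneg (h0 0) hb.le
    · rw [e]; exact add_nonneg (mul_nonneg (h0 _) ha.le) (mul_nonneg (h0 _) hb.le)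
  · rintro (_ | i) hi
    · rw [e0]; exact mul_pos (h 0 (Nat.zero_le _)) hb
    · rw [e]
      exact add_pos_of_pos_of_nonneg (mul_pos (h _ (by omega)) ha) (mul_nonneg (h0 _) hb.le)

lemma pos_pow (f : ℚ[X]) (m : ℕ) (a b : ℚ) (ha : 0 < a) (hb : 0 < b)
    (h0 : ∀ i, 0 ≤ f.coeff i) (h : ∀ i ≤ m, 0 < f.coeff i) (r : ℕ) :
    (∀ i, 0 ≤ (f * (C a * X + C b) ^ r).coeff i) ∧
      ∀ i ≤ m + r, 0 < (f * (C a * X + C b) ^ r).coeff i := by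
  induction r with
  | zero => simpa using ⟨h0, h⟩
  | succ r ih =>
    rw [pow_succ, ← mul_assoc]
    exact pos_step _ _ a b ha hb ih.1 ih.2

lemma rp_pos (n m : ℕ) (hm : m ≤ n) (a b c d : ℚ) (ha : 0 < a) (hb : 0 < b) (hc : 0 < c)
    (hd : 0 < d) (i : ℕ) (hi : i ≤ n) : 0 < (rp n m a b c d).coeff i := by
  have h1 := pos_pow 1 0 a b ha hb (by intro i; rw [coeff_one]; split_ifs <;> simp)
    (by intro i hi; simp [Nat.le_zero.mp hi]) m
  rw [one_mul] at h1
  exact (pos_pow _ _ c d hc hd h1.1 h1.2 (n - m)).2 i (by omega)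

lemma diag_proj {ι : Type*} [Fintype ι] [DecidableEq ι] (W : Submodule ℚ (ι → ℚ)) (d : ι → ℚ)
    (hd : Function.Injective d) (hW : ∀ w ∈ W, (fun j => d j * w j) ∈ W) (w : ι → ℚ) (hw : w ∈ W)
    (i : ι) (hi : w i ≠ 0) : Pi.single i (1 : ℚ) ∈ W := by
  have key : ∀ p : ℚ[X], (fun j => p.eval (d j) * w j) ∈ W := by
    intro p
    induction p using Polynomial.induction_on' with
    | add p q hp hq =>
      convert W.add_mem hp hq using 1
      funext j
      simp [add_mul]
    | monomial n a =>
      have : (fun j => d j ^ n * w j) ∈ W := by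
        induction n with
        | zero => simpa using hw
        | succ n ih =>
          convert hW _ ih using 1
          funext j
          ring
      convert W.smul_mem a this using 1
      funext j
      simp [mul_assoc]
  have h := key (∏ j ∈ Finset.univ.erase i, (X - C (d j)))
  set c : ℚ := (∏ j ∈ Finset.univ.erase i, (X - C (d j))).eval (d i) with hc
  have hc0 : c ≠ 0 := by
    rw [hc, eval_prod, Finset.prod_ne_zero_iff]
    intro j hj
    simp only [eval_sub, eval_X, eval_C]
    exact sub_ne_zero.mpr fun h => (Finset.ne_of_mem_erase hj) (hd h).symm
  convert W.smul_mem (c * w i)⁻¹ h using 1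
  funext j
  by_cases hj : j = i
  · subst hj
    simp only [Pi.single_eq_same, Pi.smul_apply, smul_eq_mul, ← hc]
    field_simp
  · have : (∏ j ∈ Finset.univ.erase i, (X - C (d j))).eval (d j) = 0 := by
      rw [eval_prod, Finset.prod_eq_zero (i := j)] <;> simp [hj]
    simp [hj, this]

lemma S_diag (k : ℕ) (hk : 1 ≤ k) :
    S k !![2, 0; 0, 1/2] = diagonal fun i => (2 : ℚ) ^ ex k i * (1 / 2) ^ (2 * k - 1 - ex k i) := by
  apply mat_ext
  intro x y
  rw [S_mulVec k hk]
  funext i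
  rw [mulVec_diagonal]
  simp [v, mul_pow]
  ring

lemma irr (k : ℕ) (hk : 1 ≤ k) (W : Submodule ℚ (Fin k ⊕ Fin k → ℚ))
    (h : ∀ A : SpecialLinearGroup (Fin 2) ℚ, ∀ w ∈ W, S k A *ᵥ w ∈ W) : W = ⊥ ∨ W = ⊤ := by
  by_cases hb : W = ⊥
  · exact Or.inl hb
  right
  obtain ⟨w, hw, hw0⟩ := W.ne_bot_iff.mp hb
  obtain ⟨i, hi⟩ := Function.ne_iff.mp hw0
  have proj : ∀ w ∈ W, ∀ i, w i ≠ 0 → Pi.single i (1 : ℚ) ∈ W := by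
    intro w hw i hi
    refine diag_proj W (fun i => (2 : ℚ) ^ ex k i * (1 / 2) ^ (2 * k - 1 - ex k i)) ?_ ?_ w hw i hi
    · intro a b hab
      apply ex_inj k
      have ha := ex_le k a
      have hb := ex_le k b
      have e : ∀ m ≤ 2 * k - 1, (2 : ℚ) ^ m * (1 / 2) ^ (2 * k - 1 - m) =
          4 ^ m * (1 / 2) ^ (2 * k - 1) := by
        intro m hm
        conv_rhs => rw [← Nat.add_sub_cancel' hm, pow_add]
        rw [← mul_assoc, ← mul_pow]
        norm_num
      simp only [e _ ha, e _ hb] at hab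
      have := mul_right_cancel₀ (by positivity) hab
      exact pow_right_injective₀ (by norm_num) (by norm_num) this
    · intro w hw
      have := h ⟨!![2, 0; 0, 1/2], by simp [det_fin_two]⟩ w hw
      rw [S_diag k hk] at this
      convert this using 1
      funext j
      rw [mulVec_diagonal]
  have hs := proj w hw i hi
  have h2 := h ⟨!![2, 1; 1, 1], by simp [det_fin_two]; norm_num⟩ _ hs
  have all : ∀ j, Pi.single j (1 : ℚ) ∈ W := by
    intro j
    refine proj _ h2 j ?_
    rw [mulVec_single_one]
    simp only [col_apply, S]
    refine mul_ne_zero (mul_ne_zero (sc_ne k j) (inv_ne_zero (sc_ne k i))) (ne_of_gt ?_)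
    apply rp_pos _ _ (ex_le k j) _ _ _ _ _ _ _ _ _ (ex_le k i) <;> simp
  rw [eq_top_iff]
  intro u _
  rw [pi_eq_sum_univ' u]
  refine W.sum_mem fun j _ => W.smul_mem _ ?_
  convert all j using 1

end SymPow

/-- For every `k ≥ 1` there is an injective group homomorphism `SL(2,ℚ) → Sp(2k,ℚ)` whose
image acts irreducibly on `ℚ^(2k)`. -/
theorem exists_irreducible_embedding_SL2Q_symplectic (k : ℕ) (hk : 1 ≤ k) :
    ∃ φ : Matrix.SpecialLinearGroup (Fin 2) ℚ →* Matrix.symplecticGroup (Fin k) ℚ,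
      Function.Injective φ ∧
      ∀ W : Submodule ℚ (Fin k ⊕ Fin k → ℚ),
        (∀ A : Matrix.SpecialLinearGroup (Fin 2) ℚ, ∀ w ∈ W,
          ((φ A : Matrix (Fin k ⊕ Fin k) (Fin k ⊕ Fin k) ℚ)).mulVec w ∈ W) →
        W = ⊥ ∨ W = ⊤ :=
  ⟨SymPow.φ k hk, SymPow.φ_inj k hk, fun W h => SymPow.irr k hk W h⟩
end
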